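/- arXiv:2012.10864 — 2 statements merged into one kernel-verified Lean document; each statement's English description precedes it below -/
import Mathlib

section
/- Existence of the scale kernel: under (H0) there exists a nonnegative function k₋₁ on [−1,∞), continuous on (−1,∞), locally integrable on [−1,∞), and of sub-exponential growth (for every ε > 0, e^{−εx} k₋₁(x) → 0 as x → ∞), such that ∫_0^∞ e^{−ξy} k₋₁(y−1) dy = ξ/ψ(ξ) for every complex ξ with Re ξ > 0. Moreover, denoting by k₋₁⁺ the extension of k₋₁ by zero to (−∞,−1), and setting kₙ⁺ := I₊^{n+1} k₋₁⁺ for integers n ≥ 0 where I₊f(x) = ∫_{−∞}^x f(y) dy, one has for every integer n ≥ −1 and every x ∈ ℝ: (Φ ⋆ kₙ⁺)(x) = ((1+x)^{n+1}/(n+1)!) · 1_{{x > −1}}, where ⋆ denotes convolution on ℝ and 0! = 1. -/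
open MeasureTheory Set Filter Topology

noncomputable section

/-- The tail `φ((y, ∞))` of the Lévy measure `φ`. -/
def levyTail (φ : Measure ℝ) (y : ℝ) : ℝ := (φ (Ioi y)).toReal

/-- The function `Φ(x) = ∫_x^∞ φ((y,∞)) dy` for `x > 0`, and `0` for `x ≤ 0`. -/
def PhiFn (φ : Measure ℝ) (x : ℝ) : ℝ :=
  if 0 < x then ∫ y in Ioi x, levyTail φ y else 0

/-- The Laplace exponent `ψ(ξ) = ξ² ∫_0^∞ e^{-ξ x} Φ(x) dx`. -/
def psiFn (φ : Measure ℝ) (ξ : ℂ) : ℂ :=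
  ξ ^ 2 * ∫ x in Ioi (0 : ℝ), Complex.exp (-ξ * (x : ℂ)) * (PhiFn φ x : ℂ)

/-- Assumption (H0): `φ` is a nonnegative Borel measure on `(0,∞)` with
`∫ (z² ∧ z) φ(dz) < ∞` and `∫_{(0,1)} z φ(dz) = ∞`. -/
def H0 (φ : Measure ℝ) : Prop :=
  φ (Iic 0) = 0 ∧
  (∫⁻ z in Ioi (0 : ℝ), ENNReal.ofReal (min (z ^ 2) z) ∂φ) < ⊤ ∧
  (∫⁻ z in Ioo (0 : ℝ) 1, ENNReal.ofReal z ∂φ) = ⊤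

/-- Iterated antiderivatives: `kIter k 0 = k₋₁⁺` and `kIter k (n+1) = I₊ (kIter k n)`,
so that `kₙ⁺ = kIter k (n+1)` for `n ≥ -1`. -/
def kIter (k : ℝ → ℝ) : ℕ → ℝ → ℝ
  | 0 => k
  | m + 1 => fun x => ∫ y in Iic x, kIter k m y

/-!
The kernel `k₋₁` is obtained by solving `Φ ⋆ w = 1` on `(0, ∞)` and setting `k₋₁ = w (· + 1)`; the
Laplace transform of this equation, and its iterated primitives, give the rest.

Sampling `Φ` on a grid of mesh `h` turns `Φ ⋆ W = x` into `A V (1 - X)² = 1` for power series. As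
`Φ` is nonincreasing, the coefficients of `V` are nondecreasing, and the step functions with these
values decrease when the mesh is halved, so they converge to a solution `W`. As `Φ` is convex, the
coefficients of `A (1 - X)²` of order at least two are nonnegative, so by an argument of Kaluza the
coefficients of its inverse `V` are log-concave, and in the limit so is `W`. Hence `W` has a right
derivative `w` for which `w / W` is nonincreasing, and `Φ ⋆ w = 1`. Finally `w / W` has no jump:
in the difference of the equations for `w` at `x` and `x + s`, a jump at `x` contributes at least a
multiple of `s Φ(s)`, while all other terms are `O(s)`, which is impossible since `Φ(0+) = ∞` by the
assumption `∫ z φ(dz) = ∞`.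
-/

/-! ### Power series of renewal type -/

section RenewalSeries

open PowerSeries
open Finset.HasAntidiagonal (antidiagonal)

variable {K : Type*} [Field K]

/-- The power series `(A (1 - X))⁻¹`. When `A` samples `Φ`, it is the discrete analogue of the scale
kernel, whose Laplace transform is `ξ / ψ(ξ)`. -/
def renewalSeries (A : K⟦X⟧) : K⟦X⟧ := (A * (1 - X))⁻¹

/-- The power series `(A (1 - X)²)⁻¹` of partial sums of `renewalSeries A`. When `A` samples `Φ`, it
is the discrete analogue of the scale function, whose Laplace transform is `1 / ψ(ξ)`. -/
def scaleSeries (A : K⟦X⟧) : K⟦X⟧ := (A * (1 - X) ^ 2)⁻¹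

theorem coeff_succ_mul_one_sub_X (A : K⟦X⟧) (n : ℕ) :
    coeff (n + 1) (A * (1 - X)) = coeff (n + 1) A - coeff n A := by
  rw [mul_sub, mul_one, map_sub, coeff_succ_mul_X]

theorem one_sub_X_ne_zero : (1 - X : K⟦X⟧) ≠ 0 := fun h => by
  simpa using congrArg constantCoeff h

theorem scaleSeries_mul_one_sub_X (A : K⟦X⟧) :
    scaleSeries A * (1 - X) = renewalSeries A := by
  have h : ((1 - X : K⟦X⟧))⁻¹ * (1 - X) = 1 := PowerSeries.inv_mul_cancel _ (by simp)
  rw [scaleSeries, renewalSeries, pow_two, ← mul_assoc, PowerSeries.mul_inv_rev (A * (1 - X)),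
    mul_right_comm, h, one_mul]

theorem coeff_succ_scaleSeries_sub (A : K⟦X⟧) (n : ℕ) :
    coeff (n + 1) (scaleSeries A) - coeff n (scaleSeries A) = coeff (n + 1) (renewalSeries A) := by
  rw [← coeff_succ_mul_one_sub_X, scaleSeries_mul_one_sub_X]

theorem sum_coeff_mul_coeff_scaleSeries {A : K⟦X⟧} (hA : constantCoeff A ≠ 0) (n : ℕ) :
    ∑ i ∈ Finset.range (n + 1), coeff i A * coeff (n - i) (scaleSeries A) = n + 1 := by
  have hscale : A * scaleSeries A * (1 - X) ^ 2 = 1 := by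
    rw [mul_right_comm, scaleSeries, PowerSeries.mul_inv_cancel _ (by simpa using hA)]
  have hchoose := mk_add_choose_mul_one_sub_pow_eq_one K 1
  have heq := mul_right_cancel₀ (pow_ne_zero 2 one_sub_X_ne_zero) (hscale.trans hchoose.symm)
  rw [← Finset.Nat.sum_antidiagonal_eq_sum_range_succ
    fun i j => coeff i A * coeff j (scaleSeries A), ← coeff_mul, heq, coeff_mk,
    Nat.choose_one_right]
  push_cast
  ring

theorem scaleSeries_sub_scaleSeries {A B : K⟦X⟧} (hA : constantCoeff A ≠ 0)
    (hB : constantCoeff B ≠ 0) :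
    scaleSeries A - scaleSeries B = renewalSeries A * renewalSeries B * (B - A) := by
  have hA' : A * (1 - X) * renewalSeries A = 1 := PowerSeries.mul_inv_cancel _ (by simpa using hA)
  have hB' : B * (1 - X) * renewalSeries B = 1 := PowerSeries.mul_inv_cancel _ (by simpa using hB)
  refine mul_right_cancel₀ one_sub_X_ne_zero ?_
  rw [sub_mul, scaleSeries_mul_one_sub_X, scaleSeries_mul_one_sub_X]
  linear_combination (renewalSeries B) * hA' - (renewalSeries A) * hB'

theorem scaleSeries_one_add_X_mul_expand {A : K⟦X⟧} (hA : constantCoeff A ≠ 0) :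
    scaleSeries ((1 + X) * expand 2 two_ne_zero A)
      = (1 + X) * expand 2 two_ne_zero (scaleSeries A) := by
  have hscale : scaleSeries A * (A * (1 - X) ^ 2) = 1 :=
    PowerSeries.inv_mul_cancel _ (by simpa using hA)
  have hexpand := congrArg (expand 2 two_ne_zero) hscale
  simp only [map_mul, map_pow, map_sub, map_one, expand_X] at hexpand
  refine ((PowerSeries.eq_inv_iff_mul_eq_one (by simpa using hA)).2 ?_).symm
  linear_combination hexpand

theorem coeff_one_add_X_mul_expand (A : K⟦X⟧) (n : ℕ) :
    coeff n ((1 + X) * expand 2 two_ne_zero A) = coeff (n / 2) A := by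
  rw [add_mul, one_mul, map_add]
  obtain ⟨m, rfl | rfl⟩ := n.even_or_odd'
  · have hX : coeff (2 * m) (X * expand 2 two_ne_zero A) = 0 := by
      obtain _ | m := m
      · simp
      · rw [show 2 * (m + 1) = 2 * m + 1 + 1 by ring, coeff_succ_X_mul,
          coeff_expand_of_not_dvd _ _ _ (by omega)]
    rw [hX, add_zero, coeff_expand_mul, Nat.mul_div_cancel_left _ two_pos]
  · rw [coeff_succ_X_mul, coeff_expand_mul, coeff_expand_of_not_dvd _ _ _ (by omega), zero_add]
    congr 2
    omega

theorem constantCoeff_mul_coeff_inv_ratio_zero {C : K⟦X⟧} (h0 : constantCoeff C ≠ 0) :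
    constantCoeff C * (coeff 1 C⁻¹ / coeff 0 C⁻¹) = -coeff 1 C := by
  have h : coeff 1 (C * C⁻¹) = 0 := by
    rw [PowerSeries.mul_inv_cancel _ h0, coeff_one, if_neg one_ne_zero]
  have hinv : constantCoeff C⁻¹ ≠ 0 := by simpa using h0
  rw [coeff_mul, Finset.Nat.sum_antidiagonal_succ, Finset.Nat.antidiagonal_zero,
    Finset.sum_singleton] at h
  simp only [coeff_zero_eq_constantCoeff_apply, zero_add] at h ⊢
  field_simp
  linear_combination h

theorem constantCoeff_mul_coeff_inv_ratio_succ {C : K⟦X⟧} (h0 : constantCoeff C ≠ 0) {n : ℕ}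
    (hn : coeff (n + 1) C⁻¹ ≠ 0) :
    constantCoeff C * (coeff (n + 2) C⁻¹ / coeff (n + 1) C⁻¹) = -coeff 1 C -
      ∑ p ∈ antidiagonal n, coeff (p.1 + 2) C * (coeff p.2 C⁻¹ / coeff (n + 1) C⁻¹) := by
  have h : coeff (n + 2) (C * C⁻¹) = 0 := by
    rw [PowerSeries.mul_inv_cancel _ h0, coeff_one, if_neg (n + 1).succ_ne_zero]
  rw [coeff_mul, Finset.Nat.sum_antidiagonal_succ, Finset.Nat.sum_antidiagonal_succ,
    coeff_zero_eq_constantCoeff_apply] at h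
  simp only [← mul_div_assoc, ← Finset.sum_div]
  field_simp
  linear_combination h

section Ordered

variable [LinearOrder K] [IsStrictOrderedRing K]

theorem coeff_inv_nonneg {f : K⟦X⟧} (h0 : 0 < constantCoeff f)
    (hf : ∀ n, coeff (n + 1) f ≤ 0) (n : ℕ) : 0 ≤ coeff n f⁻¹ := by
  induction n using Nat.strong_induction_on with
  | _ n ih =>
    rw [PowerSeries.coeff_inv]
    split_ifs with hn
    · exact inv_nonneg.2 h0.le
    refine mul_nonneg_of_nonpos_of_nonpos (by simpa using h0.le) (Finset.sum_nonpos fun p hp => ?_)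
    split_ifs with hlt
    · obtain ⟨i, hi⟩ : ∃ i, p.1 = i + 1 :=
        Nat.exists_eq_succ_of_ne_zero fun h => by simp_all
      exact hi ▸ mul_nonpos_of_nonpos_of_nonneg (hf i) (ih p.2 hlt)
    · exact le_rfl

section Decreasing

variable {A : K⟦X⟧} (h0 : 0 < constantCoeff A) (hA : ∀ n, coeff (n + 1) A ≤ coeff n A)
include h0 hA

theorem coeff_renewalSeries_nonneg (n : ℕ) : 0 ≤ coeff n (renewalSeries A) :=
  coeff_inv_nonneg (by simpa using h0)
    (fun n => (coeff_succ_mul_one_sub_X A n).trans_le (sub_nonpos.2 (hA n))) n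

theorem coeff_scaleSeries_monotone : Monotone fun n => coeff n (scaleSeries A) :=
  monotone_nat_of_le_succ fun n => sub_nonneg.1
    ((coeff_renewalSeries_nonneg h0 hA (n + 1)).trans_eq (coeff_succ_scaleSeries_sub A n).symm)

theorem coeff_scaleSeries_pos (n : ℕ) : 0 < coeff n (scaleSeries A) :=
  lt_of_lt_of_le (by simpa [scaleSeries] using h0)
    (coeff_scaleSeries_monotone h0 hA (Nat.zero_le n))

end Decreasing

theorem coeff_mul_nonneg {f g : K⟦X⟧} (hf : ∀ n, 0 ≤ coeff n f) (hg : ∀ n, 0 ≤ coeff n g) (n : ℕ) :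
    0 ≤ coeff n (f * g) := by
  rw [coeff_mul]
  exact Finset.sum_nonneg fun p _ => mul_nonneg (hf _) (hg _)

theorem coeff_scaleSeries_le {A B : K⟦X⟧} (hA0 : 0 < constantCoeff A)
    (hA : ∀ n, coeff (n + 1) A ≤ coeff n A) (hB : ∀ n, coeff (n + 1) B ≤ coeff n B)
    (hAB : ∀ n, coeff n A ≤ coeff n B) (n : ℕ) :
    coeff n (scaleSeries B) ≤ coeff n (scaleSeries A) := by
  have hB0 : 0 < constantCoeff B := hA0.trans_le (by simpa using hAB 0)
  rw [← sub_nonneg, ← map_sub, scaleSeries_sub_scaleSeries hA0.ne' hB0.ne']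
  refine coeff_mul_nonneg (coeff_mul_nonneg (coeff_renewalSeries_nonneg hA0 hA)
    (coeff_renewalSeries_nonneg hB0 hB)) (fun n => ?_) n
  rw [map_sub]
  exact sub_nonneg.2 (hAB n)

theorem coeff_inv_ratio_antitone {C : K⟦X⟧} (h0 : 0 < constantCoeff C)
    (hC : ∀ n, 0 ≤ coeff (n + 2) C) (hpos : ∀ n, 0 < coeff n C⁻¹) :
    Antitone fun n => coeff (n + 1) C⁻¹ / coeff n C⁻¹ := by
  refine antitone_nat_of_succ_le fun n => ?_
  induction n using Nat.strong_induction_on with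
  | _ n ih =>
    refine le_of_mul_le_mul_left ?_ h0
    rw [constantCoeff_mul_coeff_inv_ratio_succ h0.ne' (hpos _).ne']
    have hterm (i j k : ℕ) : 0 ≤ coeff (i + 2) C * (coeff j C⁻¹ / coeff k C⁻¹) :=
      mul_nonneg (hC i) (div_pos (hpos j) (hpos k)).le
    obtain _ | n := n
    · rw [constantCoeff_mul_coeff_inv_ratio_zero h0.ne', sub_le_self_iff]
      exact Finset.sum_nonneg fun p _ => hterm _ _ _
    have hstep (j : ℕ) (hj : j ≤ n) :
        coeff j C⁻¹ / coeff (n + 1) C⁻¹ ≤ coeff (j + 1) C⁻¹ / coeff (n + 2) C⁻¹ := by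
      have hanti : AntitoneOn (fun n => coeff (n + 1) C⁻¹ / coeff n C⁻¹) (Iic (n + 1)) :=
        antitoneOn_of_add_one_le ordConnected_Iic fun i _ _ hi => ih i (Nat.lt_of_succ_le hi)
      have h := hanti (mem_Iic.2 (by omega)) (mem_Iic.2 le_rfl) (by omega : j ≤ n + 1)
      rw [div_le_div_iff₀ (hpos _) (hpos _)] at h ⊢
      linarith
    rw [constantCoeff_mul_coeff_inv_ratio_succ h0.ne' (hpos _).ne', sub_le_sub_iff_left,
      Finset.Nat.sum_antidiagonal_succ']
    refine le_add_of_nonneg_of_le (hterm _ _ _) (Finset.sum_le_sum fun p hp => ?_)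
    exact mul_le_mul_of_nonneg_left (hstep _ (Finset.HasAntidiagonal.antidiagonal.snd_le hp)) (hC _)

theorem coeff_scaleSeries_ratio_antitone {A : K⟦X⟧} (h0 : 0 < constantCoeff A)
    (hA : ∀ n, coeff (n + 1) A ≤ coeff n A)
    (hconvex : ∀ n, 2 * coeff (n + 1) A ≤ coeff n A + coeff (n + 2) A) :
    Antitone fun n => coeff (n + 1) (scaleSeries A) / coeff n (scaleSeries A) := by
  refine coeff_inv_ratio_antitone (by simpa using h0) (fun n => ?_) (coeff_scaleSeries_pos h0 hA)
  rw [pow_two, ← mul_assoc, coeff_succ_mul_one_sub_X, coeff_succ_mul_one_sub_X,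
    coeff_succ_mul_one_sub_X]
  linarith [hconvex n]

end Ordered

end RenewalSeries

/-! ### Convolution of causal functions -/

/-- The convolution `∫ f(x - y) g(y) dy` of the nonnegative parts of `f` and `g`, with values in
`[0, ∞]`, so that no integrability is needed to state identities such as `Φ ⋆ k₋₁⁺ = 1`. -/
def lconv (f g : ℝ → ℝ) : ℝ → ENNReal :=
  (fun x => ENNReal.ofReal (f x)) ⋆ₗ fun x => ENNReal.ofReal (g x)

theorem lconv_apply (f g : ℝ → ℝ) (x : ℝ) :
    lconv f g x = ∫⁻ y, ENNReal.ofReal (f (x - y)) * ENNReal.ofReal (g y) := by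
  rw [lconv, lconvolution_comm, lconvolution_def]
  exact lintegral_congr fun y => by rw [mul_comm, neg_add_eq_sub]

theorem lconv_comm (f g : ℝ → ℝ) : lconv f g = lconv g f :=
  lconvolution_comm

theorem lconv_comp_add_right (f g : ℝ → ℝ) (a x : ℝ) :
    lconv f (fun y => g (y + a)) x = lconv f g (x + a) := by
  rw [lconv_apply, lconv_apply, ← lintegral_add_right_eq_self
    (fun y => ENNReal.ofReal (f (x + a - y)) * ENNReal.ofReal (g y)) a]
  simp only [add_sub_add_right_eq_sub]

theorem measurable_lconv {f g : ℝ → ℝ} (hf : Measurable f) (hg : Measurable g) :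
    Measurable (lconv f g) :=
  measurable_lconvolution _ hf.ennreal_ofReal hg.ennreal_ofReal

theorem indicator_Ici_lconvolution (g : ℝ → ENNReal) (x : ℝ) :
    ((Ici 0).indicator 1 ⋆ₗ g) x = ∫⁻ z in Iic x, g z := by
  rw [lconvolution_comm, lconvolution_def, ← lintegral_indicator measurableSet_Iic]
  refine lintegral_congr fun z => ?_
  by_cases hz : z ≤ x <;> simp [indicator, hz, neg_add_eq_sub]

/-- Nonnegative functions supported in `[a, ∞)` and integrable up to every finite time. The
primitive `I₊` preserves this class. -/
structure IsCausal (a : ℝ) (f : ℝ → ℝ) : Prop where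
  nonneg : ∀ x, 0 ≤ f x
  eq_zero : ∀ x ≤ a, f x = 0
  measurable : Measurable f
  integrableOn_Iic : ∀ x, IntegrableOn f (Iic x)

namespace IsCausal

variable {a : ℝ} {f g : ℝ → ℝ}

theorem of_integrableOn_Ioc (hnonneg : ∀ x, 0 ≤ f x) (hzero : ∀ x ≤ a, f x = 0)
    (hmeas : Measurable f) (hint : ∀ x, IntegrableOn f (Ioc a x)) : IsCausal a f where
  nonneg := hnonneg
  eq_zero := hzero
  measurable := hmeas
  integrableOn_Iic x := by
    have hIic : IntegrableOn f (Iic a) :=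
      integrableOn_zero.congr_fun (fun y hy => (hzero y hy).symm) measurableSet_Iic
    refine (hIic.union (hint x)).mono_set fun y hy => ?_
    rcases le_or_gt y a with h | h
    · exact Or.inl h
    · exact Or.inr ⟨h, hy⟩

theorem of_monotone (hf : Monotone f) (hzero : ∀ x ≤ a, f x = 0) : IsCausal a f :=
  of_integrableOn_Ioc
    (fun x => (hzero (min x a) (min_le_right x a)).symm.trans_le (hf (min_le_left x a)))
    hzero hf.measurable
    fun _ =>
      (hf.locallyIntegrable.integrableOn_isCompact isCompact_Icc).mono_set Ioc_subset_Icc_self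

theorem primitive (hf : IsCausal a f) : IsCausal a fun x => ∫ y in Iic x, f y :=
  of_monotone
    (fun _ y h => setIntegral_mono_set (hf.integrableOn_Iic y) (Eventually.of_forall hf.nonneg)
      (Iic_subset_Iic.2 h).eventuallyLE)
    fun _ hx => setIntegral_eq_zero_of_forall_eq_zero fun _ hy => hf.eq_zero _ (le_trans hy hx)

theorem intervalIntegrable (hf : IsCausal a f) (p q : ℝ) : IntervalIntegrable f volume p q :=
  intervalIntegrable_iff.2 ((hf.integrableOn_Iic (max p q)).mono_set fun _ h => h.2)

theorem setIntegral_Iic (hf : IsCausal a f) (x : ℝ) :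
    ∫ y in Iic x, f y = ∫ y in a..x, f y := by
  have hsub := intervalIntegral.integral_Iic_sub_Iic (hf.integrableOn_Iic a) (hf.integrableOn_Iic x)
  rwa [hf.primitive.eq_zero a le_rfl, sub_zero] at hsub

theorem continuous_primitive (hf : IsCausal a f) : Continuous fun x => ∫ y in Iic x, f y := by
  simp_rw [hf.setIntegral_Iic]
  exact intervalIntegral.continuous_primitive hf.intervalIntegrable a

theorem isCausal_kIter (hf : IsCausal a f) (m : ℕ) : IsCausal a (kIter f m) := by
  induction m with
  | zero => exact hf
  | succ m ih => exact ih.primitive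

theorem comp_add_right (hf : IsCausal a f) (c : ℝ) : IsCausal (a - c) fun x => f (x + c) where
  nonneg x := hf.nonneg _
  eq_zero x hx := hf.eq_zero _ (le_sub_iff_add_le.1 hx)
  measurable := hf.measurable.comp (measurable_add_const c)
  integrableOn_Iic x := by
    have h := ((integrable_indicator_iff measurableSet_Iic).2
      (hf.integrableOn_Iic (x + c))).comp_add_right c
    refine (integrable_indicator_iff measurableSet_Iic).1 (h.congr ?_)
    exact Eventually.of_forall fun y => by simp [indicator]

theorem lconv_primitive (hf : Measurable f) (hg : IsCausal a g) (x : ℝ) :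
    lconv f (fun y => ∫ z in Iic y, g z) x = ∫⁻ z in Iic x, lconv f g z := by
  have hprim : (fun y => ENNReal.ofReal (∫ z in Iic y, g z))
      = (fun z => ENNReal.ofReal (g z)) ⋆ₗ (Ici 0).indicator 1 := by
    ext y
    rw [lconvolution_comm, indicator_Ici_lconvolution, ofReal_integral_eq_lintegral_ofReal
      (hg.integrableOn_Iic y) (Eventually.of_forall hg.nonneg)]
  rw [← indicator_Ici_lconvolution, lconvolution_comm, lconv, lconv, hprim,
    lconvolution_assoc hf.ennreal_ofReal hg.measurable.ennreal_ofReal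
      (measurable_one.indicator measurableSet_Ici)]

theorem integral_mul_eq_toReal_lconv {b : ℝ} (hf : IsCausal a f) (hg : IsCausal b g) (x : ℝ) :
    ∫ y, f (x - y) * g y = (lconv f g x).toReal := by
  have hf' : Measurable fun y => f (x - y) := hf.measurable.comp (measurable_id.const_sub x)
  rw [lconv_apply, integral_eq_lintegral_of_nonneg_ae
    (Eventually.of_forall fun y => mul_nonneg (hf.nonneg _) (hg.nonneg y))
    (hf'.mul hg.measurable).aestronglyMeasurable]
  simp_rw [ENNReal.ofReal_mul (hf.nonneg _)]

theorem integrable_mul_comp_sub {b : ℝ} (hf : IsCausal a f) (hg : IsCausal b g) {x : ℝ}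
    (hfin : lconv f g x ≠ ⊤) : Integrable fun y => f (x - y) * g y := by
  refine ⟨((hf.measurable.comp (measurable_id.const_sub x)).mul hg.measurable).aestronglyMeasurable,
    (hasFiniteIntegral_iff_ofReal (Eventually.of_forall fun y =>
      mul_nonneg (hf.nonneg _) (hg.nonneg y))).2 ?_⟩
  simp_rw [ENNReal.ofReal_mul (hf.nonneg _)]
  rw [← lconv_apply]
  exact hfin.lt_top

theorem intervalIntegral_mul_eq_toReal_lconv (hf : IsCausal 0 f) (hg : IsCausal 0 g) {x : ℝ}
    (hx : 0 ≤ x) : ∫ y in 0..x, f (x - y) * g y = (lconv f g x).toReal := by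
  rw [intervalIntegral.integral_of_le hx, ← hf.integral_mul_eq_toReal_lconv hg]
  refine setIntegral_eq_integral_of_forall_compl_eq_zero fun y hy => ?_
  rcases le_or_gt y 0 with h | h
  · rw [hg.eq_zero y h, mul_zero]
  · rw [hf.eq_zero _ (sub_nonpos.2 (not_le.1 fun h' => hy ⟨h, h'⟩).le), zero_mul]

theorem lconv_eq_setLIntegral_Ioo (hf : IsCausal 0 f) (hg : IsCausal 0 g) (x : ℝ) :
    lconv f g x = ∫⁻ y in Ioo 0 x, ENNReal.ofReal (f (x - y)) * ENNReal.ofReal (g y) := by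
  rw [lconv_apply, ← lintegral_indicator measurableSet_Ioo]
  refine lintegral_congr fun y => ?_
  by_cases hy : y ∈ Ioo 0 x
  · rw [indicator_of_mem hy]
  rw [indicator_of_notMem hy]
  rcases le_or_gt y 0 with h | h
  · rw [hg.eq_zero y h, ENNReal.ofReal_zero, mul_zero]
  · have hxy : x - y ≤ 0 := sub_nonpos.2 (not_lt.1 fun h' => hy ⟨h, h'⟩)
    rw [hf.eq_zero _ hxy, ENNReal.ofReal_zero, zero_mul]

end IsCausal

section FloorDiv

variable {h : ℝ}

theorem abs_mul_floor_div_sub_le (hh : 0 < h) {x : ℝ} (hx : 0 ≤ x) :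
    |h * ⌊x / h⌋₊ - x| ≤ h := by
  have hle := (le_div_iff₀ hh).1 (Nat.floor_le (div_nonneg hx hh.le))
  have hlt := (div_lt_iff₀ hh).1 (Nat.lt_floor_add_one (x / h))
  rw [abs_le]
  constructor <;> linarith

theorem monotone_floor_div (hh : 0 ≤ h) : Monotone fun x : ℝ => ⌊x / h⌋₊ := fun _ _ hxy =>
  Nat.floor_mono (div_le_div_of_nonneg_right hxy hh)

theorem floor_sub_div_le (hh : 0 < h) {s : ℝ} (hs : 0 ≤ s) (x : ℝ) :
    ⌊(x - s) / h⌋₊ ≤ ⌊x / h⌋₊ - ⌊s / h⌋₊ := by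
  rw [← Nat.floor_sub_natCast, sub_div]
  exact Nat.floor_mono (sub_le_sub_left (Nat.floor_le (div_nonneg hs hh.le)) _)

theorem sub_one_sub_le_floor_sub_div (h x s : ℝ) :
    ⌊x / h⌋₊ - 1 - ⌊s / h⌋₊ ≤ ⌊(x - s) / h⌋₊ := by
  rw [Nat.sub_sub, ← Nat.floor_sub_natCast, sub_div]
  refine Nat.floor_mono (sub_le_sub_left ?_ _)
  push_cast
  linarith [Nat.lt_floor_add_one (s / h)]

theorem integral_floor_div (hh : 0 < h) {g : ℕ → ℝ} (hg : Antitone g) (n : ℕ) :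
    ∫ y in (0 : ℝ)..n * h, g ⌊y / h⌋₊ = h * ∑ i ∈ Finset.range n, g i := by
  have hint (a b : ℝ) : IntervalIntegrable (fun y => g ⌊y / h⌋₊) volume a b :=
    (hg.comp_monotone (monotone_floor_div hh.le)).intervalIntegrable
  induction n with
  | zero => simp
  | succ n ih =>
    have hstep : EqOn (fun y => g ⌊y / h⌋₊) (fun _ => g n) (uIoo (n * h) ((n + 1 : ℕ) * h)) := by
      intro y hy
      rw [uIoo_of_le (by gcongr; omega)] at hy
      have hfloor : ⌊y / h⌋₊ = n := by
        rw [Nat.floor_eq_iff (div_nonneg (hy.1.le.trans' (by positivity)) hh.le),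
          le_div_iff₀ hh, div_lt_iff₀ hh]
        exact ⟨hy.1.le, by simpa using hy.2⟩
      simp only [hfloor]
    rw [← intervalIntegral.integral_add_adjacent_intervals (hint _ _) (hint _ _), ih,
      intervalIntegral.integral_congr_uIoo hstep, intervalIntegral.integral_const, smul_eq_mul,
      Finset.sum_range_succ]
    push_cast
    ring

section Convolution

variable {a v : ℕ → ℝ} (ha : Antitone a) (hv : Monotone v) (ha0 : ∀ i, 0 ≤ a i)
  (hv0 : ∀ i, 0 ≤ v i)
include ha hv ha0 hv0

theorem antitone_mul_comp_sub (n : ℕ) : Antitone fun i => a i * v (n - i) :=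
  fun _ _ hij => mul_le_mul (ha hij) (hv (Nat.sub_le_sub_left hij n)) (hv0 _) (ha0 _)

theorem intervalIntegrable_floor_mul_floor_sub (hh : 0 ≤ h) (x p q : ℝ) :
    IntervalIntegrable (fun s => a ⌊s / h⌋₊ * v ⌊(x - s) / h⌋₊) volume p q :=
  Antitone.intervalIntegrable fun _ _ hst =>
    mul_le_mul (ha (monotone_floor_div hh hst))
      (hv (monotone_floor_div hh (sub_le_sub_left hst x))) (hv0 _) (ha0 _)

theorem integral_floor_mul_floor_sub_le (hh : 0 < h) {x : ℝ} (hx : 0 ≤ x) :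
    ∫ s in 0..x, a ⌊s / h⌋₊ * v ⌊(x - s) / h⌋₊
      ≤ h * ∑ i ∈ Finset.range (⌊x / h⌋₊ + 1), a i * v (⌊x / h⌋₊ - i) := by
  have hanti := antitone_mul_comp_sub ha hv ha0 hv0 ⌊x / h⌋₊
  have hint (p q : ℝ) := (hanti.comp_monotone (monotone_floor_div hh.le)).intervalIntegrable
    (μ := volume) (a := p) (b := q)
  have hxle : x ≤ (⌊x / h⌋₊ + 1 : ℕ) * h := by
    rw [← div_le_iff₀ hh]
    exact_mod_cast (Nat.lt_floor_add_one (x / h)).le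
  rw [← integral_floor_div hh hanti]
  calc ∫ s in 0..x, a ⌊s / h⌋₊ * v ⌊(x - s) / h⌋₊
      ≤ ∫ s in 0..x, a ⌊s / h⌋₊ * v (⌊x / h⌋₊ - ⌊s / h⌋₊) :=
        intervalIntegral.integral_mono_on hx
          (intervalIntegrable_floor_mul_floor_sub ha hv ha0 hv0 hh.le x 0 x) (hint 0 x)
          fun s hs => mul_le_mul_of_nonneg_left (hv (floor_sub_div_le hh hs.1 x)) (ha0 _)
    _ ≤ ∫ s in 0..(⌊x / h⌋₊ + 1 : ℕ) * h, a ⌊s / h⌋₊ * v (⌊x / h⌋₊ - ⌊s / h⌋₊) :=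
        intervalIntegral.integral_mono_interval le_rfl hx hxle
          (Eventually.of_forall fun _ => mul_nonneg (ha0 _) (hv0 _)) (hint _ _)

theorem le_integral_floor_mul_floor_sub (hh : 0 < h) {x : ℝ} (hx : 0 ≤ x) :
    h * ∑ i ∈ Finset.range ⌊x / h⌋₊, a i * v (⌊x / h⌋₊ - 1 - i)
      ≤ ∫ s in 0..x, a ⌊s / h⌋₊ * v ⌊(x - s) / h⌋₊ := by
  have hanti := antitone_mul_comp_sub ha hv ha0 hv0 (⌊x / h⌋₊ - 1)
  have hlex : ⌊x / h⌋₊ * h ≤ x := (le_div_iff₀ hh).1 (Nat.floor_le (div_nonneg hx hh.le))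
  have hint := intervalIntegrable_floor_mul_floor_sub ha hv ha0 hv0 hh.le x
  rw [← integral_floor_div hh hanti]
  calc ∫ s in 0..⌊x / h⌋₊ * h, a ⌊s / h⌋₊ * v (⌊x / h⌋₊ - 1 - ⌊s / h⌋₊)
      ≤ ∫ s in 0..⌊x / h⌋₊ * h, a ⌊s / h⌋₊ * v ⌊(x - s) / h⌋₊ :=
        intervalIntegral.integral_mono_on (by positivity)
          (hanti.comp_monotone (monotone_floor_div hh.le)).intervalIntegrable (hint _ _)
          fun s _ => mul_le_mul_of_nonneg_left (hv (sub_one_sub_le_floor_sub_div h x s)) (ha0 _)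
    _ ≤ ∫ s in 0..x, a ⌊s / h⌋₊ * v ⌊(x - s) / h⌋₊ :=
        intervalIntegral.integral_mono_interval le_rfl (by positivity) hlex
          (Eventually.of_forall fun _ => mul_nonneg (ha0 _) (hv0 _)) (hint _ _)

end Convolution

end FloorDiv

/-! ### Scale functions -/

theorem mul_sub_le_mul_sub_of_antitone_sub {u : ℕ → ℝ} (hu : Antitone fun n => u (n + 1) - u n)
    {i j k : ℕ} (hij : i ≤ j) (hjk : j ≤ k) :
    ((j : ℝ) - i) * (u k - u j) ≤ (k - j) * (u j - u i) := by
  have hleft : ((j : ℝ) - i) * (u (j + 1) - u j) ≤ u j - u i := by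
    have h := Finset.card_nsmul_le_sum (Finset.Ico i j) (fun n => u (n + 1) - u n)
      (u (j + 1) - u j) fun n hn => hu (Finset.mem_Ico.1 hn).2.le
    rwa [Finset.sum_Ico_sub u hij, Nat.card_Ico, nsmul_eq_mul, Nat.cast_sub hij] at h
  have hright : u k - u j ≤ ((k : ℝ) - j) * (u (j + 1) - u j) := by
    have h := Finset.sum_le_card_nsmul (Finset.Ico j k) (fun n => u (n + 1) - u n)
      (u (j + 1) - u j) fun n hn => hu (Finset.mem_Ico.1 hn).1
    rwa [Finset.sum_Ico_sub u hjk, Nat.card_Ico, nsmul_eq_mul, Nat.cast_sub hjk] at h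
  have hij' : (0 : ℝ) ≤ j - i := sub_nonneg.2 (by exact_mod_cast hij)
  have hjk' : (0 : ℝ) ≤ k - j := sub_nonneg.2 (by exact_mod_cast hjk)
  nlinarith [mul_le_mul_of_nonneg_left hright hij', mul_le_mul_of_nonneg_left hleft hjk']

/-- The class of kernels `F` that contains `Φ` under (H0) and for which a dual kernel is
constructed. -/
structure IsConvexKernel (F : ℝ → ℝ) : Prop extends IsCausal 0 F where
  antitoneOn : AntitoneOn F (Ioi 0)
  convexOn : ConvexOn ℝ (Ioi 0) F
  tendsto_nhdsGT_zero : Tendsto F (𝓝[>] 0) atTop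

/-- The samples `F(h), F(2h), …` of `F` on a grid of mesh `h`, as a power series. -/
def gridSeries (F : ℝ → ℝ) (h : ℝ) : PowerSeries ℝ := PowerSeries.mk fun j => F ((j + 1) * h)

/-- The discretisation, with mesh `h`, of the solution `W` of `F ⋆ W = x`. -/
def stepScale (F : ℝ → ℝ) (h x : ℝ) : ℝ := (scaleSeries (gridSeries F h)).coeff ⌊x / h⌋₊

theorem constantCoeff_gridSeries (F : ℝ → ℝ) (h : ℝ) :
    (gridSeries F h).constantCoeff = F h := by
  rw [← PowerSeries.coeff_zero_eq_constantCoeff_apply, gridSeries, PowerSeries.coeff_mk]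
  simp

theorem stepScale_of_nonpos (F : ℝ → ℝ) {h x : ℝ} (hh : 0 ≤ h) (hx : x ≤ 0) :
    stepScale F h x = (F h)⁻¹ := by
  rw [stepScale, Nat.floor_of_nonpos (div_nonpos_of_nonpos_of_nonneg hx hh), scaleSeries,
    PowerSeries.coeff_zero_eq_constantCoeff_apply, PowerSeries.constantCoeff_inv]
  simp [constantCoeff_gridSeries]

namespace IsConvexKernel

variable {F : ℝ → ℝ} (K : IsConvexKernel F)
include K

section Step

variable {h : ℝ} (hh : 0 < h)
include hh

theorem gridSeries_antitone : Antitone fun j => (gridSeries F h).coeff j := fun i j hij => by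
  simp only [gridSeries, PowerSeries.coeff_mk]
  exact K.antitoneOn (mem_Ioi.2 (by positivity)) (mem_Ioi.2 (by positivity)) (by gcongr)

theorem gridSeries_convex (n : ℕ) :
    2 * (gridSeries F h).coeff (n + 1)
      ≤ (gridSeries F h).coeff n + (gridSeries F h).coeff (n + 2) := by
  simp only [gridSeries, PowerSeries.coeff_mk]
  have hleft : (n + 1) * h ∈ Ioi 0 := mem_Ioi.2 (by positivity)
  have hright : (↑(n + 2) + 1) * h ∈ Ioi 0 := mem_Ioi.2 (by positivity)
  have hconv := K.convexOn.2 hleft hright (by norm_num : (0 : ℝ) ≤ 1 / 2)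
    (by norm_num : (0 : ℝ) ≤ 1 / 2) (by norm_num)
  rw [smul_eq_mul, smul_eq_mul, smul_eq_mul, smul_eq_mul,
    show 1 / 2 * ((n + 1) * h) + 1 / 2 * ((↑(n + 2) + 1) * h) = (↑(n + 1) + 1) * h by
      push_cast; ring] at hconv
  linarith

theorem coeff_div_two_gridSeries_le (n : ℕ) :
    (gridSeries F h).coeff (n / 2) ≤ (gridSeries F (h / 2)).coeff n := by
  simp only [gridSeries, PowerSeries.coeff_mk]
  refine K.antitoneOn (mem_Ioi.2 (by positivity)) (mem_Ioi.2 (by positivity)) ?_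
  have hn : (n : ℝ) + 1 ≤ 2 * (↑(n / 2) + 1) := by
    exact_mod_cast (by omega : n + 1 ≤ 2 * (n / 2 + 1))
  nlinarith

variable (hF : 0 < F h)
include hF

theorem coeff_scaleSeries_gridSeries_pos (n : ℕ) : 0 < (scaleSeries (gridSeries F h)).coeff n :=
  coeff_scaleSeries_pos (by rwa [constantCoeff_gridSeries])
    (fun j => K.gridSeries_antitone hh j.le_succ) n

theorem coeff_scaleSeries_gridSeries_monotone :
    Monotone fun n => (scaleSeries (gridSeries F h)).coeff n :=
  coeff_scaleSeries_monotone (by rwa [constantCoeff_gridSeries])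
    fun j => K.gridSeries_antitone hh j.le_succ

theorem stepScale_pos (x : ℝ) : 0 < stepScale F h x :=
  K.coeff_scaleSeries_gridSeries_pos hh hF _

theorem stepScale_monotone : Monotone (stepScale F h) :=
  (K.coeff_scaleSeries_gridSeries_monotone hh hF).comp (monotone_floor_div hh.le)

theorem stepScale_half_le (x : ℝ) : stepScale F (h / 2) x ≤ stepScale F h x := by
  have hfloor : ⌊x / (h / 2)⌋₊ / 2 = ⌊x / h⌋₊ := by
    rw [← Nat.floor_div_ofNat]
    congr 1
    field_simp
  have h0 : (gridSeries F h).constantCoeff ≠ 0 := by rw [constantCoeff_gridSeries]; exact hF.ne'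
  -- `(1 + X) * expand 2 A` lists each coefficient twice, as sampling a step function on the refined
  -- grid does.
  have hle := coeff_scaleSeries_le
    (A := (1 + PowerSeries.X) * .expand 2 two_ne_zero (gridSeries F h))
    (B := gridSeries F (h / 2)) (by simpa [constantCoeff_gridSeries] using hF)
    (fun n => by
      rw [coeff_one_add_X_mul_expand, coeff_one_add_X_mul_expand]
      exact K.gridSeries_antitone hh (Nat.div_le_div_right n.le_succ))
    (fun n => K.gridSeries_antitone (half_pos hh) n.le_succ)
    (fun n => (coeff_one_add_X_mul_expand _ n).trans_le (K.coeff_div_two_gridSeries_le hh n))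
    ⌊x / (h / 2)⌋₊
  rwa [scaleSeries_one_add_X_mul_expand h0, coeff_one_add_X_mul_expand, hfloor] at hle

theorem mul_log_stepScale_sub_le {x y z : ℝ} (hxy : x ≤ y) (hyz : y ≤ z) :
    ((⌊y / h⌋₊ : ℝ) - ⌊x / h⌋₊) * (Real.log (stepScale F h z) - Real.log (stepScale F h y))
      ≤ (⌊z / h⌋₊ - ⌊y / h⌋₊) *
        (Real.log (stepScale F h y) - Real.log (stepScale F h x)) := by
  have hpos := K.coeff_scaleSeries_gridSeries_pos hh hF
  refine mul_sub_le_mul_sub_of_antitone_sub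
    (u := fun n => Real.log ((scaleSeries (gridSeries F h)).coeff n)) (fun i j hij => ?_)
    (monotone_floor_div hh.le hxy) (monotone_floor_div hh.le hyz)
  simp only [← Real.log_div (hpos _).ne' (hpos _).ne']
  exact Real.log_le_log (div_pos (hpos _) (hpos _)) (coeff_scaleSeries_ratio_antitone
    (by rwa [constantCoeff_gridSeries]) (fun n => K.gridSeries_antitone hh n.le_succ)
    (K.gridSeries_convex hh) hij)

theorem abs_integral_mul_stepScale_sub_le {x : ℝ} (hx : 0 ≤ x) :
    |(∫ s in 0..x, F ((⌊s / h⌋₊ + 1) * h) * stepScale F h (x - s)) - x| ≤ h := by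
  have ha := K.gridSeries_antitone hh
  have hv := K.coeff_scaleSeries_gridSeries_monotone hh hF
  have ha0 (n : ℕ) : 0 ≤ (gridSeries F h).coeff n := by
    simpa only [gridSeries, PowerSeries.coeff_mk] using K.nonneg _
  have hv0 (n : ℕ) := (K.coeff_scaleSeries_gridSeries_pos hh hF n).le
  have hsum := sum_coeff_mul_coeff_scaleSeries (A := gridSeries F h)
    (by rw [constantCoeff_gridSeries]; exact hF.ne')
  have hupper := integral_floor_mul_floor_sub_le ha hv ha0 hv0 hh hx
  have hlower := le_integral_floor_mul_floor_sub ha hv ha0 hv0 hh hx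
  have hpred : ∑ i ∈ Finset.range ⌊x / h⌋₊, (gridSeries F h).coeff i *
      (scaleSeries (gridSeries F h)).coeff (⌊x / h⌋₊ - 1 - i) = ⌊x / h⌋₊ := by
    generalize ⌊x / h⌋₊ = n
    obtain _ | n := n
    · simp
    · rw [Nat.add_sub_cancel, hsum, Nat.cast_add_one]
  rw [hsum] at hupper
  rw [hpred] at hlower
  simp only [gridSeries, PowerSeries.coeff_mk] at hupper hlower
  have hfloor := abs_le.1 (abs_mul_floor_div_sub_le hh hx)
  have hle := (le_div_iff₀ hh).1 (Nat.floor_le (div_nonneg hx hh.le))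
  simp only [stepScale, gridSeries]
  rw [abs_le]
  constructor <;> linarith

end Step

end IsConvexKernel

/-- Solutions `W` of `F ⋆ W = x` together with the shape inherited from the discretisations; for
`F = Φ` this is the scale function of the spectrally one-sided Lévy process with exponent `ψ`. -/
structure IsScaleFunction (F W : ℝ → ℝ) : Prop where
  monotone : Monotone W
  eq_zero : ∀ x ≤ 0, W x = 0
  pos : ∀ x, 0 < x → 0 < W x
  concaveOn_log : ConcaveOn ℝ (Ioi 0) fun x => Real.log (W x)
  lconv_eq : ∀ x, lconv F W x = ENNReal.ofReal x

namespace IsConvexKernel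

variable {F : ℝ → ℝ} (K : IsConvexKernel F)
include K

theorem continuousAt {x : ℝ} (hx : x ≠ 0) : ContinuousAt F x := by
  rcases hx.lt_or_gt with hx | hx
  · exact continuousAt_const.congr <|
      (eventually_lt_nhds hx).mono fun y hy => (K.eq_zero y hy.le).symm
  · exact (K.convexOn.continuousOn isOpen_Ioi).continuousAt (Ioi_mem_nhds hx)

theorem eventually_pos : ∀ᶠ h in 𝓝[>] (0 : ℝ), 0 < h ∧ 0 < F h :=
  eventually_mem_nhdsWithin.and (K.tendsto_nhdsGT_zero.eventually_gt_atTop 0)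

theorem exists_tendsto_stepScale : ∃ (h : ℕ → ℝ) (W : ℝ → ℝ), Tendsto h atTop (𝓝[>] 0) ∧
    ∀ x, Tendsto (fun m => stepScale F (h m) x) atTop (𝓝 (W x)) := by
  obtain ⟨h₀, hh₀, hF₀⟩ := K.eventually_pos.exists
  have hpos (m : ℕ) : 0 < h₀ / 2 ^ m := by positivity
  have hle (m : ℕ) : h₀ / 2 ^ m ≤ h₀ := div_le_self hh₀.le (one_le_pow₀ one_le_two)
  have hF (m : ℕ) : 0 < F (h₀ / 2 ^ m) := hF₀.trans_le (K.antitoneOn (hpos m) hh₀ (hle m))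
  have hanti (x : ℝ) : Antitone fun m : ℕ => stepScale F (h₀ / 2 ^ m) x :=
    antitone_nat_of_succ_le fun m => by
      rw [pow_succ, ← div_div]
      exact K.stepScale_half_le (hpos m) (hF m) x
  have hbdd (x : ℝ) : BddBelow (range fun m : ℕ => stepScale F (h₀ / 2 ^ m) x) :=
    ⟨0, forall_mem_range.2 fun m => (K.stepScale_pos (hpos m) (hF m) x).le⟩
  refine ⟨fun m => h₀ / 2 ^ m, fun x => ⨅ m : ℕ, stepScale F (h₀ / 2 ^ m) x,
    tendsto_nhdsWithin_of_tendsto_nhds_of_eventually_within _ ?_ (Eventually.of_forall hpos),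
    fun x => tendsto_atTop_ciInf (hanti x) (hbdd x)⟩
  exact tendsto_const_nhds.div_atTop (tendsto_pow_atTop_atTop_of_one_lt one_lt_two)

section Limit

variable {h : ℕ → ℝ} (hh : Tendsto h atTop (𝓝[>] 0)) {W : ℝ → ℝ}
  (hW : ∀ x, Tendsto (fun m => stepScale F (h m) x) atTop (𝓝 (W x)))
include hh hW

theorem monotone_limit : Monotone W := fun x y hxy =>
  le_of_tendsto_of_tendsto (hW x) (hW y) <| (hh.eventually K.eventually_pos).mono fun _ hm =>
    K.stepScale_monotone hm.1 hm.2 hxy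

theorem limit_eq_zero {x : ℝ} (hx : x ≤ 0) : W x = 0 :=
  tendsto_nhds_unique (hW x) <| ((K.tendsto_nhdsGT_zero.comp hh).inv_tendsto_atTop).congr' <|
    (hh.eventually K.eventually_pos).mono fun _ hm => (stepScale_of_nonpos F hm.1.le hx).symm

omit hW in
theorem tendsto_comp_floor {s : ℝ} (hs : 0 < s) :
    Tendsto (fun m => F ((⌊s / h m⌋₊ + 1) * h m)) atTop (𝓝 (F s)) := by
  have hpos := hh.eventually K.eventually_pos
  have hlim : Tendsto (fun m => (⌊s / h m⌋₊ + 1) * h m) atTop (𝓝 s) := by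
    have hadd : Tendsto (fun m => s + h m) atTop (𝓝 s) := by
      simpa using (tendsto_nhds_of_tendsto_nhdsWithin hh).const_add s
    refine tendsto_of_tendsto_of_tendsto_of_le_of_le' tendsto_const_nhds hadd
      (hpos.mono fun m hm => ((div_lt_iff₀ hm.1).1 (Nat.lt_floor_add_one (s / h m))).le)
      (hpos.mono fun m hm => ?_)
    linarith [(le_div_iff₀ hm.1).1 (Nat.floor_le (div_nonneg hs.le hm.1.le))]
  exact (K.continuousAt hs.ne').tendsto.comp hlim

omit hh hW in
theorem comp_floor_mul_stepScale_le {η s : ℝ} (hη : 0 < η) (hF : 0 < F η) (hs : 0 < s) (x : ℝ) :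
    F ((⌊s / η⌋₊ + 1) * η) * stepScale F η (x - s) ≤ F s * stepScale F η x := by
  have hlt := (div_lt_iff₀ hη).1 (Nat.lt_floor_add_one (s / η))
  exact mul_le_mul (K.antitoneOn hs (hs.trans hlt) hlt.le)
    (K.stepScale_monotone hη hF (sub_le_self x hs.le)) (K.stepScale_pos hη hF _).le (K.nonneg s)

theorem integral_mul_limit {x : ℝ} (hx : 0 ≤ x) : ∫ s in 0..x, F s * W (x - s) = x := by
  have hpos := hh.eventually K.eventually_pos
  have hbound : ∀ᶠ m in atTop, ∀ᵐ s, s ∈ uIoc 0 x →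
      ‖F ((⌊s / h m⌋₊ + 1) * h m) * stepScale F (h m) (x - s)‖ ≤ F s * (W x + 1) := by
    filter_upwards [hpos, (hW x).eventually_le_const (lt_add_one (W x))] with m hm hWm
    refine Eventually.of_forall fun s hs => ?_
    have hs0 : 0 < s := (uIoc_of_le hx ▸ hs).1
    rw [Real.norm_of_nonneg (mul_nonneg (K.nonneg _) (K.stepScale_pos hm.1 hm.2 _).le)]
    exact (K.comp_floor_mul_stepScale_le hm.1 hm.2 hs0 x).trans
      (mul_le_mul_of_nonneg_left hWm (K.nonneg s))
  have hlim := intervalIntegral.tendsto_integral_filter_of_dominated_convergence (μ := volume)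
    (fun s => F s * (W x + 1))
    (hpos.mono fun m hm => by
      have hv := (K.stepScale_monotone hm.1 hm.2).measurable
      have hF := K.measurable
      exact Measurable.aestronglyMeasurable (by fun_prop))
    hbound ((K.intervalIntegrable 0 x).mul_const _)
    (Eventually.of_forall fun s hs =>
      (K.tendsto_comp_floor hh (uIoc_of_le hx ▸ hs).1).mul (hW (x - s)))
  refine tendsto_nhds_unique hlim (tendsto_iff_norm_sub_tendsto_zero.2 ?_)
  exact squeeze_zero' (Eventually.of_forall fun _ => norm_nonneg _)
    (hpos.mono fun m hm => K.abs_integral_mul_stepScale_sub_le hm.1 hm.2 hx)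
    (tendsto_nhds_of_tendsto_nhdsWithin hh)

theorem limit_pos {x : ℝ} (hx : 0 < x) : 0 < W x := by
  have hmono := K.monotone_limit hh hW
  refine lt_of_not_ge fun hle => ?_
  have hzero (s : ℝ) (hs : 0 ≤ s) : W (x - s) = 0 := by
    refine le_antisymm ((hmono (sub_le_self x hs)).trans hle) ?_
    rw [← K.limit_eq_zero hh hW (min_le_right (x - s) 0)]
    exact hmono (min_le_left _ _)
  have hint := K.integral_mul_limit hh hW hx.le
  rw [intervalIntegral.integral_congr (g := fun _ => 0) fun s hs => by
    simp only [hzero s (uIcc_of_le hx.le ▸ hs).1, mul_zero]] at hint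
  simp only [intervalIntegral.integral_zero] at hint
  exact hx.ne hint

theorem concaveOn_log_limit : ConcaveOn ℝ (Ioi 0) fun x => Real.log (W x) := by
  have hpos := hh.eventually K.eventually_pos
  have hlog {x : ℝ} (hx : 0 < x) := (hW x).log (K.limit_pos hh hW hx).ne'
  have hgrid {x : ℝ} (hx : 0 ≤ x) : Tendsto (fun m => h m * ⌊x / h m⌋₊) atTop (𝓝 x) :=
    tendsto_iff_norm_sub_tendsto_zero.2 <| squeeze_zero'
      (Eventually.of_forall fun _ => norm_nonneg _)
      (hpos.mono fun m hm => abs_mul_floor_div_sub_le hm.1 hx)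
      (tendsto_nhds_of_tendsto_nhdsWithin hh)
  refine concaveOn_of_slope_anti_adjacent (convex_Ioi 0) fun {x y z} hx hz hxy hyz => ?_
  have hy : 0 < y := lt_trans hx hxy
  rw [div_le_div_iff₀ (sub_pos.2 hyz) (sub_pos.2 hxy), mul_comm,
    mul_comm (Real.log (W y) - Real.log (W x))]
  refine le_of_tendsto_of_tendsto
    (((hgrid hy.le).sub (hgrid (le_of_lt hx))).mul ((hlog hz).sub (hlog hy)))
    (((hgrid (le_of_lt hz)).sub (hgrid hy.le)).mul ((hlog hy).sub (hlog hx)))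
    (hpos.mono fun m hm => ?_)
  have hle := mul_le_mul_of_nonneg_left
    (K.mul_log_stepScale_sub_le hm.1 hm.2 hxy.le hyz.le) hm.1.le
  simpa only [← mul_assoc, mul_sub] using hle

theorem lconv_limit (x : ℝ) : lconv F W x = ENNReal.ofReal x := by
  have hmono := K.monotone_limit hh hW
  have hcausal : IsCausal 0 W := .of_monotone hmono fun _ hx => K.limit_eq_zero hh hW hx
  rw [lconv_comm, hcausal.lconv_eq_setLIntegral_Ioo K.toIsCausal]
  rcases le_or_gt x 0 with hx | hx
  · rw [Ioo_eq_empty (not_lt.2 hx), Measure.restrict_empty, lintegral_zero_measure,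
      ENNReal.ofReal_of_nonpos hx]
  have hmeas : Measurable fun s => F s * W (x - s) :=
    K.measurable.mul (hmono.measurable.comp (measurable_id.const_sub x))
  have hnonneg (s : ℝ) : 0 ≤ F s * W (x - s) := mul_nonneg (K.nonneg s) (hcausal.nonneg _)
  have hint : IntegrableOn (fun s => F s * W (x - s)) (Ioc 0 x) := by
    refine Integrable.mono' (((K.integrableOn_Iic x).mono_set Ioc_subset_Iic_self).mul_const (W x))
      hmeas.aestronglyMeasurable ((ae_restrict_iff' measurableSet_Ioc).2 <|
        Eventually.of_forall fun s hs => ?_)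
    rw [Real.norm_of_nonneg (hnonneg s)]
    exact mul_le_mul_of_nonneg_left (hmono (sub_le_self x hs.1.le)) (K.nonneg s)
  rw [Measure.restrict_congr_set Ioo_ae_eq_Ioc]
  simp_rw [mul_comm (ENNReal.ofReal (W _)), ← ENNReal.ofReal_mul (K.nonneg _)]
  rw [← ofReal_integral_eq_lintegral_ofReal hint (Eventually.of_forall hnonneg),
    ← intervalIntegral.integral_of_le hx.le, K.integral_mul_limit hh hW hx.le]

end Limit

theorem exists_isScaleFunction : ∃ W, IsScaleFunction F W := by
  obtain ⟨h, W, hh, hW⟩ := K.exists_tendsto_stepScale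
  exact ⟨W, K.monotone_limit hh hW, fun _ hx => K.limit_eq_zero hh hW hx,
    fun _ hx => K.limit_pos hh hW hx, K.concaveOn_log_limit hh hW, K.lconv_limit hh hW⟩

end IsConvexKernel

/-- The density `w = W'` on `(0, ∞)` of a scale function. Log-concavity only provides one-sided
derivatives everywhere, whence the derivative from the right. -/
def scaleDensity (W : ℝ → ℝ) : ℝ → ℝ := (Ioi 0).indicator fun x => derivWithin W (Ioi x) x

theorem scaleDensity_of_pos (W : ℝ → ℝ) {x : ℝ} (hx : 0 < x) :
    scaleDensity W x = derivWithin W (Ioi x) x :=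
  indicator_of_mem (mem_Ioi.2 hx) _

theorem scaleDensity_of_nonpos (W : ℝ → ℝ) {x : ℝ} (hx : x ≤ 0) : scaleDensity W x = 0 :=
  indicator_of_notMem (not_lt.2 hx) _

theorem measurable_scaleDensity (W : ℝ → ℝ) : Measurable (scaleDensity W) :=
  (measurable_derivWithin_Ioi W).indicator measurableSet_Ioi

namespace IsScaleFunction

variable {F W : ℝ → ℝ} (S : IsScaleFunction F W)
include S

theorem nonneg (x : ℝ) : 0 ≤ W x :=
  (S.eq_zero (min x 0) (min_le_right x 0)).symm.trans_le (S.monotone (min_le_left x 0))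

theorem mul_mul_le (hF : AntitoneOn F (Ioi 0)) {δ x : ℝ} (hδ : 0 < δ) (hx : 0 ≤ x) :
    F δ * W x * δ ≤ x + δ := by
  refine (ENNReal.ofReal_le_ofReal_iff (by positivity)).1 ?_
  calc ENNReal.ofReal (F δ * W x * δ)
      = ∫⁻ _ in Ioo x (x + δ), ENNReal.ofReal (F δ) * ENNReal.ofReal (W x) := by
        rw [setLIntegral_const, Real.volume_Ioo, add_sub_cancel_left,
          ENNReal.ofReal_mul' hδ.le, ENNReal.ofReal_mul' (S.nonneg x)]
    _ ≤ ∫⁻ y in Ioo x (x + δ), ENNReal.ofReal (F (x + δ - y)) * ENNReal.ofReal (W y) :=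
        setLIntegral_mono' measurableSet_Ioo fun y hy => mul_le_mul'
          (ENNReal.ofReal_le_ofReal (hF (sub_pos.2 hy.2) hδ (by linarith [hy.1])))
          (ENNReal.ofReal_le_ofReal (S.monotone hy.1.le))
    _ ≤ lconv F W (x + δ) := by rw [lconv_apply]; exact setLIntegral_le_lintegral _ _
    _ = ENNReal.ofReal (x + δ) := S.lconv_eq _

theorem continuousOn_Ioi : ContinuousOn W (Ioi 0) :=
  (Real.continuous_exp.comp_continuousOn (S.concaveOn_log.continuousOn isOpen_Ioi)).congr
    fun x hx => (Real.exp_log (S.pos x hx)).symm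

theorem hasDerivWithinAt {x : ℝ} (hx : 0 < x) :
    HasDerivWithinAt W (scaleDensity W x) (Ioi x) x := by
  have hlog := (S.concaveOn_log.neg.hasDerivWithinAt_rightDeriv_of_mem_interior
    (x := x) (by rwa [interior_Ioi])).neg.exp
  rw [scaleDensity_of_pos W hx]
  refine (hlog.differentiableWithinAt.congr_of_eventuallyEq ?_ ?_).hasDerivWithinAt
  · filter_upwards [self_mem_nhdsWithin] with y hy
    simp [Real.exp_log (S.pos y (hx.trans hy))]
  · simp [Real.exp_log (S.pos x hx)]

theorem scaleDensity_nonneg (x : ℝ) : 0 ≤ scaleDensity W x :=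
  indicator_nonneg (fun _ _ => (S.monotone.monotoneOn _).derivWithin_nonneg) x

theorem antitoneOn_scaleDensity_div : AntitoneOn (fun x => scaleDensity W x / W x) (Ioi 0) := by
  have hmono := S.concaveOn_log.neg.monotoneOn_rightDeriv
  rw [interior_Ioi] at hmono
  refine hmono.neg.congr fun x hx => ?_
  have hlog := ((S.hasDerivWithinAt hx).log (S.pos x hx).ne').neg
  exact neg_eq_iff_eq_neg.2 (hlog.derivWithin (uniqueDiffWithinAt_Ioi x))

variable (K : IsConvexKernel F)
include K

theorem continuousOn_Ici : ContinuousOn W (Ici 0) := by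
  have hlim : Tendsto W (𝓝[>] 0) (𝓝 0) := by
    refine tendsto_of_tendsto_of_tendsto_of_le_of_le' tendsto_const_nhds
      (K.tendsto_nhdsGT_zero.const_div_atTop 2) (Eventually.of_forall S.nonneg) ?_
    filter_upwards [K.eventually_pos] with x hx
    rw [le_div_iff₀ hx.2]
    nlinarith [S.mul_mul_le K.antitoneOn hx.1 hx.1.le, hx.1]
  intro x hx
  obtain rfl | hx := eq_or_lt_of_le (mem_Ici.1 hx)
  · rw [← continuousWithinAt_Ioi_iff_Ici, ContinuousWithinAt, S.eq_zero 0 le_rfl]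
    exact hlim
  · exact (S.continuousOn_Ioi.continuousAt (Ioi_mem_nhds hx)).continuousWithinAt

theorem isCausal_scaleDensity : IsCausal 0 (scaleDensity W) :=
  .of_integrableOn_Ioc S.scaleDensity_nonneg (fun _ => scaleDensity_of_nonpos W)
    (measurable_scaleDensity W) fun _ => intervalIntegral.integrableOn_deriv_right_of_nonneg
      ((S.continuousOn_Ici K).mono Icc_subset_Ici_self) (fun _ hy => S.hasDerivWithinAt hy.1)
      fun y _ => S.scaleDensity_nonneg y

theorem integral_scaleDensity {x y : ℝ} (hx : 0 ≤ x) (hxy : x ≤ y) :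
    ∫ z in x..y, scaleDensity W z = W y - W x :=
  intervalIntegral.integral_eq_sub_of_hasDeriv_right_of_le_real hxy
    ((S.continuousOn_Ici K).mono fun _ hz => hx.trans hz.1)
    (fun _ hz => S.hasDerivWithinAt (hx.trans_lt hz.1))
    (((S.isCausal_scaleDensity K).integrableOn_Iic y).mono_set fun _ hz => hz.2)

theorem setIntegral_Iic_scaleDensity (x : ℝ) : ∫ y in Iic x, scaleDensity W y = W x := by
  have hw := S.isCausal_scaleDensity K
  rcases le_or_gt x 0 with hx | hx
  · rw [S.eq_zero x hx, hw.primitive.eq_zero x hx]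
  · rw [hw.setIntegral_Iic, S.integral_scaleDensity K le_rfl hx.le, S.eq_zero 0 le_rfl, sub_zero]

theorem exists_le_linear : ∃ C, 0 < C ∧ ∀ x, 0 ≤ x → W x ≤ C * (1 + x) := by
  obtain ⟨δ, hδ, hF⟩ := K.eventually_pos.exists
  refine ⟨(1 + δ) / (F δ * δ), by positivity, fun x hx => ?_⟩
  rw [div_mul_eq_mul_div, le_div_iff₀ (by positivity)]
  nlinarith [S.mul_mul_le K.antitoneOn hδ hx, mul_nonneg hδ.le hx]

theorem exists_scaleDensity_le_linear {δ : ℝ} (hδ : 0 < δ) :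
    ∃ C, 0 < C ∧ ∀ x, δ ≤ x → scaleDensity W x ≤ C * (1 + x) := by
  obtain ⟨C, hC, hW⟩ := S.exists_le_linear K
  have hslope : 0 ≤ scaleDensity W δ / W δ := div_nonneg (S.scaleDensity_nonneg δ) (S.nonneg δ)
  refine ⟨(scaleDensity W δ / W δ + 1) * C, by positivity, fun x hx => ?_⟩
  have hx0 := hδ.trans_le hx
  calc scaleDensity W x = scaleDensity W x / W x * W x := (div_mul_cancel₀ _ (S.pos x hx0).ne').symm
    _ ≤ (scaleDensity W δ / W δ + 1) * (C * (1 + x)) :=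
        mul_le_mul
          ((S.antitoneOn_scaleDensity_div hδ hx0 hx).trans (le_add_of_nonneg_right one_pos.le))
          (hW x hx0.le) (S.nonneg x) (by positivity)
    _ = _ := (mul_assoc _ _ _).symm

end IsScaleFunction

theorem ae_eq_of_forall_setLIntegral_Iic_eq {f g : ℝ → ENNReal} (hf : Measurable f)
    (hg : Measurable g) (hfin : ∀ x, ∫⁻ z in Iic x, f z ≠ ⊤)
    (h : ∀ x, ∫⁻ z in Iic x, f z = ∫⁻ z in Iic x, g z) : f =ᵐ[volume] g := by
  have hIic (x : ℝ) : volume.withDensity f (Iic x) = volume.withDensity g (Iic x) := by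
    rw [withDensity_apply _ measurableSet_Iic, withDensity_apply _ measurableSet_Iic, h]
  have hfinite (x : ℝ) : volume.withDensity f (Iic x) ≠ ⊤ := by
    rw [withDensity_apply _ measurableSet_Iic]; exact hfin x
  refine (withDensity_eq_iff_of_sigmaFinite hf.aemeasurable hg.aemeasurable).1 ?_
  refine Measure.ext_of_Ioc' _ _
    (fun {_ b} _ => ne_top_of_le_ne_top (hfinite b) (measure_mono Ioc_subset_Iic_self))
    fun {a b} hab => ?_
  have hIoc : Ioc a b = Iic b \ Iic a := by ext x; simp [and_comm]
  rw [hIoc, measure_sdiff (Iic_subset_Iic.2 hab.le) measurableSet_Iic.nullMeasurableSet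
    (hfinite a), measure_sdiff (Iic_subset_Iic.2 hab.le) measurableSet_Iic.nullMeasurableSet
    (hIic a ▸ hfinite a), hIic, hIic]

theorem setLIntegral_Iic_indicator_Ioi_one (x : ℝ) :
    ∫⁻ z in Iic x, (Ioi (0 : ℝ)).indicator 1 z = ENNReal.ofReal x := by
  rw [lintegral_indicator_one measurableSet_Ioi, Measure.restrict_apply measurableSet_Ioi,
    Ioi_inter_Iic, Real.volume_Ioc, sub_zero]

namespace IsConvexKernel

variable {F w : ℝ → ℝ} (K : IsConvexKernel F)
include K

theorem lconv_add_le {x s B : ℝ} (hs : 0 < s)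
    (hB : ∀ y ∈ Ico x (x + s), w y ≤ B) : lconv F w (x + s)
      ≤ lconv F w x + ENNReal.ofReal (∫ z in Iic s, F z) * ENNReal.ofReal B := by
  have hmeas : Measurable fun z => (Iic s).indicator (fun z => ENNReal.ofReal (F z)) z :=
    K.measurable.ennreal_ofReal.indicator measurableSet_Iic
  have hsplit (y : ℝ) : ENNReal.ofReal (F (x + s - y)) * ENNReal.ofReal (w y)
      ≤ ENNReal.ofReal (F (x - y)) * ENNReal.ofReal (w y)
        + (Iic s).indicator (fun z => ENNReal.ofReal (F z)) (x + s - y) * ENNReal.ofReal B := by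
    rcases lt_or_ge y x with hyx | hyx
    · refine le_add_right (mul_le_mul_left (ENNReal.ofReal_le_ofReal ?_) _)
      exact K.antitoneOn (sub_pos.2 hyx) (by simp only [mem_Ioi]; linarith) (by linarith)
    · refine le_add_left ?_
      rw [indicator_of_mem (by simp only [mem_Iic]; linarith)]
      rcases lt_or_ge y (x + s) with hys | hys
      · exact mul_le_mul_right (ENNReal.ofReal_le_ofReal (hB y ⟨hyx, hys⟩)) _
      · simp [K.eq_zero _ (sub_nonpos.2 hys)]
  rw [lconv_apply, lconv_apply, ofReal_integral_eq_lintegral_ofReal (K.integrableOn_Iic s)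
    (Eventually.of_forall K.nonneg), ← lintegral_indicator measurableSet_Iic,
    ← lintegral_sub_left_eq_self ((Iic s).indicator _) (x + s),
    ← lintegral_mul_const _ (by fun_prop), ← lintegral_add_right _ (by fun_prop)]
  exact lintegral_mono hsplit

theorem lconv_le_liminf {u : ℕ → ℝ} {x : ℝ} (hw : Measurable w) (hu : Tendsto u atTop (𝓝 x)) :
    lconv F w x ≤ liminf (fun n => lconv F w (u n)) atTop := by
  simp_rw [lconv_apply]
  have hF := K.measurable
  refine le_trans (lintegral_mono_ae ?_) (lintegral_liminf_le fun n => by fun_prop)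
  filter_upwards [Measure.ae_ne volume x] with y hy
  refine (Tendsto.liminf_eq ?_).ge
  exact ENNReal.Tendsto.mul_const (ENNReal.tendsto_ofReal
    ((K.continuousAt (sub_ne_zero.2 hy.symm)).tendsto.comp (hu.sub_const y)))
    (Or.inr ENNReal.ofReal_ne_top)

theorem lconv_eq_one_of_ae {x b B : ℝ} (hw : Measurable w) (hx : 0 < x) (hxb : x < b)
    (hB : ∀ y ∈ Ico x b, w y ≤ B) (h : ∀ᵐ z, 0 < z → lconv F w z = 1) : lconv F w x = 1 := by
  obtain ⟨u, -, hu, hux⟩ := (Measure.dense_of_ae h).exists_seq_strictAnti_tendsto x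
  have hone (n : ℕ) : lconv F w (u n) = 1 := (hu n).2 (hx.trans (hu n).1)
  refine le_antisymm ?_ ?_
  · refine (K.lconv_le_liminf hw hux).trans ?_
    simp only [hone, liminf_const, le_refl]
  · have hlim : Tendsto (fun n => lconv F w x
        + ENNReal.ofReal (∫ z in Iic (u n - x), F z) * ENNReal.ofReal B) atTop
        (𝓝 (lconv F w x)) := by
      have hprim := (K.continuous_primitive.tendsto 0).comp (sub_self x ▸ hux.sub_const x)
      rw [K.primitive.eq_zero 0 le_rfl] at hprim
      simpa using tendsto_const_nhds.add (ENNReal.Tendsto.mul_const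
        (ENNReal.tendsto_ofReal hprim) (Or.inr ENNReal.ofReal_ne_top))
    refine ge_of_tendsto hlim ((hux.eventually_lt_const hxb).mono fun n hn => ?_)
    have hle := K.lconv_add_le (sub_pos.2 (hu n).1) (w := w) (B := B) (x := x)
      fun y hy => hB y ⟨hy.1, hy.2.trans (by linarith)⟩
    rwa [add_sub_cancel, hone] at hle

end IsConvexKernel

theorem IsScaleFunction.lconv_scaleDensity {F W : ℝ → ℝ} (S : IsScaleFunction F W)
    (K : IsConvexKernel F) (x : ℝ) : lconv F (scaleDensity W) x = (Ioi 0).indicator 1 x := by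
  have hw := S.isCausal_scaleDensity K
  rcases le_or_gt x 0 with hx | hx
  · rw [indicator_of_notMem (notMem_Ioi.2 hx), K.lconv_eq_setLIntegral_Ioo hw,
      Ioo_eq_empty (not_lt.2 hx), Measure.restrict_empty, lintegral_zero_measure]
  have hIic (y : ℝ) : ∫⁻ z in Iic y, lconv F (scaleDensity W) z = ENNReal.ofReal y := by
    rw [← hw.lconv_primitive K.measurable]
    simp_rw [S.setIntegral_Iic_scaleDensity K]
    exact S.lconv_eq y
  have hae : lconv F (scaleDensity W) =ᵐ[volume] (Ioi 0).indicator 1 :=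
    ae_eq_of_forall_setLIntegral_Iic_eq (measurable_lconv K.measurable hw.measurable)
      (measurable_one.indicator measurableSet_Ioi) (fun y => hIic y ▸ ENNReal.ofReal_ne_top)
      fun y => (hIic y).trans (setLIntegral_Iic_indicator_Ioi_one y).symm
  obtain ⟨C, hC, hle⟩ := S.exists_scaleDensity_le_linear K hx
  rw [indicator_of_mem (mem_Ioi.2 hx)]
  refine K.lconv_eq_one_of_ae (b := x + 1) (B := C * (1 + (x + 1))) hw.measurable hx
    (lt_add_one x) (fun y hy => (hle y hy.1).trans ?_) (hae.mono fun z hz hz0 => ?_)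
  · exact mul_le_mul_of_nonneg_left (add_le_add_right hy.2.le 1) hC.le
  · rw [hz, indicator_of_mem (mem_Ioi.2 hz0), Pi.one_apply]

/-! ### Sonine duals -/

theorem continuousAt_of_antitoneOn_of_exists_sub_lt {f : ℝ → ℝ} {s : Set ℝ} {x : ℝ}
    (hf : AntitoneOn f s) (hs : s ∈ 𝓝 x)
    (h : ∀ ε > 0, ∃ y ∈ s, ∃ z ∈ s, y < x ∧ x < z ∧ f y - f z < ε) : ContinuousAt f x := by
  have hx := mem_of_mem_nhds hs
  refine Metric.continuousAt_iff'.2 fun ε hε => ?_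
  obtain ⟨y, hy, z, hz, hyx, hxz, hlt⟩ := h ε hε
  filter_upwards [Ioo_mem_nhds hyx hxz, hs] with t ht hts
  rw [Real.dist_eq, abs_lt]
  constructor <;>
    linarith [hf hy hts ht.1.le, hf hts hz ht.2.le, hf hy hx hyx.le, hf hx hz hxz.le]

/-- Sub-exponential growth at infinity. -/
def IsSubexponential (f : ℝ → ℝ) : Prop :=
  ∀ ε : ℝ, 0 < ε → Tendsto (fun x => Real.exp (-ε * x) * f x) atTop (𝓝 0)

theorem IsSubexponential.comp_add_right {f : ℝ → ℝ} (hf : IsSubexponential f) (c : ℝ) :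
    IsSubexponential fun x => f (x + c) := fun ε hε => by
  have h := ((hf ε hε).comp (tendsto_atTop_add_const_right _ c tendsto_id)).const_mul
    (Real.exp (ε * c))
  rw [mul_zero] at h
  refine h.congr fun x => ?_
  rw [Function.comp_apply, id, ← mul_assoc, ← Real.exp_add]
  ring_nf

theorem isSubexponential_of_le_linear {f : ℝ → ℝ} {C : ℝ} (hf : ∀ x, 0 ≤ f x)
    (hC : ∀ᶠ x in atTop, f x ≤ C * (1 + x)) : IsSubexponential f := fun ε hε => by
  have hlin : Tendsto (fun x => C * (Real.exp (-ε * x) + x ^ (1 : ℝ) * Real.exp (-ε * x)))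
      atTop (𝓝 (C * (0 + 0))) :=
    ((Real.tendsto_exp_atBot.comp (tendsto_id.const_mul_atTop_of_neg (neg_neg_of_pos hε))).add
      (tendsto_rpow_mul_exp_neg_mul_atTop_nhds_zero 1 ε hε)).const_mul C
  rw [add_zero, mul_zero] at hlin
  refine squeeze_zero' (Eventually.of_forall fun x => mul_nonneg (Real.exp_pos _).le (hf x)) ?_ hlin
  filter_upwards [hC] with x hx
  rw [Real.rpow_one]
  linarith [mul_le_mul_of_nonneg_left hx (Real.exp_pos (-ε * x)).le]

/-- Duality `F ⋆ w = 1` on `(0, ∞)` of causal kernels, as in Sonine's equation, for a dual kernel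
`w` that is continuous on `(0, ∞)` and of sub-exponential growth. -/
structure IsSonineDual (F w : ℝ → ℝ) : Prop extends IsCausal 0 w where
  continuousOn : ContinuousOn w (Ioi 0)
  isSubexponential : IsSubexponential w
  lconv_eq : ∀ x, lconv F w x = (Ioi 0).indicator 1 x

namespace IsConvexKernel

variable {F : ℝ → ℝ} (K : IsConvexKernel F)

section Dual

variable {w : ℝ → ℝ} (hw : IsCausal 0 w) (hone : ∀ x, 0 < x → lconv F w x = 1)
include K hw hone

theorem intervalIntegrable_mul_comp_sub {x : ℝ} (hx : 0 < x) (a b : ℝ) :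
    IntervalIntegrable (fun y => F (x - y) * w y) volume a b :=
  (K.integrable_mul_comp_sub hw (by simp [hone x hx])).intervalIntegrable

theorem intervalIntegrable_mul_comp_add {x s : ℝ} (hxs : 0 < x + s) (a b : ℝ) :
    IntervalIntegrable (fun y => F (x - y) * w (y + s)) volume a b := by
  have h := (K.intervalIntegrable_mul_comp_sub hw hone hxs (a + s) (b + s)).comp_add_right s
  simpa only [add_sub_add_right_eq_sub, add_sub_cancel_right] using h

theorem intervalIntegral_mul_eq_one {x : ℝ} (hx : 0 < x) : ∫ y in 0..x, F (x - y) * w y = 1 := by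
  rw [K.intervalIntegral_mul_eq_toReal_lconv hw hx.le, hone x hx, ENNReal.toReal_one]

theorem integral_mul_sub_comp_add_le {δ x s U : ℝ} (hδ : 0 ≤ δ) (hδx : δ < x) (hs : 0 ≤ s)
    (hU : ∀ y ∈ Icc δ (δ + s), w y ≤ U) :
    ∫ y in δ..x, F (x - y) * (w y - w (y + s)) ≤ s * (F (x - δ) * U) := by
  have hx : 0 < x := hδ.trans_lt hδx
  have hxs : 0 < x + s := by linarith
  have hint := K.intervalIntegrable_mul_comp_sub hw hone hx
  have hint' := K.intervalIntegrable_mul_comp_sub hw hone hxs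
  have hleft : ∫ y in 0..δ, F (x + s - y) * w y ≤ ∫ y in 0..δ, F (x - y) * w y :=
    intervalIntegral.integral_mono_on hδ (hint' 0 δ) (hint 0 δ) fun y hy =>
      mul_le_mul_of_nonneg_right (K.antitoneOn (mem_Ioi.2 (by linarith [hy.2]))
        (mem_Ioi.2 (by linarith [hy.2])) (by linarith)) (hw.nonneg y)
  have hmid : ∫ y in δ..(δ + s), F (x + s - y) * w y ≤ s * (F (x - δ) * U) := by
    have hle := intervalIntegral.integral_mono_on (by linarith) (hint' δ (δ + s))
      intervalIntegrable_const fun y hy =>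
        mul_le_mul (K.antitoneOn (mem_Ioi.2 (by linarith : 0 < x - δ))
          (mem_Ioi.2 (by linarith [hy.2])) (by linarith [hy.2])) (hU y hy) (hw.nonneg y)
          (K.nonneg _)
    simpa only [intervalIntegral.integral_const, add_sub_cancel_left, smul_eq_mul] using hle
  have hright : ∫ y in (δ + s)..(x + s), F (x + s - y) * w y
      = ∫ y in δ..x, F (x - y) * w (y + s) := by
    simp only [← intervalIntegral.integral_comp_add_right (fun y => F (x + s - y) * w y),
      add_sub_add_right_eq_sub]
  have hsplit := intervalIntegral.integral_add_adjacent_intervals (hint 0 δ) (hint δ x)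
  have hsplit' := intervalIntegral.integral_add_adjacent_intervals (hint' 0 (δ + s))
    (hint' (δ + s) (x + s))
  rw [K.intervalIntegral_mul_eq_one hw hone hx] at hsplit
  rw [K.intervalIntegral_mul_eq_one hw hone hxs, hright,
    ← intervalIntegral.integral_add_adjacent_intervals (hint' 0 δ) (hint' δ (δ + s))] at hsplit'
  simp only [mul_sub]
  rw [intervalIntegral.integral_sub (hint δ x)
    (K.intervalIntegrable_mul_comp_add hw hone hxs δ x)]
  linarith

theorem mul_jump_le {δ x s U C ε : ℝ} (hδ : 0 ≤ δ) (hs : 0 < s) (hδx : δ ≤ x - s)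
    (hU : ∀ y ∈ Icc δ (δ + s), w y ≤ U) (hC : 0 ≤ C) (hε : 0 ≤ ε)
    (hslope : ∀ y ∈ Icc δ x, w (y + s) ≤ w y + C * s)
    (hjump : ∀ y ∈ Ioo (x - s) x, w (y + s) + ε ≤ w y + C * s) :
    F s * ε ≤ C * (∫ y in Iic x, F y) + F (x - δ) * U := by
  have hδx' : δ < x := by linarith
  have hx : 0 < x := hδ.trans_lt hδx'
  have hdiff (a b : ℝ) :
      IntervalIntegrable (fun y => F (x - y) * (w y - w (y + s))) volume a b := by
    simp only [mul_sub]
    exact (K.intervalIntegrable_mul_comp_sub hw hone hx a b).sub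
      (K.intervalIntegrable_mul_comp_add hw hone (by linarith) a b)
  have hF (a b : ℝ) : IntervalIntegrable (fun y => F (x - y) * (C * s)) volume a b := by
    simpa using ((K.intervalIntegrable (x - a) (x - b)).comp_sub_left x).mul_const (C * s)
  have hsum (a b : ℝ) := (hdiff a b).add (hF a b)
  have hprim : ∫ y in δ..x, F (x - y) * (C * s) ≤ (∫ y in Iic x, F y) * (C * s) := by
    rw [intervalIntegral.integral_mul_const, intervalIntegral.integral_comp_sub_left, sub_self,
      ← K.setIntegral_Iic]
    exact mul_le_mul_of_nonneg_right (setIntegral_mono_set (K.integrableOn_Iic x)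
      (Eventually.of_forall K.nonneg) (Iic_subset_Iic.2 (sub_le_self x hδ)).eventuallyLE)
      (by positivity)
  have hlow : s * (F s * ε)
      ≤ ∫ y in δ..x, (F (x - y) * (w y - w (y + s)) + F (x - y) * (C * s)) := by
    calc s * (F s * ε) = ∫ _ in (x - s)..x, F s * ε := by
          rw [intervalIntegral.integral_const, sub_sub_cancel, smul_eq_mul]
      _ ≤ ∫ y in (x - s)..x, (F (x - y) * (w y - w (y + s)) + F (x - y) * (C * s)) := by
          refine intervalIntegral.integral_mono_on_of_le_Ioo (sub_le_self x hs.le)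
            intervalIntegrable_const (hsum _ _) fun y hy => ?_
          rw [← mul_add]
          exact mul_le_mul (K.antitoneOn (sub_pos.2 hy.2) hs (by linarith [hy.1]))
            (by linarith [hjump y hy]) hε (K.nonneg _)
      _ ≤ _ := by
          refine intervalIntegral.integral_mono_interval hδx (sub_le_self x hs.le) le_rfl
            ((ae_restrict_mem measurableSet_Ioc).mono fun y hy => ?_) (hsum _ _)
          simp only [Pi.zero_apply, ← mul_add]
          exact mul_nonneg (K.nonneg _) (by linarith [hslope y ⟨hy.1.le, hy.2⟩])
  rw [intervalIntegral.integral_add (hdiff _ _) (hF _ _)] at hlow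
  refine le_of_mul_le_mul_left ?_ hs
  linarith [K.integral_mul_sub_comp_add_le hw hone hδ hδx' hs.le hU]

end Dual

end IsConvexKernel

namespace IsScaleFunction

variable {F W : ℝ → ℝ} (S : IsScaleFunction F W) (K : IsConvexKernel F)
include S K

theorem exists_scaleDensity_add_le {δ : ℝ} (hδ : 0 < δ) (M : ℝ) :
    ∃ C, 0 < C ∧ ∀ y z, δ ≤ y → y ≤ z → z ≤ M →
      scaleDensity W z + (scaleDensity W y / W y - scaleDensity W z / W z) * W y
        ≤ scaleDensity W y + C * (z - y) := by
  obtain ⟨C, hC, hle⟩ := S.exists_scaleDensity_le_linear K hδ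
  have hratio : 0 ≤ scaleDensity W δ / W δ := div_nonneg (S.scaleDensity_nonneg δ) (S.nonneg δ)
  refine ⟨(scaleDensity W δ / W δ + 1) * (C * (1 + |M|)), by positivity, fun y z hy hyz hz => ?_⟩
  have hy0 := hδ.trans_le hy
  have hz0 := hy0.trans_le hyz
  have hlip : W z - W y ≤ C * (1 + |M|) * (z - y) := by
    have h := intervalIntegral.integral_mono_on hyz
      ((S.isCausal_scaleDensity K).intervalIntegrable y z) intervalIntegrable_const
      fun t ht => (hle t (hy.trans ht.1)).trans
        (mul_le_mul_of_nonneg_left (by linarith [ht.2, le_abs_self M] : 1 + t ≤ 1 + |M|) hC.le)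
    rw [S.integral_scaleDensity K hy0.le hyz, intervalIntegral.integral_const, smul_eq_mul] at h
    linarith
  have hratio_le : scaleDensity W z / W z ≤ scaleDensity W δ / W δ + 1 :=
    (S.antitoneOn_scaleDensity_div hδ hz0 (hy.trans hyz)).trans (le_add_of_nonneg_right one_pos.le)
  calc scaleDensity W z + (scaleDensity W y / W y - scaleDensity W z / W z) * W y
      = scaleDensity W y + scaleDensity W z / W z * (W z - W y) := by
        have := (S.pos y hy0).ne'
        have := (S.pos z hz0).ne'
        field_simp
        ring
    _ ≤ scaleDensity W y + (scaleDensity W δ / W δ + 1) * (C * (1 + |M|) * (z - y)) := by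
        gcongr
        exact sub_nonneg.2 (S.monotone hyz)
    _ = _ := by ring

theorem lconv_scaleDensity_of_pos {x : ℝ} (hx : 0 < x) : lconv F (scaleDensity W) x = 1 := by
  rw [S.lconv_scaleDensity K, indicator_of_mem (mem_Ioi.2 hx), Pi.one_apply]

theorem exists_eventually_mul_le {x ε : ℝ} (hx : 0 < x) (hε : 0 ≤ ε)
    (hjump : ∀ y ∈ Ioi 0, ∀ z ∈ Ioi 0, y < x → x < z →
      ε ≤ scaleDensity W y / W y - scaleDensity W z / W z) :
    ∃ B, ∀ᶠ s in 𝓝[>] 0, F s * (ε * W (x / 2)) ≤ B := by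
  obtain ⟨C, hC, hslope⟩ := S.exists_scaleDensity_add_le K (half_pos hx) (2 * x)
  obtain ⟨D, hD, hU⟩ := S.exists_scaleDensity_le_linear K (half_pos hx)
  refine ⟨C * (∫ y in Iic x, F y) + F (x - x / 2) * (D * (1 + x)), ?_⟩
  filter_upwards [Ioo_mem_nhdsGT (half_pos hx)] with s hs
  have hstep {y : ℝ} (hy : x / 2 ≤ y) (hyx : y ≤ x) : scaleDensity W (y + s)
      + (scaleDensity W y / W y - scaleDensity W (y + s) / W (y + s)) * W y
        ≤ scaleDensity W y + C * s := by
    simpa only [add_sub_cancel_left] using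
      hslope y (y + s) hy (by linarith [hs.1]) (by linarith [hs.2])
  refine K.mul_jump_le (S.isCausal_scaleDensity K) (fun _ => S.lconv_scaleDensity_of_pos K)
    (half_pos hx).le hs.1 (by linarith [hs.2])
    (fun y hy => (hU y hy.1).trans (by gcongr; linarith [hy.2, hs.2]))
    hC.le (mul_nonneg hε (S.nonneg _)) (fun y hy => ?_) fun y hy => ?_
  · have hy0 : 0 < y := (half_pos hx).trans_le hy.1
    have hanti := S.antitoneOn_scaleDensity_div hy0 (hy0.trans (lt_add_of_pos_right y hs.1))
      (le_add_of_nonneg_right hs.1.le)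
    exact (le_add_of_nonneg_right (mul_nonneg (sub_nonneg.2 hanti) (S.nonneg y))).trans
      (hstep hy.1 hy.2)
  · have hyδ : x / 2 ≤ y := by linarith [hy.1, hs.2]
    have hy0 : 0 < y := (half_pos hx).trans_le hyδ
    have hdrop := hjump y hy0 (y + s) (hy0.trans (lt_add_of_pos_right y hs.1)) hy.2
      (sub_lt_iff_lt_add.1 hy.1)
    have hmul := mul_le_mul hdrop (S.monotone hyδ) (S.nonneg _) (hε.trans hdrop)
    exact (add_le_add_right hmul _).trans (hstep hyδ hy.2.le)

theorem continuousOn_scaleDensity : ContinuousOn (scaleDensity W) (Ioi 0) := by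
  suffices h : ContinuousOn (fun x => scaleDensity W x / W x) (Ioi 0) from
    (h.mul S.continuousOn_Ioi).congr fun x hx => (div_mul_cancel₀ _ (S.pos x hx).ne').symm
  refine continuousOn_of_forall_continuousAt fun x (hx : 0 < x) =>
    continuousAt_of_antitoneOn_of_exists_sub_lt S.antitoneOn_scaleDensity_div (Ioi_mem_nhds hx) ?_
  by_contra! hjump
  obtain ⟨ε, hε, hjump⟩ := hjump
  obtain ⟨B, hB⟩ := S.exists_eventually_mul_le K hx hε.le hjump
  have htop := K.tendsto_nhdsGT_zero.atTop_mul_const (mul_pos hε (S.pos _ (half_pos hx)))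
  obtain ⟨s, hs, hgt⟩ := (hB.and (htop.eventually_gt_atTop B)).exists
  exact hs.not_gt hgt

theorem isSubexponential_scaleDensity : IsSubexponential (scaleDensity W) := by
  obtain ⟨C, -, hC⟩ := S.exists_scaleDensity_le_linear K one_pos
  exact isSubexponential_of_le_linear S.scaleDensity_nonneg ((eventually_ge_atTop 1).mono hC)

theorem isSonineDual : IsSonineDual F (scaleDensity W) where
  toIsCausal := S.isCausal_scaleDensity K
  continuousOn := S.continuousOn_scaleDensity K
  isSubexponential := S.isSubexponential_scaleDensity K
  lconv_eq := S.lconv_scaleDensity K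

end IsScaleFunction

namespace IsConvexKernel

variable {F : ℝ → ℝ} (K : IsConvexKernel F)
include K

theorem isSubexponential : IsSubexponential F :=
  isSubexponential_of_le_linear K.nonneg <| (eventually_ge_atTop 1).mono fun x hx => by
    have hle := K.antitoneOn (mem_Ioi.2 one_pos) (mem_Ioi.2 (one_pos.trans_le hx)) hx
    exact hle.trans (le_mul_of_one_le_right (K.nonneg 1) (by linarith))

theorem exists_isSonineDual : ∃ w, IsSonineDual F w := by
  obtain ⟨W, S⟩ := K.exists_isScaleFunction
  exact ⟨scaleDensity W, S.isSonineDual K⟩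

end IsConvexKernel

/-! ### Convexity of `Φ` -/

theorem antitone_measure_Ioi (μ : Measure ℝ) : Antitone fun y => μ (Ioi y) :=
  fun _ _ h => measure_mono (Ioi_subset_Ioi h)

theorem setLIntegral_Ioo_measure_Ioi_le {μ : Measure ℝ} (hμ : ∀ᵐ x ∂μ, 0 ≤ x) {b : ℝ} (hb : 0 ≤ b) :
    ∫⁻ t in Ioo 0 b, μ (Ioi t) ≤ ∫⁻ x, ENNReal.ofReal (min x b) ∂μ := by
  rw [lintegral_eq_lintegral_meas_lt μ (f := fun x => min x b) (hμ.mono fun x hx => le_min hx hb)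
    (measurable_id.min measurable_const).aemeasurable]
  refine (setLIntegral_mono' measurableSet_Ioo fun t ht => ?_).trans
    (lintegral_mono_set fun t ht => ht.1)
  exact measure_mono fun x hx => lt_min hx ht.2

theorem levyTail_nonneg (φ : Measure ℝ) (y : ℝ) : 0 ≤ levyTail φ y := ENNReal.toReal_nonneg

theorem measurable_levyTail (φ : Measure ℝ) : Measurable (levyTail φ) :=
  (antitone_measure_Ioi φ).measurable.ennreal_toReal

theorem PhiFn_of_pos (φ : Measure ℝ) {x : ℝ} (hx : 0 < x) :
    PhiFn φ x = ∫ y in Ioi x, levyTail φ y :=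
  if_pos hx

theorem PhiFn_of_nonpos (φ : Measure ℝ) {x : ℝ} (hx : x ≤ 0) : PhiFn φ x = 0 :=
  if_neg hx.not_gt

theorem PhiFn_nonneg (φ : Measure ℝ) (x : ℝ) : 0 ≤ PhiFn φ x := by
  rcases le_or_gt x 0 with hx | hx
  · rw [PhiFn_of_nonpos φ hx]
  · rw [PhiFn_of_pos φ hx]
    exact setIntegral_nonneg measurableSet_Ioi fun y _ => levyTail_nonneg φ y

theorem measurable_PhiFn (φ : Measure ℝ) : Measurable (PhiFn φ) := by
  have hanti : Antitone fun x => ∫⁻ y in Ioi x, ENNReal.ofReal (levyTail φ y) :=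
    fun _ _ h => lintegral_mono_set (Ioi_subset_Ioi h)
  have heq (x : ℝ) : ∫ y in Ioi x, levyTail φ y
      = (∫⁻ y in Ioi x, ENNReal.ofReal (levyTail φ y)).toReal :=
    integral_eq_lintegral_of_nonneg_ae (Eventually.of_forall (levyTail_nonneg φ))
      (measurable_levyTail φ).aestronglyMeasurable
  refine Measurable.ite measurableSet_Ioi ?_ measurable_const
  simp_rw [heq]
  exact hanti.measurable.ennreal_toReal

namespace H0

variable {φ : Measure ℝ} (H : H0 φ)
include H

theorem ae_pos : ∀ᵐ z ∂φ, 0 < z := by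
  simpa only [ae_iff, not_lt, Iic_def] using H.1

theorem lintegral_min_lt_top : ∫⁻ z, ENNReal.ofReal (min (z ^ 2) z) ∂φ < ⊤ := by
  rw [← Measure.restrict_eq_self_of_ae_mem (s := Ioi 0) H.ae_pos]
  exact H.2.1

theorem measure_Ioi_lt_top {y : ℝ} (hy : 0 < y) : φ (Ioi y) < ⊤ := by
  have hm : ENNReal.ofReal (min (y ^ 2) y) ≠ 0 := (ENNReal.ofReal_pos.2 (by positivity)).ne'
  refine (measure_mono fun z (hz : y < z) => ?_).trans_lt
    ((meas_ge_le_lintegral_div (by fun_prop) hm ENNReal.ofReal_ne_top).trans_lt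
      (ENNReal.div_lt_top H.lintegral_min_lt_top.ne hm))
  exact ENNReal.ofReal_le_ofReal (min_le_min (pow_le_pow_left₀ hy.le hz.le 2) hz.le)

theorem ofReal_levyTail {y : ℝ} (hy : 0 < y) : ENNReal.ofReal (levyTail φ y) = φ (Ioi y) :=
  ENNReal.ofReal_toReal (H.measure_Ioi_lt_top hy).ne

theorem antitoneOn_levyTail : AntitoneOn (levyTail φ) (Ioi 0) := fun _ hx _ _ h =>
  ENNReal.toReal_mono (H.measure_Ioi_lt_top hx).ne (antitone_measure_Ioi φ h)

theorem lintegral_tail_eq_top : ∫⁻ y in Ioi 0, φ (Ioi y) = ⊤ := by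
  refine top_le_iff.1 ?_
  calc ⊤ = ∫⁻ z in Ioo 0 1, ENNReal.ofReal z ∂φ := H.2.2.symm
    _ ≤ ∫⁻ z, ENNReal.ofReal z ∂φ := setLIntegral_le_lintegral _ _
    _ = ∫⁻ y in Ioi 0, φ (Ioi y) :=
        lintegral_eq_lintegral_meas_lt φ (f := id) (H.ae_pos.mono fun z hz => hz.le) aemeasurable_id

theorem lintegral_tail_mul_min_lt_top :
    ∫⁻ y in Ioi 0, φ (Ioi y) * ENNReal.ofReal (min y 1) < ⊤ := by
  have hint (z : ℝ) : IntervalIntegrable (fun t => min t 1) volume 0 z :=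
    (continuous_id.min continuous_const).intervalIntegrable _ _
  have hcake := lintegral_comp_eq_lintegral_meas_lt_mul φ (f := id) (g := fun t => min t 1)
    (H.ae_pos.mono fun z hz => hz.le) aemeasurable_id (fun t _ => hint t)
    ((ae_restrict_mem measurableSet_Ioi).mono fun t ht => le_min (le_of_lt ht) zero_le_one)
  refine lt_of_le_of_lt (hcake.symm.le.trans ?_) H.lintegral_min_lt_top
  refine lintegral_mono_ae (H.ae_pos.mono fun z hz => ENNReal.ofReal_le_ofReal (le_min ?_ ?_))
  · have h := intervalIntegral.integral_mono_on hz.le (hint z) intervalIntegrable_const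
      fun t ht => (min_le_left t 1).trans ht.2
    simpa [pow_two] using h
  · have h := intervalIntegral.integral_mono_on hz.le (hint z) intervalIntegrable_const
      fun t _ => min_le_right t 1
    simpa using h

theorem lintegral_tail_lt_top {x : ℝ} (hx : 0 < x) : ∫⁻ y in Ioi x, φ (Ioi y) < ⊤ := by
  have hmul : (∫⁻ y in Ioi x, φ (Ioi y)) * ENNReal.ofReal (min x 1) < ⊤ := by
    refine lt_of_le_of_lt ?_ H.lintegral_tail_mul_min_lt_top
    rw [← lintegral_mul_const _ (antitone_measure_Ioi φ).measurable]
    refine (setLIntegral_mono' measurableSet_Ioi fun z hz => ?_).trans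
      (lintegral_mono_set (Ioi_subset_Ioi hx.le))
    exact mul_le_mul_right (ENNReal.ofReal_le_ofReal (min_le_min_right 1 (le_of_lt hz))) _
  exact ENNReal.lt_top_of_mul_ne_top_left hmul.ne (ENNReal.ofReal_pos.2 (by positivity)).ne'

theorem setLIntegral_ofReal_levyTail {x : ℝ} (hx : 0 < x) :
    ∫⁻ y in Ioi x, ENNReal.ofReal (levyTail φ y) = ∫⁻ y in Ioi x, φ (Ioi y) :=
  setLIntegral_congr_fun measurableSet_Ioi fun _ hy => H.ofReal_levyTail (hx.trans hy)

theorem integrableOn_levyTail {x : ℝ} (hx : 0 < x) : IntegrableOn (levyTail φ) (Ioi x) := by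
  refine ⟨(measurable_levyTail φ).aestronglyMeasurable, ?_⟩
  rw [hasFiniteIntegral_iff_ofReal (Eventually.of_forall (levyTail_nonneg φ)),
    H.setLIntegral_ofReal_levyTail hx]
  exact H.lintegral_tail_lt_top hx

theorem ofReal_PhiFn {x : ℝ} (hx : 0 < x) :
    ENNReal.ofReal (PhiFn φ x) = ∫⁻ y in Ioi x, φ (Ioi y) := by
  rw [PhiFn_of_pos φ hx, ofReal_integral_eq_lintegral_ofReal (H.integrableOn_levyTail hx)
    (Eventually.of_forall (levyTail_nonneg φ)), H.setLIntegral_ofReal_levyTail hx]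

theorem PhiFn_sub {x y : ℝ} (hx : 0 < x) (hxy : x ≤ y) :
    PhiFn φ x - PhiFn φ y = ∫ t in x..y, levyTail φ t := by
  rw [PhiFn_of_pos φ hx, PhiFn_of_pos φ (hx.trans_le hxy),
    intervalIntegral.integral_Ioi_sub_Ioi (H.integrableOn_levyTail hx) hxy]

theorem antitoneOn_PhiFn : AntitoneOn (PhiFn φ) (Ioi 0) := fun x hx y _ hxy => by
  rw [← sub_nonneg, H.PhiFn_sub hx hxy]
  exact intervalIntegral.integral_nonneg hxy fun t _ => levyTail_nonneg φ t

theorem convexOn_PhiFn : ConvexOn ℝ (Ioi 0) (PhiFn φ) := by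
  refine convexOn_of_slope_mono_adjacent (convex_Ioi 0) fun {x y z} (hx : 0 < x) _ hxy hyz => ?_
  have hy : 0 < y := hx.trans hxy
  have hint {a b : ℝ} (ha : 0 < a) (hab : a ≤ b) : IntervalIntegrable (levyTail φ) volume a b :=
    (intervalIntegrable_iff_integrableOn_Ioc_of_le hab).2
      ((H.integrableOn_levyTail ha).mono_set Ioc_subset_Ioi_self)
  have hleft := intervalIntegral.integral_mono_on hxy.le intervalIntegrable_const (hint hx hxy.le)
    fun t ht => H.antitoneOn_levyTail (mem_Ioi.2 (hx.trans_le ht.1)) (mem_Ioi.2 hy) ht.2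
  have hright := intervalIntegral.integral_mono_on hyz.le (hint hy hyz.le) intervalIntegrable_const
    fun t ht => H.antitoneOn_levyTail (mem_Ioi.2 hy) (mem_Ioi.2 (hy.trans_le ht.1)) ht.1
  rw [← H.PhiFn_sub hx hxy.le, intervalIntegral.integral_const, smul_eq_mul] at hleft
  rw [← H.PhiFn_sub hy hyz.le, intervalIntegral.integral_const, smul_eq_mul] at hright
  calc (PhiFn φ y - PhiFn φ x) / (y - x) ≤ -levyTail φ y :=
        (div_le_iff₀ (sub_pos.2 hxy)).2 (by linarith)
    _ ≤ (PhiFn φ z - PhiFn φ y) / (z - y) := (le_div_iff₀ (sub_pos.2 hyz)).2 (by linarith)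

theorem integrableOn_PhiFn_Ioo_one : IntegrableOn (PhiFn φ) (Ioo 0 1) := by
  refine ⟨(measurable_PhiFn φ).aestronglyMeasurable, ?_⟩
  rw [hasFiniteIntegral_iff_ofReal (Eventually.of_forall (PhiFn_nonneg φ))]
  have hT : Measurable fun y => φ (Ioi y) := (antitone_measure_Ioi φ).measurable
  set ν := (volume.restrict (Ioi 0)).withDensity fun y => φ (Ioi y) with hν
  have hpos : ∀ᵐ y ∂ν, 0 ≤ y :=
    (withDensity_absolutelyContinuous _ _).ae_le
      ((ae_restrict_mem measurableSet_Ioi).mono fun y hy => le_of_lt hy)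
  calc ∫⁻ x in Ioo 0 1, ENNReal.ofReal (PhiFn φ x)
      = ∫⁻ x in Ioo 0 1, ν (Ioi x) := by
        refine setLIntegral_congr_fun measurableSet_Ioo fun x hx => ?_
        rw [H.ofReal_PhiFn hx.1, hν, withDensity_apply _ measurableSet_Ioi,
          Measure.restrict_restrict_of_subset (Ioi_subset_Ioi hx.1.le)]
    _ ≤ ∫⁻ y, ENNReal.ofReal (min y 1) ∂ν := setLIntegral_Ioo_measure_Ioi_le hpos zero_le_one
    _ = ∫⁻ y in Ioi 0, φ (Ioi y) * ENNReal.ofReal (min y 1) :=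
        lintegral_withDensity_eq_lintegral_mul _ hT (by fun_prop)
    _ < ⊤ := H.lintegral_tail_mul_min_lt_top

theorem isCausal_PhiFn : IsCausal 0 (PhiFn φ) :=
  .of_integrableOn_Ioc (PhiFn_nonneg φ) (fun _ => PhiFn_of_nonpos φ) (measurable_PhiFn φ)
    fun x => by
      refine (H.integrableOn_PhiFn_Ioo_one.union ((H.antitoneOn_PhiFn.mono fun y hy =>
        one_pos.trans_le hy.1).integrableOn_isCompact (isCompact_Icc (a := 1) (b := x)))).mono_set
          fun y hy => ?_
      rcases lt_or_ge y 1 with h | h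
      · exact Or.inl ⟨hy.1, h⟩
      · exact Or.inr ⟨h, hy.2⟩

theorem tendsto_PhiFn : Tendsto (PhiFn φ) (𝓝[>] 0) atTop := by
  have hcover : AECover (volume.restrict (Ioi 0)) (𝓝[>] (0 : ℝ)) fun δ => Ioi δ :=
    aecover_Ioi_of_Ioi (tendsto_id.mono_right nhdsWithin_le_nhds)
  have htop := hcover.lintegral_tendsto_of_countably_generated
    (antitone_measure_Ioi φ).measurable.aemeasurable
  rw [H.lintegral_tail_eq_top] at htop
  refine ENNReal.tendsto_ofReal_nhds_top.1 (htop.congr' ?_)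
  filter_upwards [self_mem_nhdsWithin] with δ (hδ : 0 < δ)
  rw [H.ofReal_PhiFn hδ, Measure.restrict_restrict_of_subset (Ioi_subset_Ioi hδ.le)]

theorem isConvexKernel_PhiFn : IsConvexKernel (PhiFn φ) where
  toIsCausal := H.isCausal_PhiFn
  antitoneOn := H.antitoneOn_PhiFn
  convexOn := H.convexOn_PhiFn
  tendsto_nhdsGT_zero := H.tendsto_PhiFn

end H0

/-! ### Laplace transforms -/

/-- The Laplace transform of the restriction of `f` to `(0, ∞)`. -/
def laplace (f : ℝ → ℝ) (ξ : ℂ) : ℂ := ∫ x in Ioi (0 : ℝ), Complex.exp (-ξ * x) * (f x : ℂ)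

theorem integrableAtFilter_cexp_mul_atTop {f : ℝ → ℝ} (hf : IsSubexponential f)
    (hmeas : Measurable f) {ξ : ℂ} (hξ : 0 < ξ.re) :
    IntegrableAtFilter (fun x : ℝ => Complex.exp (-ξ * x) * (f x : ℂ)) atTop := by
  have hmeas' : Measurable fun x : ℝ => Complex.exp (-ξ * x) * (f x : ℂ) := by fun_prop
  have hbound : (fun x : ℝ => Complex.exp (-ξ * x) * (f x : ℂ))
      =O[atTop] fun x => Real.exp (-(ξ.re / 2) * x) := by
    have hmul := ((hf _ (half_pos hξ)).isBigO_one ℝ).mul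
      (Asymptotics.isBigO_refl (fun x => Real.exp (-(ξ.re / 2) * x)) atTop)
    simp only [one_mul] at hmul
    refine (Asymptotics.isBigO_of_le _ fun x => le_of_eq ?_).trans hmul
    simp only [norm_mul, Complex.norm_exp, Complex.norm_real, Real.norm_eq_abs, Real.abs_exp]
    rw [mul_right_comm, ← Real.exp_add, Complex.re_mul_ofReal, Complex.neg_re]
    ring_nf
  exact hbound.integrableAtFilter hmeas'.aestronglyMeasurable.stronglyMeasurableAtFilter
    ⟨Ioi 0, Ioi_mem_atTop 0, exp_neg_integrableOn_Ioi 0 (half_pos hξ)⟩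

namespace IsCausal

variable {a : ℝ} {f g : ℝ → ℝ}

theorem locallyIntegrable (hf : IsCausal a f) : LocallyIntegrable f := fun x =>
  ⟨Iic (x + 1), Iic_mem_nhds (lt_add_one x), hf.integrableOn_Iic _⟩

theorem integrable_cexp_mul (hf : IsCausal a f) (hsub : IsSubexponential f) {ξ : ℂ}
    (hξ : 0 < ξ.re) : Integrable fun x : ℝ => Complex.exp (-ξ * x) * (f x : ℂ) := by
  refine integrable_iff_integrableAtFilter_atBot_atTop.2 ⟨⟨⟨Iic a, Iic_mem_atBot a, ?_⟩,
    integrableAtFilter_cexp_mul_atTop hsub hf.measurable hξ⟩,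
    locallyIntegrable_iff.2 fun k hk => ?_⟩
  · refine integrableOn_zero.congr_fun (fun x hx => ?_) measurableSet_Iic
    simp only [hf.eq_zero x hx, Complex.ofReal_zero, mul_zero]
  · exact IntegrableOn.continuousOn_mul (by fun_prop)
      (hf.locallyIntegrable.integrableOn_isCompact hk).ofReal hk

theorem laplace_eq_integral (hf : IsCausal 0 f) (ξ : ℂ) :
    laplace f ξ = ∫ x : ℝ, Complex.exp (-ξ * x) * (f x : ℂ) :=
  setIntegral_eq_integral_of_forall_compl_eq_zero fun x hx => by
    rw [hf.eq_zero x (not_lt.1 hx), Complex.ofReal_zero, mul_zero]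

theorem laplace_mul_laplace (hf : IsCausal 0 f) (hg : IsCausal 0 g) {ξ : ℂ}
    (hfξ : Integrable fun x : ℝ => Complex.exp (-ξ * x) * (f x : ℂ))
    (hgξ : Integrable fun x : ℝ => Complex.exp (-ξ * x) * (g x : ℂ)) :
    laplace f ξ * laplace g ξ = ∫ x : ℝ, Complex.exp (-ξ * x) * ((lconv f g x).toReal : ℂ) := by
  have hmul := integral_convolution (ContinuousLinearMap.mul ℝ ℂ) hgξ hfξ
  rw [ContinuousLinearMap.mul_apply'] at hmul
  rw [hf.laplace_eq_integral, hg.laplace_eq_integral, mul_comm, ← hmul]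
  refine integral_congr_ae (Eventually.of_forall fun x => ?_)
  have hexp (t : ℝ) : Complex.exp (-ξ * t) * (g t : ℂ)
      * (Complex.exp (-ξ * ((x - t : ℝ) : ℂ)) * (f (x - t) : ℂ))
      = Complex.exp (-ξ * x) * ((f (x - t) * g t : ℝ) : ℂ) := by
    rw [show -ξ * (x : ℂ) = -ξ * t + -ξ * ((x - t : ℝ) : ℂ) by push_cast; ring, Complex.exp_add]
    push_cast
    ring
  simp_rw [convolution_def, ContinuousLinearMap.mul_apply', hexp]
  rw [integral_const_mul, integral_complex_ofReal, hf.integral_mul_eq_toReal_lconv hg]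

end IsCausal

namespace IsSonineDual

variable {F w : ℝ → ℝ} (D : IsSonineDual F w)
include D

theorem laplace_mul_laplace (hF : IsCausal 0 F) (hsub : IsSubexponential F) {ξ : ℂ}
    (hξ : 0 < ξ.re) : laplace F ξ * laplace w ξ = 1 / ξ := by
  have hind (x : ℝ) : Complex.exp (-ξ * x) * ((lconv F w x).toReal : ℂ)
      = (Ioi (0 : ℝ)).indicator (fun x : ℝ => Complex.exp (-ξ * x)) x := by
    rw [D.lconv_eq]
    by_cases hx : 0 < x <;> simp [hx]
  rw [hF.laplace_mul_laplace D.toIsCausal (hF.integrable_cexp_mul hsub hξ)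
    (D.integrable_cexp_mul D.isSubexponential hξ)]
  simp_rw [hind]
  rw [integral_indicator measurableSet_Ioi, integral_exp_mul_complex_Ioi (by simpa using hξ)]
  simp

theorem laplace_eq (hF : IsCausal 0 F) (hsub : IsSubexponential F) {ξ : ℂ} (hξ : 0 < ξ.re) :
    laplace w ξ = ξ / (ξ ^ 2 * laplace F ξ) := by
  have hmul := D.laplace_mul_laplace hF hsub hξ
  have hξ0 : ξ ≠ 0 := by
    rintro rfl
    exact lt_irrefl _ hξ
  have hne : laplace F ξ ≠ 0 := left_ne_zero_of_mul (hmul.trans_ne (one_div_ne_zero hξ0))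
  rw [eq_div_iff (mul_ne_zero (pow_ne_zero 2 hξ0) hne), mul_left_comm, mul_comm (laplace w ξ), hmul]
  field_simp

end IsSonineDual

/-! ### Iterated primitives -/

theorem setLIntegral_Iic_pow_div_factorial (a : ℝ) (m : ℕ) (x : ℝ) :
    ∫⁻ z in Iic x, ENNReal.ofReal (if a < z then (z - a) ^ m / (m.factorial : ℝ) else 0)
      = ENNReal.ofReal (if a < x then (x - a) ^ (m + 1) / ((m + 1).factorial : ℝ) else 0) := by
  have hIoc : ∫⁻ z in Iic x, ENNReal.ofReal (if a < z then (z - a) ^ m / (m.factorial : ℝ) else 0)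
      = ∫⁻ z in Ioc a x, ENNReal.ofReal ((z - a) ^ m / (m.factorial : ℝ)) := by
    rw [← Ioi_inter_Iic, ← setLIntegral_indicator measurableSet_Ioi]
    refine lintegral_congr fun z => ?_
    by_cases hz : a < z <;> simp [hz]
  rw [hIoc]
  split_ifs with hx
  · have hcont : Continuous fun z : ℝ => (z - a) ^ m / (m.factorial : ℝ) := by fun_prop
    rw [← ofReal_integral_eq_lintegral_ofReal
      (hcont.integrableOn_Icc.mono_set Ioc_subset_Icc_self)
      ((ae_restrict_mem measurableSet_Ioc).mono fun z hz =>
        div_nonneg (pow_nonneg (sub_nonneg.2 hz.1.le) m) (Nat.cast_nonneg _)),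
      ← intervalIntegral.integral_of_le hx.le, intervalIntegral.integral_div,
      intervalIntegral.integral_comp_sub_right (fun z => z ^ m), sub_self, integral_pow,
      zero_pow m.succ_ne_zero, sub_zero, div_div, Nat.factorial_succ, Nat.cast_mul, Nat.cast_succ]
  · rw [Ioc_eq_empty hx, setLIntegral_empty, ENNReal.ofReal_zero]

namespace IsCausal

variable {a b : ℝ} {F k : ℝ → ℝ} (hk : IsCausal b k)
  (hone : ∀ x, lconv F k x = (Ioi a).indicator 1 x)
include hk hone

theorem lconv_kIter_of_lconv_eq_one (hF : Measurable F) (m : ℕ) (x : ℝ) :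
    lconv F (kIter k m) x
      = ENNReal.ofReal (if a < x then (x - a) ^ m / (m.factorial : ℝ) else 0) := by
  induction m generalizing x with
  | zero => by_cases hx : a < x <;> simp [kIter, hone, hx]
  | succ m ih =>
    rw [← setLIntegral_Iic_pow_div_factorial, ← lintegral_congr ih]
    exact lconv_primitive hF (hk.isCausal_kIter m) x

theorem integral_mul_kIter_of_lconv_eq_one (hF : IsCausal 0 F) (m : ℕ) (x : ℝ) :
    ∫ y, F (x - y) * kIter k m y
      = if a < x then (x - a) ^ m / (m.factorial : ℝ) else 0 := by
  rw [hF.integral_mul_eq_toReal_lconv (hk.isCausal_kIter m),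
    hk.lconv_kIter_of_lconv_eq_one hone hF.measurable, ENNReal.toReal_ofReal]
  split_ifs with hx
  · exact div_nonneg (pow_nonneg (sub_nonneg.2 hx.le) m) (Nat.cast_nonneg _)
  · exact le_rfl

end IsCausal

/-- existence of the scale kernel `k₋₁` and the convolution identities
`(Φ ⋆ kₙ⁺)(x) = (1+x)^{n+1}/(n+1)! · 1_{x > -1}` for all `n ≥ -1`. -/
theorem scale_kernel_exists (φ : Measure ℝ) (hH0 : H0 φ) :
    ∃ k : ℝ → ℝ,
      (∀ x : ℝ, x < -1 → k x = 0) ∧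
      (∀ x : ℝ, -1 ≤ x → 0 ≤ k x) ∧
      ContinuousOn k (Ioi (-1)) ∧
      LocallyIntegrableOn k (Ici (-1)) ∧
      (∀ ε : ℝ, 0 < ε →
        Tendsto (fun x : ℝ => Real.exp (-ε * x) * k x) atTop (nhds 0)) ∧
      (∀ ξ : ℂ, 0 < ξ.re →
        IntegrableOn (fun y : ℝ => Complex.exp (-ξ * (y : ℂ)) * (k (y - 1) : ℂ)) (Ioi 0) ∧
        (∫ y in Ioi (0 : ℝ), Complex.exp (-ξ * (y : ℂ)) * (k (y - 1) : ℂ)) =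
          ξ / psiFn φ ξ) ∧
      (∀ m : ℕ, ∀ x : ℝ,
        (∫ y : ℝ, PhiFn φ (x - y) * kIter k m y) =
          if -1 < x then (1 + x) ^ m / (Nat.factorial m : ℝ) else 0) := by
  have K := hH0.isConvexKernel_PhiFn
  obtain ⟨w, D⟩ := K.exists_isSonineDual
  have hk : IsCausal (-1) fun x => w (x + 1) := by simpa using D.comp_add_right 1
  have hone (x : ℝ) : lconv (PhiFn φ) (fun y => w (y + 1)) x = (Ioi (-1)).indicator 1 x := by
    simp [lconv_comp_add_right, D.lconv_eq, indicator, neg_lt_iff_pos_add]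
  refine ⟨fun x => w (x + 1), fun x hx => hk.eq_zero x hx.le, fun x _ => hk.nonneg x,
    D.continuousOn.comp (by fun_prop) fun x hx => neg_lt_iff_pos_add.1 (mem_Ioi.1 hx),
    hk.locallyIntegrable.locallyIntegrableOn _, D.isSubexponential.comp_add_right 1,
    fun ξ hξ => ?_, fun m x => ?_⟩
  · simp only [sub_add_cancel]
    exact ⟨(D.integrable_cexp_mul D.isSubexponential hξ).integrableOn,
      D.laplace_eq K.toIsCausal K.isSubexponential hξ⟩
  · rw [hk.integral_mul_kIter_of_lconv_eq_one hone K.toIsCausal, sub_neg_eq_add, add_comm x]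
end
end

section
/- Under (H0), assume in addition that the tail x ↦ φ((x,∞)) is completely monotone on (0,∞). Then there exists a function k₋₂, continuous on (−1,∞), such that y ↦ y² k₋₂(y−1) is integrable on (0,1) and of sub-exponential growth on [1,∞), and ∫_0^∞ e^{−ξy} y² k₋₂(y−1) dy = (d²/dξ²)(ξ²/ψ(ξ)) for every complex ξ with Re ξ > 0. -/
open MeasureTheory Set Filter Topology

noncomputable section

/-!
Put `S_τ(z) = ∫ (1 - z s)⁻¹ dτ(s)` for a finite measure `τ` on `[0, 1]`. As `Φ` is completely
monotone, its gamma-weighted integrals `∫ e^{-x} xⁿ / n! Φ(x) dx` form a Hausdorff moment sequence,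
say of `μ`, and expanding `e^{zx}` gives `ξ² / ψ(ξ) = 1 / S_μ(z)` at `ξ = 1 - z`.
The reciprocal of a Stieltjes transform is again, up to a polynomial, a Stieltjes transform:
`1 / S_μ(z) = α - β z - z² S_τ(z)`, where the moments of `τ` come from compressing multiplication
by `s` to the orthogonal complement of the constants in `L²(μ)`.
The affine part is lost on differentiating twice, and the remaining `-∫ 2 / (1 - z s)³ dτ(s)` is the
Laplace transform of `y² k₋₂(y - 1)` for `k₋₂(y - 1) = -∫ s⁻³ e^{-y (1/s - 1)} dτ(s)`.
-/

/-! ### The Hausdorff moment problem -/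

theorem exists_finiteMeasure_forall_integral_eq_of_tendsto {X ι κ : Type*} [TopologicalSpace X]
    [CompactSpace X] [T2Space X] [MeasurableSpace X] [BorelSpace X] {l : Filter κ} [l.NeBot]
    {ν : κ → FiniteMeasure X} {C : NNReal} (hν : ∀ N, (ν N).mass ≤ C) {f : ι → C(X, ℝ)}
    {a : ι → ℝ} (h : ∀ i, Tendsto (fun N => ∫ x, f i x ∂(ν N : Measure X)) l (𝓝 (a i))) :
    ∃ μ : FiniteMeasure X, ∀ i, ∫ x, f i x ∂(μ : Measure X) = a i := by
  obtain ⟨μ, -, hμ⟩ := (isCompact_setOfPred_finiteMeasure_le_of_compactSpace X C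
    ).ultrafilter_le_nhds ((Ultrafilter.of l).map ν)
      (le_principal_iff.2 (mem_map.2 (Eventually.of_forall hν)))
  refine ⟨μ, fun i => tendsto_nhds_unique ?_ ((h i).mono_left (Ultrafilter.of_le l))⟩
  exact FiniteMeasure.tendsto_iff_forall_integral_tendsto.1 hμ
    (BoundedContinuousFunction.mkOfCompact (f i))

/-- The array of iterated differences of a completely monotone sequence: `D 0` is the sequence
itself, and `D j n = ∑ i ≤ j, (-1) ^ i * j.choose i * D 0 (n + i)`. -/
structure IsCompletelyMonotoneArray (D : ℕ → ℕ → ℝ) : Prop where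
  nonneg (j n : ℕ) : 0 ≤ D j n
  eq_add (j n : ℕ) : D j n = D j (n + 1) + D (j + 1) n

namespace IsCompletelyMonotoneArray

open Finset.HasAntidiagonal (antidiagonal mem_antidiagonal)

/-- The discretization of the representing measure at scale `1 / N`: its density at `i / N` is the
value at the `i`-th Bernstein polynomial of degree `N` of the functional `s ^ n ↦ D 0 n`. -/
def bernsteinMeasure (D : ℕ → ℕ → ℝ) (N : ℕ) : Measure unitInterval :=
  ∑ p ∈ antidiagonal N, ENNReal.ofReal (N.choose p.1 * D p.2 p.1) •
    Measure.dirac (projIcc 0 1 zero_le_one (p.1 / N : ℝ))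

variable {D : ℕ → ℕ → ℝ} (hD : IsCompletelyMonotoneArray D)

include hD

theorem sum_choose_mul (N : ℕ) (m n : ℕ) :
    ∑ p ∈ antidiagonal N, (N.choose p.1 : ℝ) * D (m + p.2) (n + p.1) = D m n := by
  induction N generalizing m n with
  | zero => simp
  | succ N ih =>
    rw [Finset.sum_antidiagonal_choose_succ_mul (fun i j => D (m + j) (n + i)) N, hD.eq_add m n,
      ← ih m (n + 1), ← ih (m + 1) n, add_comm]
    congr 1 <;> refine Finset.sum_congr rfl fun p hp => ?_
    · rw [Nat.choose_symm_of_eq_add (mem_antidiagonal.1 hp).symm, add_right_comm n, add_assoc n]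
    · rw [add_right_comm m, add_assoc m]

theorem sum_choose_mul_descFactorial (r N n : ℕ) :
    ∑ p ∈ antidiagonal N, (N.choose p.1 : ℝ) * D p.2 (n + p.1) * p.1.descFactorial r =
      N.descFactorial r * D 0 (n + r) := by
  induction r generalizing N n with
  | zero => simpa using hD.sum_choose_mul N 0 n
  | succ r ih =>
    cases N with
    | zero => simp
    | succ N =>
      rw [Finset.Nat.sum_antidiagonal_succ]
      simp only [Nat.zero_descFactorial_succ, Nat.cast_zero, mul_zero, zero_add,
        Nat.succ_descFactorial_succ, Nat.cast_mul]
      rw [show n + (r + 1) = n + 1 + r by ring, mul_assoc, ← ih, Finset.mul_sum]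
      refine Finset.sum_congr rfl fun p _ => ?_
      have habsorb : ((N + 1 : ℕ) : ℝ) * N.choose p.1 = (N + 1).choose (p.1 + 1) * (p.1 + 1 : ℕ) :=
        mod_cast Nat.add_one_mul_choose_eq N p.1
      rw [show n + (p.1 + 1) = n + 1 + p.1 by ring]
      linear_combination -D p.2 (n + 1 + p.1) * p.1.descFactorial r * habsorb

theorem tendsto_sum_choose_mul_div_pow (m r : ℕ) :
    Tendsto (fun N : ℕ => ∑ p ∈ antidiagonal N, (N.choose p.1 : ℝ) * D p.2 p.1 *
      (p.1.descFactorial r / N ^ r * (p.1 / N) ^ m)) atTop (𝓝 (D 0 (r + m))) := by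
  -- Falling factorials have exact moments; the induction trades them for powers at cost `O(1 / N)`.
  induction m generalizing r with
  | zero =>
    have hlim : Tendsto (fun N : ℕ => (N.descFactorial r : ℝ) / N ^ r * D 0 r) atTop
        (𝓝 (1 * D 0 r)) := by
      refine Tendsto.mul_const _ ?_
      refine (Asymptotics.isEquivalent_iff_tendsto_one ?_).1 (isEquivalent_descFactorial r)
      filter_upwards [eventually_gt_atTop 0] with N hN
      positivity
    rw [one_mul] at hlim
    refine hlim.congr fun N => ?_
    have := hD.sum_choose_mul_descFactorial r N 0
    simp only [zero_add] at this
    rw [div_mul_eq_mul_div, ← this, Finset.sum_div]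
    simp only [pow_zero, mul_one, mul_div_assoc]
  | succ m ih =>
    have hlim := (ih (r + 1)).add ((tendsto_const_div_atTop_nhds_zero_nat (r : ℝ)).mul (ih r))
    rw [zero_mul, add_zero, show r + 1 + m = r + (m + 1) by ring] at hlim
    refine hlim.congr' ?_
    filter_upwards [eventually_gt_atTop 0] with N hN
    rw [Finset.mul_sum, ← Finset.sum_add_distrib]
    refine Finset.sum_congr rfl fun p _ => ?_
    have hsplit : (p.1.descFactorial (r + 1) : ℝ) = (p.1 - r) * p.1.descFactorial r := by
      rcases le_or_gt r p.1 with h | h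
      · rw [Nat.descFactorial_succ, Nat.cast_mul, Nat.cast_sub h]
      · simp [Nat.descFactorial_of_lt h]
    have hN0 : (N : ℝ) ≠ 0 := Nat.cast_ne_zero.2 hN.ne'
    rw [hsplit, pow_succ (p.1 / N : ℝ)]
    generalize ((p.1 : ℝ) / N) ^ m = q
    field_simp
    ring

theorem bernsteinMeasure_univ (N : ℕ) :
    bernsteinMeasure D N univ = ENNReal.ofReal (D 0 0) := by
  simp only [bernsteinMeasure, Measure.coe_finsetSum, Finset.sum_apply, Measure.smul_apply,
    measure_univ, smul_eq_mul, mul_one]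
  rw [← ENNReal.ofReal_sum_of_nonneg fun p _ => mul_nonneg (Nat.cast_nonneg _) (hD.nonneg _ _)]
  simpa using congrArg ENNReal.ofReal (hD.sum_choose_mul N 0 0)

theorem integral_bernsteinMeasure_pow (N m : ℕ) :
    ∫ s, (s : ℝ) ^ m ∂(bernsteinMeasure D N) =
      ∑ p ∈ antidiagonal N, (N.choose p.1 : ℝ) * D p.2 p.1 * (p.1 / N) ^ m := by
  rw [bernsteinMeasure, integral_finsetSum_measure fun p _ =>
    (Continuous.integrable_of_hasCompactSupport (by fun_prop)
      (HasCompactSupport.of_compactSpace _)).smul_measure ENNReal.ofReal_ne_top]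
  refine Finset.sum_congr rfl fun p hp => ?_
  have hmem : (p.1 / N : ℝ) ∈ Icc (0 : ℝ) 1 := by
    have hle : p.1 ≤ N := Nat.le.intro (mem_antidiagonal.1 hp)
    exact ⟨by positivity, div_le_one_of_le₀ (mod_cast hle) (Nat.cast_nonneg N)⟩
  rw [integral_smul_measure, integral_dirac, projIcc_of_mem zero_le_one hmem, smul_eq_mul,
    ENNReal.toReal_ofReal (mul_nonneg (Nat.cast_nonneg _) (hD.nonneg _ _))]

theorem exists_integral_pow_eq :
    ∃ μ : Measure unitInterval, IsFiniteMeasure μ ∧ ∀ n, ∫ s, (s : ℝ) ^ n ∂μ = D 0 n := by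
  have hfin (N : ℕ) : IsFiniteMeasure (bernsteinMeasure D N) :=
    ⟨by rw [hD.bernsteinMeasure_univ]; exact ENNReal.ofReal_lt_top⟩
  have hlim (n : ℕ) : Tendsto (fun N => ∫ s, (s : ℝ) ^ n ∂(bernsteinMeasure D N)) atTop
      (𝓝 (D 0 n)) := by
    simpa [hD.integral_bernsteinMeasure_pow] using hD.tendsto_sum_choose_mul_div_pow n 0
  obtain ⟨μ, hμ⟩ := exists_finiteMeasure_forall_integral_eq_of_tendsto
    (ν := fun N => ⟨bernsteinMeasure D N, hfin N⟩) (C := (ENNReal.ofReal (D 0 0)).toNNReal)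
    (fun N => (congrArg ENNReal.toNNReal (hD.bernsteinMeasure_univ N)).le)
    (f := fun n => ⟨fun s => (s : ℝ) ^ n, by fun_prop⟩) hlim
  exact ⟨μ, inferInstance, hμ⟩

end IsCompletelyMonotoneArray

/-! ### Compression to the orthogonal complement of the constants -/

theorem bilin_pow_mul_one_sub_pow_nonneg {V : Type*} [AddCommGroup V] [Module ℝ V]
    {B : V →ₗ[ℝ] V →ₗ[ℝ] ℝ} {T : Module.End ℝ V} (hsymm : ∀ x y, B (T x) y = B x (T y))
    (hT : ∀ x, 0 ≤ B x (T x)) (hT' : ∀ x, B x (T x) ≤ B x x) (n j : ℕ) (x : V) :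
    0 ≤ B x ((T ^ n * (1 - T) ^ j) x) := by
  have hcomm : Commute T (1 - T) := (Commute.one_right T).sub_right (Commute.refl T)
  have hsymm' (x y : V) : B ((1 - T) x) y = B x ((1 - T) y) := by simp [hsymm]
  have hconj {S R : Module.End ℝ V} (hS : ∀ x y, B (S x) y = B x (S y))
      (hR : ∀ x, 0 ≤ B x (R x)) (x : V) : 0 ≤ B x ((S * R * S) x) := by
    simpa [hS] using hR (S x)
  induction n using Nat.twoStepInduction generalizing x with
  | zero =>
    rw [pow_zero, one_mul]
    induction j using Nat.twoStepInduction generalizing x with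
    | zero => simpa using (hT x).trans (hT' x)
    | one => simpa using hT' x
    | more j ih _ => simpa only [pow_succ, ← pow_succ'] using hconj hsymm' ih x
  | one =>
    rw [pow_one]
    induction j using Nat.twoStepInduction generalizing x with
    | zero => simpa using hT x
    | one =>
      have hsplit : T * (1 - T) = T * (1 - T) * T + (1 - T) * T * (1 - T) := by noncomm_ring
      rw [pow_one, hsplit, LinearMap.add_apply, map_add]
      exact add_nonneg (hconj hsymm (by simpa using hT') x) (hconj hsymm' hT x)
    | more j ih _ =>
      have hpow : T * (1 - T) ^ (j + 2) = (1 - T) * (T * (1 - T) ^ j) * (1 - T) := by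
        rw [pow_succ, pow_succ', ← mul_assoc, ← mul_assoc, hcomm.eq, mul_assoc (1 - T)]
      exact hpow ▸ hconj hsymm' ih x
  | more n ih _ =>
    have hpow : T ^ (n + 2) * (1 - T) ^ j = T * (T ^ n * (1 - T) ^ j) * T := by
      rw [pow_succ, pow_succ', mul_assoc, (hcomm.pow_right j).eq]
      simp only [mul_assoc]
    exact hpow ▸ hconj hsymm ih x

section Compression

open Finset.HasAntidiagonal (antidiagonal)

variable {A : Type*} [CommRing A] [Algebra ℝ A] (E : A →ₗ[ℝ] ℝ) (x : A)

/-- The projection `f ↦ f - E f / E 1` onto the kernel of a functional `E`, along the constants. -/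
def centering : Module.End ℝ A := 1 - (E 1)⁻¹ • E.smulRight 1

/-- The compression to the kernel of `E` of multiplication by `x`. -/
def compression : Module.End ℝ A := centering E * LinearMap.mulLeft ℝ x * centering E

variable {E} (hE : E 1 ≠ 0)

theorem centering_apply (f : A) : centering E f = f - (E f / E 1) • 1 := by
  simp [centering, smul_smul, div_eq_inv_mul]

theorem map_centering_mul (f g : A) : E (centering E f * g) = E (f * g) - E f * E g / E 1 := by
  rw [centering_apply, sub_mul, map_sub, smul_mul_assoc, one_mul, map_smul, smul_eq_mul]
  ring

theorem map_centering_mul_eq_map_mul_centering (f g : A) :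
    E (centering E f * g) = E (f * centering E g) := by
  rw [mul_comm f, map_centering_mul, map_centering_mul, mul_comm g, mul_comm (E g)]

theorem map_compression_mul (f g : A) :
    E (compression E x f * g) = E (x * (centering E f * centering E g)) := by
  simp only [compression, Module.End.mul_apply, LinearMap.mulLeft_apply,
    map_centering_mul_eq_map_mul_centering, mul_assoc]

theorem map_compression_mul_comm (f g : A) :
    E (compression E x f * g) = E (f * compression E x g) := by
  rw [map_compression_mul, mul_comm f, map_compression_mul, mul_comm (centering E g)]

include hE

theorem centering_centering (f : A) : centering E (centering E f) = centering E f := by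
  have hker : E (centering E f) = 0 := by
    simpa [hE] using map_centering_mul (E := E) f 1
  rw [centering_apply (centering E f), hker, zero_div, zero_smul, sub_zero]

theorem centering_pow_succ (n : ℕ) :
    centering E (x ^ (n + 1)) = ∑ p ∈ antidiagonal n,
      E (x ^ p.1) • (compression E x ^ p.2) ((E 1)⁻¹ • centering E x) := by
  have hrec (n : ℕ) : centering E (x ^ (n + 1)) =
      E (x ^ n) • (E 1)⁻¹ • centering E x + compression E x (centering E (x ^ n)) := by
    simp only [compression, Module.End.mul_apply, centering_centering hE, LinearMap.mulLeft_apply]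
    rw [smul_smul, ← map_smul, ← map_add]
    congr 1
    rw [centering_apply, mul_sub, mul_smul_comm, mul_one, pow_succ', div_eq_mul_inv,
      add_sub_cancel]
  induction n with
  | zero =>
    have hone : centering E 1 = 0 := by simp [centering_apply, hE]
    simpa [hone] using hrec 0
  | succ n ih =>
    rw [hrec, ih, Finset.Nat.sum_antidiagonal_succ', map_sum]
    simp only [map_smul, pow_zero, Module.End.one_apply, pow_succ', Module.End.mul_apply]

theorem map_pow_add_two (n : ℕ) :
    E (x ^ (n + 2)) = E x / E 1 * E (x ^ (n + 1)) + E 1 * ∑ p ∈ antidiagonal n, E (x ^ p.1) *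
      E (((E 1)⁻¹ • centering E x) * (compression E x ^ p.2) ((E 1)⁻¹ • centering E x)) := by
  set b := (E 1)⁻¹ • centering E x with hb
  have hcov : E (x ^ (n + 2)) = E x / E 1 * E (x ^ (n + 1)) +
      E 1 * E (b * centering E (x ^ (n + 1))) := by
    rw [hb, smul_mul_assoc, map_smul, smul_eq_mul, mul_inv_cancel_left₀ hE,
      map_centering_mul_eq_map_mul_centering, centering_centering hE,
      ← map_centering_mul_eq_map_mul_centering, map_centering_mul, ← pow_succ']
    ring
  rw [hcov, centering_pow_succ x hE, Finset.mul_sum, map_sum]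
  simp only [mul_smul_comm, map_smul, smul_eq_mul, ← hb]

omit hE in
theorem isCompletelyMonotoneArray_compression (hE : 0 < E 1)
    (hx : ∀ f, 0 ≤ E (x * (f * f))) (hx' : ∀ f, E (x * (f * f)) ≤ E (f * f)) (b : A) :
    IsCompletelyMonotoneArray fun j n =>
      E (b * (compression E x ^ n * (1 - compression E x) ^ j) b) where
  nonneg j n := by
    refine bilin_pow_mul_one_sub_pow_nonneg (B := (LinearMap.mul ℝ A).compr₂ E)
      (map_compression_mul_comm x) (fun f => ?_) (fun f => ?_) n j b
    all_goals simp only [LinearMap.compr₂_apply, LinearMap.mul_apply', ← map_compression_mul_comm,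
      map_compression_mul]
    · exact hx _
    · calc E (x * (centering E f * centering E f)) ≤ E (centering E f * centering E f) := hx' _
        _ = E (f * f) - E f * E f / E 1 := by
          rw [← map_centering_mul_eq_map_mul_centering, centering_centering hE.ne',
            map_centering_mul]
        _ ≤ E (f * f) := sub_le_self _ (div_nonneg (mul_self_nonneg _) hE.le)
  eq_add j n := by
    rw [← map_add, ← mul_add, ← LinearMap.add_apply, pow_succ, pow_succ' (1 - _), mul_assoc,
      ← mul_add, ← add_mul, add_sub_cancel, one_mul]

end Compression

theorem exists_isCompletelyMonotoneArray_of_moments (μ : Measure unitInterval) [IsFiniteMeasure μ]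
    [NeZero μ] {c : ℕ → ℝ} (hc : ∀ n, c n = ∫ s, (s : ℝ) ^ n ∂μ) :
    ∃ D, IsCompletelyMonotoneArray D ∧ ∀ n, c (n + 2) = c 1 / c 0 * c (n + 1) +
      c 0 * ∑ p ∈ Finset.HasAntidiagonal.antidiagonal n, c p.1 * D 0 p.2 := by
  have hint (f : C(unitInterval, ℝ)) : Integrable f μ :=
    f.continuous.integrable_of_hasCompactSupport (HasCompactSupport.of_compactSpace _)
  let E : C(unitInterval, ℝ) →ₗ[ℝ] ℝ :=
    { toFun := fun f => ∫ s, f s ∂μ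
      map_add' := fun f g => integral_add (hint f) (hint g)
      map_smul' := fun a f => integral_const_mul a f }
  let X : C(unitInterval, ℝ) := ⟨fun s => (s : ℝ), continuous_subtype_val⟩
  have hEX (n : ℕ) : E (X ^ n) = c n := (hc n).symm
  have hE1 : E 1 = c 0 := hEX 0
  have hpos : 0 < E 1 := by simp [E]
  refine ⟨_, isCompletelyMonotoneArray_compression X hpos
    (fun f => integral_nonneg fun s => mul_nonneg s.2.1 (mul_self_nonneg _))
    (fun f => integral_mono (hint _) (hint _) fun s =>
      mul_le_of_le_one_left (mul_self_nonneg _) s.2.2) ((E 1)⁻¹ • centering E X), fun n => ?_⟩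
  have := map_pow_add_two X hpos.ne' n
  simp only [hEX, ← pow_one X ▸ hEX 1, hE1, pow_zero, mul_one] at this ⊢
  rw [this]

/-! ### Stieltjes transforms -/

theorem hasDerivAt_integral_of_continuousOn {𝕜 E α : Type*} [RCLike 𝕜] [NormedAddCommGroup E]
    [NormedSpace ℝ E] [NormedSpace 𝕜 E] [TopologicalSpace α] [CompactSpace α]
    [SecondCountableTopology α] [MeasurableSpace α] [BorelSpace α] {μ : Measure α}
    [IsFiniteMeasure μ] {F F' : 𝕜 → α → E} {U : Set 𝕜} (hU : IsOpen U)
    (hF : ∀ z ∈ U, Continuous (F z)) (hF' : ContinuousOn (fun p : 𝕜 × α => F' p.1 p.2) (U ×ˢ univ))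
    (hd : ∀ z ∈ U, ∀ s, HasDerivAt (F · s) (F' z s) z) {z : 𝕜} (hz : z ∈ U) :
    HasDerivAt (fun z => ∫ s, F z s ∂μ) (∫ s, F' z s ∂μ) z := by
  obtain ⟨r, hr, hrU⟩ := Metric.nhds_basis_closedBall.mem_iff.1 (hU.mem_nhds hz)
  obtain ⟨C, hC⟩ := ((isCompact_closedBall z r).prod (isCompact_univ (X := α))
    ).exists_bound_of_continuousOn (hF'.mono (prod_mono hrU subset_rfl))
  have hcont : Continuous (F' z) :=
    hF'.comp_continuous (f := fun s => (z, s)) (by fun_prop) fun s => ⟨hz, trivial⟩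
  refine (hasDerivAt_integral_of_dominated_loc_of_deriv_le (bound := fun _ => C)
    (Metric.closedBall_mem_nhds z hr) ?_ ?_ hcont.aestronglyMeasurable ?_ (integrable_const C) ?_).2
  · filter_upwards [hU.mem_nhds hz] with w hw using (hF w hw).aestronglyMeasurable
  · exact (hF z hz).integrable_of_hasCompactSupport (HasCompactSupport.of_compactSpace _)
  · exact .of_forall fun s w hw => hC (w, s) ⟨hw, trivial⟩
  · exact .of_forall fun s w hw => hd w (hrU hw) s

theorem isOpen_re_lt_one : IsOpen {z : ℂ | z.re < 1} :=
  isOpen_lt Complex.continuous_re continuous_const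

theorem min_one_le_re_one_sub_mul (z : ℂ) (s : unitInterval) :
    min 1 (1 - z.re) ≤ (1 - z * (s : ℝ)).re := by
  simp only [Complex.sub_re, Complex.one_re, Complex.re_mul_ofReal]
  rcases le_total 0 z.re with hz | hz
  · exact (min_le_right _ _).trans (sub_le_sub_left (mul_le_of_le_one_right hz s.2.2) 1)
  · exact (min_le_left _ _).trans (by linarith [mul_nonpos_of_nonpos_of_nonneg hz s.2.1])

theorem one_sub_mul_ne_zero {z : ℂ} (hz : z.re < 1) (s : unitInterval) :
    1 - z * (s : ℝ) ≠ 0 := fun h => by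
  have := min_one_le_re_one_sub_mul z s
  rw [h, Complex.zero_re] at this
  exact this.not_gt (lt_min one_pos (sub_pos.2 hz))

/-- The Stieltjes transform `∫ (1 - z s)⁻¹ dμ(s)` of a measure on `[0, 1]` for `m = 0`, and its
`m`-th derivative divided by `m!` in general. -/
def stieltjesTransform (μ : Measure unitInterval) (m : ℕ) (z : ℂ) : ℂ :=
  ∫ s : unitInterval, ((s : ℝ) : ℂ) ^ m / (1 - z * (s : ℝ)) ^ (m + 1) ∂μ

theorem stieltjesTransform_ofReal_neg (μ : Measure unitInterval) (u : ℝ) :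
    stieltjesTransform μ 0 (-u : ℝ) = ((∫ s : unitInterval, (1 + u * s)⁻¹ ∂μ : ℝ) : ℂ) := by
  rw [stieltjesTransform, ← integral_complex_ofReal]
  simp

section

variable {μ : Measure unitInterval} [IsFiniteMeasure μ] {z : ℂ}

theorem continuous_pow_div_one_sub_mul_pow (hz : z.re < 1) (m n : ℕ) :
    Continuous fun s : unitInterval => ((s : ℝ) : ℂ) ^ m / (1 - z * (s : ℝ)) ^ n :=
  Continuous.div (by fun_prop) (by fun_prop) fun s => pow_ne_zero n (one_sub_mul_ne_zero hz s)

theorem integrable_pow_div_one_sub_mul_pow (hz : z.re < 1) (m n : ℕ) :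
    Integrable (fun s : unitInterval => ((s : ℝ) : ℂ) ^ m / (1 - z * (s : ℝ)) ^ n) μ :=
  (continuous_pow_div_one_sub_mul_pow hz m n).integrable_of_hasCompactSupport
    (HasCompactSupport.of_compactSpace _)

theorem hasDerivAt_stieltjesTransform (m : ℕ) (hz : z.re < 1) :
    HasDerivAt (stieltjesTransform μ m) ((m + 1) * stieltjesTransform μ (m + 1) z) z := by
  rw [stieltjesTransform, ← integral_const_mul]
  refine hasDerivAt_integral_of_continuousOn isOpen_re_lt_one
    (fun w hw => continuous_pow_div_one_sub_mul_pow hw m (m + 1))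
    (F' := fun w (s : unitInterval) =>
      (m + 1) * (((s : ℝ) : ℂ) ^ (m + 1) / (1 - w * (s : ℝ)) ^ (m + 1 + 1)))
    (.mul (by fun_prop) (.div (by fun_prop) (by fun_prop)
      fun p hp => pow_ne_zero _ (one_sub_mul_ne_zero hp.1 p.2))) (fun w hw s => ?_) hz
  have hne := one_sub_mul_ne_zero hw s
  have hlin : HasDerivAt (fun w : ℂ => 1 - w * (s : ℝ)) (-(s : ℝ)) w := by
    simpa using ((hasDerivAt_id w).mul_const ((s : ℝ) : ℂ)).const_sub 1
  refine ((hasDerivAt_const w _).div (hlin.fun_pow (m + 1)) (pow_ne_zero _ hne)).congr_deriv ?_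
  push_cast
  field_simp
  simp only [zero_mul, zero_sub, neg_neg]
  ring

theorem differentiableOn_stieltjesTransform (m : ℕ) :
    DifferentiableOn ℂ (stieltjesTransform μ m) {z | z.re < 1} := fun _ hz =>
  (hasDerivAt_stieltjesTransform m hz).differentiableAt.differentiableWithinAt

theorem hasDerivAt_sq_mul_stieltjesTransform (hz : z.re < 1) :
    HasDerivAt (fun z => z ^ 2 * stieltjesTransform μ 0 z)
      (2 * z * stieltjesTransform μ 0 z + z ^ 2 * stieltjesTransform μ 1 z) z := by
  simpa using (hasDerivAt_pow 2 z).fun_mul (hasDerivAt_stieltjesTransform (μ := μ) 0 hz)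

theorem iteratedDeriv_two_sq_mul_stieltjesTransform (hz : z.re < 1) :
    iteratedDeriv 2 (fun z => z ^ 2 * stieltjesTransform μ 0 z) z =
      ∫ s : unitInterval, 2 / (1 - z * (s : ℝ)) ^ 3 ∂μ := by
  have hderiv : deriv (fun z => z ^ 2 * stieltjesTransform μ 0 z) =ᶠ[𝓝 z] fun z =>
      2 * z * stieltjesTransform μ 0 z + z ^ 2 * stieltjesTransform μ 1 z := by
    filter_upwards [isOpen_re_lt_one.mem_nhds hz] with w hw
    exact (hasDerivAt_sq_mul_stieltjesTransform hw).deriv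
  have hderiv2 := (((hasDerivAt_id z).const_mul 2).mul
    (hasDerivAt_stieltjesTransform (μ := μ) 0 hz)).add
      ((hasDerivAt_pow 2 z).mul (hasDerivAt_stieltjesTransform (μ := μ) 1 hz))
  rw [iteratedDeriv_succ, iteratedDeriv_one, hderiv.deriv_eq]
  refine hderiv2.deriv.trans ?_
  have hint (m n : ℕ) (a : ℂ) : Integrable
      (fun s : unitInterval => a * (((s : ℝ) : ℂ) ^ m / (1 - z * (s : ℝ)) ^ n)) μ :=
    (integrable_pow_div_one_sub_mul_pow hz m n).const_mul a
  calc _ = 2 * stieltjesTransform μ 0 z + 4 * z * stieltjesTransform μ 1 z +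
        2 * z ^ 2 * stieltjesTransform μ 2 z := by
        simp only [id]; push_cast; ring
    _ = _ := by
        simp only [stieltjesTransform, ← integral_const_mul]
        rw [← integral_add (hint _ _ _) (hint _ _ _), ← integral_add
          ((hint _ _ _).fun_add (hint _ _ _)) (hint _ _ _)]
        refine integral_congr_ae (.of_forall fun s => ?_)
        have hne := one_sub_mul_ne_zero hz s
        simp only
        field_simp
        ring

theorem hasSum_stieltjesTransform (hz : ‖z‖ < 1) :
    HasSum (fun n => z ^ n * ((∫ s, (s : ℝ) ^ n ∂μ : ℝ) : ℂ)) (stieltjesTransform μ 0 z) := by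
  have hle (s : unitInterval) : ‖z * (s : ℝ)‖ ≤ ‖z‖ := by
    rw [norm_mul, Complex.norm_real, Real.norm_of_nonneg s.2.1]
    exact mul_le_of_le_one_right (norm_nonneg z) s.2.2
  have hsum := hasSum_integral_of_dominated_convergence (μ := μ)
    (F := fun n (s : unitInterval) => (z * (s : ℝ)) ^ n)
    (f := fun s => ((s : ℝ) : ℂ) ^ 0 / (1 - z * (s : ℝ)) ^ (0 + 1)) (fun n _ => ‖z‖ ^ n)
    (fun n => (by fun_prop : Continuous _).aestronglyMeasurable)
    (fun n => .of_forall fun s => norm_pow (z * (s : ℝ)) n ▸ by gcongr; exact hle s)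
    (.of_forall fun _ => summable_geometric_of_lt_one (norm_nonneg z) hz)
    (integrable_const _)
    (.of_forall fun s => by
      simpa using hasSum_geometric_of_norm_lt_one ((hle s).trans_lt hz))
  refine hsum.congr_fun fun n => ?_
  rw [← integral_complex_ofReal, ← integral_const_mul]
  simp only [mul_pow, Complex.ofReal_pow]

end

theorem hasSum_mul_antidiagonal {𝕜 : Type*} [NormedField 𝕜] [CompleteSpace 𝕜] {c d : ℕ → 𝕜}
    {z A J : 𝕜} (hc : HasSum (fun n => z ^ n * c n) A) (hcn : Summable fun n => ‖z ^ n * c n‖)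
    (hd : HasSum (fun n => z ^ n * d n) J) (hdn : Summable fun n => ‖z ^ n * d n‖) :
    HasSum (fun n => z ^ n * ∑ p ∈ Finset.HasAntidiagonal.antidiagonal n, c p.1 * d p.2)
      (A * J) := by
  rw [← hc.tsum_eq, ← hd.tsum_eq,
    tsum_mul_tsum_eq_tsum_sum_antidiagonal_of_summable_norm hcn hdn]
  refine (summable_norm_sum_mul_antidiagonal_of_summable_norm hcn hdn).of_norm.hasSum.congr_fun
    fun n => ?_
  rw [Finset.mul_sum]
  refine Finset.sum_congr rfl fun p hp => ?_
  rw [← Finset.HasAntidiagonal.mem_antidiagonal.1 hp, pow_add]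
  ring

theorem mul_eq_of_hasSum_of_renewal {𝕜 : Type*} [NormedField 𝕜] [CompleteSpace 𝕜] {c d : ℕ → 𝕜}
    {z A J a b : 𝕜} (hc : HasSum (fun n => z ^ n * c n) A) (hcn : Summable fun n => ‖z ^ n * c n‖)
    (hd : HasSum (fun n => z ^ n * d n) J) (hdn : Summable fun n => ‖z ^ n * d n‖)
    (hone : c 1 = a * c 0)
    (hrec : ∀ n, c (n + 2) = a * c (n + 1) +
      b * ∑ p ∈ Finset.HasAntidiagonal.antidiagonal n, c p.1 * d p.2) :
    A * (1 - a * z - b * z ^ 2 * J) = c 0 := by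
  have htail1 : HasSum (fun n => z ^ (n + 1) * c (n + 1)) (A - c 0) := by
    simpa using (hasSum_nat_add_iff' (f := fun n => z ^ n * c n) 1).2 hc
  have htail2 : HasSum (fun n => z ^ (n + 2) * c (n + 2)) (A - (c 0 + z * c 1)) := by
    simpa [Finset.sum_range_succ] using (hasSum_nat_add_iff' (f := fun n => z ^ n * c n) 2).2 hc
  have hrhs := (htail1.mul_left (a * z)).add
    ((hasSum_mul_antidiagonal hc hcn hd hdn).mul_left (b * z ^ 2))
  have heq := htail2.unique (hrhs.congr_fun fun n => by rw [hrec]; ring)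
  linear_combination heq + z * hone

theorem stieltjesTransform_mul_eq_one_of_norm_lt_one {μ τ : Measure unitInterval}
    [IsFiniteMeasure μ] [IsFiniteMeasure τ] {c : ℕ → ℝ} (hc0 : c 0 ≠ 0)
    (hμ : ∀ n, ∫ s, (s : ℝ) ^ n ∂μ = c n)
    (hrec : ∀ n, c (n + 2) = c 1 / c 0 * c (n + 1) +
      c 0 * ∑ p ∈ Finset.HasAntidiagonal.antidiagonal n, c p.1 * ∫ s, (s : ℝ) ^ p.2 ∂τ)
    {z : ℂ} (hz : ‖z‖ < 1) :
    stieltjesTransform μ 0 z * (((1 / c 0 : ℝ) : ℂ) - ((c 1 / c 0 ^ 2 : ℝ) : ℂ) * z -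
      z ^ 2 * stieltjesTransform τ 0 z) = 1 := by
  have hA := hasSum_stieltjesTransform (μ := μ) hz
  have hJ := hasSum_stieltjesTransform (μ := τ) hz
  simp only [hμ] at hA
  have hc0' : (c 0 : ℂ) ≠ 0 := Complex.ofReal_ne_zero.2 hc0
  have key := mul_eq_of_hasSum_of_renewal (a := (c 1 : ℂ) / c 0) (b := (c 0 : ℂ))
    hA hA.summable.norm hJ hJ.summable.norm (div_mul_cancel₀ _ hc0').symm
    (fun n => by rw [hrec]; push_cast; rfl)
  refine mul_right_cancel₀ hc0' (Eq.trans ?_ (key.trans (one_mul _).symm))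
  push_cast
  field_simp

theorem apply_singleton_zero_eq_zero_of_stieltjesTransform_mul_eq_one {μ τ : Measure unitInterval}
    [IsFiniteMeasure τ] {α β : ℝ} (h : ∀ u : ℝ, 0 < u →
      stieltjesTransform μ 0 (-u : ℝ) *
        (α - β * (-u : ℝ) - (-u : ℝ) ^ 2 * stieltjesTransform τ 0 (-u : ℝ)) = 1) :
    τ {0} = 0 := by
  -- `S_μ(-u) > 0` makes the second factor positive, so `u² τ{0} ≤ u² S_τ(-u) < α + β u`.
  have hle (u : ℝ) (hu : 0 < u) : τ.real {0} ≤ α / u ^ 2 + β / u := by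
    have hpos (s : unitInterval) : 0 < 1 + u * s := by have := s.2.1; positivity
    have hfac : 0 < α + β * u - u ^ 2 * ∫ s : unitInterval, (1 + u * s)⁻¹ ∂τ := by
      have heq := h u hu
      rw [stieltjesTransform_ofReal_neg, stieltjesTransform_ofReal_neg] at heq
      norm_cast at heq
      rw [mul_neg, sub_neg_eq_add, neg_sq] at heq
      exact pos_of_mul_pos_right (heq.symm ▸ one_pos)
        (integral_nonneg fun s => (inv_pos.2 (hpos s)).le)
    have hatom : τ.real {0} ≤ ∫ s : unitInterval, (1 + u * s)⁻¹ ∂τ := by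
      rw [← integral_indicator_one (measurableSet_singleton (0 : unitInterval))]
      refine integral_mono ((integrable_const 1).indicator (measurableSet_singleton _)) ?_
        (indicator_le' (by simp) fun s _ => (inv_pos.2 (hpos s)).le)
      exact (Continuous.inv₀ (by fun_prop) fun s => (hpos s).ne').integrable_of_hasCompactSupport
        (HasCompactSupport.of_compactSpace _)
    refine hatom.trans (le_of_mul_le_mul_left ?_ (pow_pos hu 2))
    calc _ ≤ α + β * u := (sub_pos.1 hfac).le
      _ = _ := by field_simp
  have hlim : Tendsto (fun u : ℝ => α / u ^ 2 + β / u) atTop (𝓝 0) := by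
    simpa using (tendsto_const_nhds.div_atTop (tendsto_pow_atTop (α := ℝ) two_ne_zero)).add
      (tendsto_const_nhds.div_atTop tendsto_id)
  refine (measureReal_eq_zero_iff (measure_ne_top τ _)).1 (le_antisymm ?_ measureReal_nonneg)
  exact ge_of_tendsto hlim (eventually_gt_atTop 0 |>.mono hle)

theorem exists_stieltjesTransform_mul_eq_one (μ : Measure unitInterval) [IsFiniteMeasure μ]
    [NeZero μ] : ∃ (α β : ℝ) (τ : Measure unitInterval), IsFiniteMeasure τ ∧ τ {0} = 0 ∧
      ∀ z : ℂ, z.re < 1 →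
        stieltjesTransform μ 0 z * (α - β * z - z ^ 2 * stieltjesTransform τ 0 z) = 1 := by
  obtain ⟨D, hD, hrec⟩ := exists_isCompletelyMonotoneArray_of_moments μ fun n => rfl
  obtain ⟨τ, hτ, hmoment⟩ := hD.exists_integral_pow_eq
  simp only [← hmoment] at hrec
  have hne : ∫ s : unitInterval, (s : ℝ) ^ 0 ∂μ ≠ 0 := by
    simpa [measureReal_eq_zero_iff] using NeZero.ne μ
  set α : ℝ := 1 / ∫ s : unitInterval, (s : ℝ) ^ 0 ∂μ
  set β : ℝ := (∫ s : unitInterval, (s : ℝ) ^ 1 ∂μ) / (∫ s : unitInterval, (s : ℝ) ^ 0 ∂μ) ^ 2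
  have hdiff : DifferentiableOn ℂ (fun z => stieltjesTransform μ 0 z *
      (α - β * z - z ^ 2 * stieltjesTransform τ 0 z)) {z | z.re < 1} :=
    (differentiableOn_stieltjesTransform 0).mul
      (((differentiableOn_const _).sub (differentiableOn_id.const_mul _)).sub
        ((differentiableOn_id.pow 2).mul (differentiableOn_stieltjesTransform 0)))
  have heq : ∀ z : ℂ, z.re < 1 →
      stieltjesTransform μ 0 z * (α - β * z - z ^ 2 * stieltjesTransform τ 0 z) = 1 := by
    refine (hdiff.analyticOnNhd isOpen_re_lt_one).eqOn_of_preconnected_of_eventuallyEq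
      (analyticOnNhd_const (v := (1 : ℂ))) (convex_halfSpace_re_lt 1).isPreconnected
      (z₀ := 0) (by simp) ?_
    filter_upwards [Metric.ball_mem_nhds (0 : ℂ) one_pos] with z hz
    exact stieltjesTransform_mul_eq_one_of_norm_lt_one
      (c := fun n => ∫ s : unitInterval, (s : ℝ) ^ n ∂μ) hne (fun _ => rfl) hrec
      (mem_ball_zero_iff.1 hz)
  refine ⟨α, β, τ, hτ, ?_, heq⟩
  exact apply_singleton_zero_eq_zero_of_stieltjesTransform_mul_eq_one fun u hu =>
    heq _ (by simp; linarith)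

/-! ### Gamma-weighted integrals and Laplace transforms -/

/-- The density `e⁻ˣ xⁿ / n!` of the Gamma distribution of shape `n + 1` and rate `1`. Integrals
against it are, up to sign, the Taylor coefficients of the Laplace transform at `1`. -/
def gammaWeight (n : ℕ) (x : ℝ) : ℝ := Real.exp (-x) * x ^ n / n.factorial

theorem gammaWeight_nonneg (n : ℕ) {x : ℝ} (hx : 0 ≤ x) : 0 ≤ gammaWeight n x := by
  unfold gammaWeight; positivity

theorem gammaWeight_zero (x : ℝ) : gammaWeight 0 x = Real.exp (-x) := by
  simp [gammaWeight]

theorem continuous_gammaWeight (n : ℕ) : Continuous (gammaWeight n) := by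
  unfold gammaWeight; fun_prop

theorem hasDerivAt_gammaWeight_succ (n : ℕ) (x : ℝ) :
    HasDerivAt (gammaWeight (n + 1)) (gammaWeight n x - gammaWeight (n + 1) x) x := by
  have hexp : HasDerivAt (fun x : ℝ => Real.exp (-x)) (-Real.exp (-x)) x := by
    simpa using (hasDerivAt_neg x).exp
  refine ((hexp.mul (hasDerivAt_pow (n + 1) x)).div_const _).congr_deriv ?_
  simp only [gammaWeight, Nat.factorial_succ, add_tsub_cancel_right]
  push_cast
  field_simp
  ring

theorem setLIntegral_gammaWeight_eq_add (n : ℕ) {y : ℝ} (hy : 0 < y) :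
    ∫⁻ x in Ioo 0 y, ENNReal.ofReal (gammaWeight n x) =
      (∫⁻ x in Ioo 0 y, ENNReal.ofReal (gammaWeight (n + 1) x)) +
        ENNReal.ofReal (gammaWeight (n + 1) y) := by
  have hlint (m : ℕ) : ∫⁻ x in Ioo 0 y, ENNReal.ofReal (gammaWeight m x) =
      ENNReal.ofReal (∫ x in (0 : ℝ)..y, gammaWeight m x) := by
    rw [intervalIntegral.integral_of_le hy.le, integral_Ioc_eq_integral_Ioo,
      ofReal_integral_eq_lintegral_ofReal]
    · exact (continuous_gammaWeight m).integrableOn_Icc.mono_set Ioo_subset_Icc_self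
    · exact (ae_restrict_mem measurableSet_Ioo).mono fun x hx => gammaWeight_nonneg m hx.1.le
  have hint (m : ℕ) : IntervalIntegrable (gammaWeight m) volume 0 y :=
    (continuous_gammaWeight m).intervalIntegrable 0 y
  have hFTC := intervalIntegral.integral_eq_sub_of_hasDerivAt
    (fun x _ => hasDerivAt_gammaWeight_succ n x) ((hint n).sub (hint (n + 1)))
  rw [intervalIntegral.integral_sub (hint n) (hint (n + 1)),
    show gammaWeight (n + 1) 0 = 0 by simp [gammaWeight], sub_zero, sub_eq_iff_eq_add'] at hFTC
  rw [hlint, hlint, hFTC, ENNReal.ofReal_add _ (gammaWeight_nonneg _ hy.le)]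
  exact intervalIntegral.integral_nonneg hy.le fun x hx => gammaWeight_nonneg _ hx.1

theorem lintegral_gammaWeight (n : ℕ) :
    ∫⁻ x in Ioi 0, ENNReal.ofReal (gammaWeight n x) = 1 := by
  have heq : gammaWeight n = fun x : ℝ =>
      Real.exp (-x) * x ^ ((n : ℝ) + 1 - 1) / n.factorial := by
    ext x; simp [gammaWeight]
  rw [← ofReal_integral_eq_lintegral_ofReal]
  · rw [heq, integral_div, ← Real.Gamma_eq_integral (by positivity), Real.Gamma_nat_eq_factorial,
      div_self (by positivity), ENNReal.ofReal_one]
  · exact heq ▸ (Real.GammaIntegral_convergent (s := n + 1) (by positivity)).div_const _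
  · exact (ae_restrict_mem measurableSet_Ioi).mono fun x hx => gammaWeight_nonneg n (le_of_lt hx)

/-- The Laplace transform `∫₀^∞ e^{-ξx} f(x) dx` at a complex argument. -/
def laplaceTransform (f : ℝ → ℝ) (ξ : ℂ) : ℂ :=
  ∫ x in Ioi (0 : ℝ), Complex.exp (-ξ * (x : ℂ)) * (f x : ℂ)

theorem aemeasurable_of_integrableOn_exp_mul {f : ℝ → ℝ} {s : Set ℝ} {r : ℝ}
    (h : IntegrableOn (fun x => Real.exp (r * x) * f x) s) :
    AEMeasurable f (volume.restrict s) := by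
  have hexp : AEMeasurable (fun x => Real.exp (-(r * x))) (volume.restrict s) := by fun_prop
  refine (hexp.mul h.aemeasurable).congr (.of_forall fun x => ?_)
  simp [← mul_assoc, ← Real.exp_add]

theorem differentiableOn_laplaceTransform {f : ℝ → ℝ} (hf : ∀ x, 0 < x → 0 ≤ f x)
    (hint : ∀ r : ℝ, 0 < r → IntegrableOn (fun x => Real.exp (-r * x) * f x) (Ioi 0)) :
    DifferentiableOn ℂ (laplaceTransform f) {ξ | 0 < ξ.re} := by
  have hmeas : AEMeasurable (fun x => ENNReal.ofReal (f x)) (volume.restrict (Ioi 0)) :=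
    (aemeasurable_of_integrableOn_exp_mul (hint 1 one_pos)).ennreal_ofReal
  have hfin : ∀ᵐ x ∂(volume.restrict (Ioi (0 : ℝ))), ENNReal.ofReal (f x) < ⊤ :=
    .of_forall fun x => ENNReal.ofReal_lt_top
  set ν := (volume.restrict (Ioi (0 : ℝ))).withDensity fun x => ENNReal.ofReal (f x)
  have hsub : Ioi (0 : ℝ) ⊆ ProbabilityTheory.integrableExpSet (fun x : ℝ => -x) ν := by
    intro r hr
    refine (integrable_withDensity_iff_integrable_smul₀' hmeas hfin).2 ((hint r hr).congr ?_)
    filter_upwards [ae_restrict_mem measurableSet_Ioi] with x hx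
    rw [ENNReal.toReal_ofReal (hf x hx), smul_eq_mul, mul_comm, mul_neg, neg_mul]
  have heq : laplaceTransform f = ProbabilityTheory.complexMGF (fun x : ℝ => -x) ν := by
    ext ξ
    rw [ProbabilityTheory.complexMGF, integral_withDensity_eq_integral_toReal_smul₀ hmeas hfin]
    refine setIntegral_congr_fun measurableSet_Ioi fun x hx => ?_
    simp only [ENNReal.toReal_ofReal (hf x hx), Complex.real_smul, Complex.ofReal_neg]
    rw [mul_comm, mul_neg, neg_mul]
  exact heq ▸ ProbabilityTheory.differentiableOn_complexMGF.mono fun ξ hξ =>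
    interior_maximal hsub isOpen_Ioi hξ

theorem hasSum_pow_mul_gammaWeight (z : ℂ) (x : ℝ) :
    HasSum (fun n => z ^ n * gammaWeight n x) (Complex.exp (-(1 - z) * x)) := by
  have h := (NormedSpace.expSeries_div_hasSum_exp (z * (x : ℂ))).mul_left (Complex.exp (-(x : ℂ)))
  rw [← Complex.exp_eq_exp_ℂ, ← Complex.exp_add,
    show -(x : ℂ) + z * x = -(1 - z) * x by ring] at h
  refine h.congr_fun fun n => ?_
  simp only [gammaWeight, mul_pow]
  push_cast
  ring

theorem hasSum_laplaceTransform_one_sub {f : ℝ → ℝ} (hf : ∀ x, 0 < x → 0 ≤ f x)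
    (hint : ∀ r : ℝ, 0 < r → IntegrableOn (fun x => Real.exp (-r * x) * f x) (Ioi 0))
    {z : ℂ} (hz : ‖z‖ < 1) :
    HasSum (fun n => z ^ n * ((∫ x in Ioi 0, gammaWeight n x * f x : ℝ) : ℂ))
      (laplaceTransform f (1 - z)) := by
  have hbound (x : ℝ) : HasSum (fun n => ‖z‖ ^ n * gammaWeight n x * f x)
      (Real.exp (-(1 - ‖z‖) * x) * f x) :=
    HasSum.mul_right _ (by exact_mod_cast hasSum_pow_mul_gammaWeight ‖z‖ x)
  have hmeas := aemeasurable_of_integrableOn_exp_mul (hint 1 one_pos)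
  have hsum := hasSum_integral_of_dominated_convergence (μ := volume.restrict (Ioi 0))
    (F := fun n x => z ^ n * gammaWeight n x * f x)
    (f := fun x => Complex.exp (-(1 - z) * x) * f x)
    (fun n x => ‖z‖ ^ n * gammaWeight n x * f x)
    (fun n => ((Complex.measurable_ofReal.comp
      (continuous_gammaWeight n).measurable).const_mul _ |>.aemeasurable.mul
        hmeas.complex_ofReal).aestronglyMeasurable)
    (fun n => ?_) (.of_forall fun x => (hbound x).summable)
    (by simpa only [(hbound _).tsum_eq, IntegrableOn] using hint _ (sub_pos.2 hz))
    (.of_forall fun x => (hasSum_pow_mul_gammaWeight z x).mul_right _)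
  · refine hsum.congr_fun fun n => ?_
    rw [← integral_complex_ofReal, ← integral_const_mul]
    simp only [mul_assoc, Complex.ofReal_mul]
  · filter_upwards [ae_restrict_mem measurableSet_Ioi] with x hx
    simp only [norm_mul, norm_pow, Complex.norm_real, Real.norm_of_nonneg (hf x hx),
      Real.norm_of_nonneg (gammaWeight_nonneg n (le_of_lt hx)), le_refl]

/-! ### Completely monotone functions -/

/-- A function is completely monotone on `(0, ∞)` if it is smooth there and its derivatives
alternate in sign. As for Mathlib's `AbsolutelyMonotoneOn`, the derivatives are given by a witness:
`g n` stands for `(-1)ⁿ f⁽ⁿ⁾`. -/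
def CompletelyMonotone (f : ℝ → ℝ) : Prop :=
  ∃ g : ℕ → ℝ → ℝ, g 0 = f ∧
    ∀ n x, 0 < x → 0 ≤ g n x ∧ HasDerivAt (g n) (-g (n + 1) x) x

theorem completelyMonotone_of_contDiffOn {f : ℝ → ℝ} (hf : ContDiffOn ℝ (⊤ : ℕ∞) f (Ioi 0))
    (hsign : ∀ n x, 0 < x → 0 ≤ (-1 : ℝ) ^ n * iteratedDerivWithin n f (Ioi 0) x) :
    CompletelyMonotone f := by
  refine ⟨fun n x => (-1 : ℝ) ^ n * iteratedDerivWithin n f (Ioi 0) x, by simp, fun n x hx =>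
    ⟨hsign n x hx, ?_⟩⟩
  have hdiff := hf.differentiableOn_iteratedDerivWithin (m := n)
    (by exact_mod_cast ENat.natCast_lt_top n) (uniqueDiffOn_Ioi 0) x hx
  have hderiv := (hdiff.hasDerivWithinAt.hasDerivAt (Ioi_mem_nhds hx)).const_mul ((-1 : ℝ) ^ n)
  refine hderiv.congr_deriv ?_
  simp only [← iteratedDerivWithin_succ, pow_succ]
  ring

/-- The integral of an extended nonnegative function against `gammaWeight n`, the moment functional
to which the Hausdorff criterion is applied. -/
def gammaLIntegral (n : ℕ) (G : ℝ → ENNReal) : ENNReal :=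
  ∫⁻ x in Ioi 0, ENNReal.ofReal (gammaWeight n x) * G x

theorem lintegral_mul_lintegral_Ioi {p H : ℝ → ENNReal} (hp : Measurable p)
    (hH : AEMeasurable H (volume.restrict (Ioi 0))) :
    ∫⁻ x in Ioi 0, p x * ∫⁻ y in Ioi x, H y = ∫⁻ y in Ioi 0, (∫⁻ x in Ioo 0 y, p x) * H y := by
  have hS : MeasurableSet {z : ℝ × ℝ | z.1 < z.2} := measurableSet_lt measurable_fst measurable_snd
  let K : ℝ → ℝ → ENNReal := fun x y =>
    {z : ℝ × ℝ | z.1 < z.2}.indicator (fun z => p z.1 * H z.2) (x, y)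
  have hK : AEMeasurable (Function.uncurry K)
      ((volume.restrict (Ioi 0)).prod (volume.restrict (Ioi 0))) :=
    ((hp.comp measurable_fst).aemeasurable.mul hH.comp_snd).indicator hS
  have hKx (x y : ℝ) : K x y = (Ioi x).indicator (fun y => p x * H y) y := by
    simp [K, indicator_apply]
  have hKy (x y : ℝ) : K x y = (Iio y).indicator (fun x => p x * H y) x := by
    simp [K, indicator_apply]
  calc ∫⁻ x in Ioi 0, p x * ∫⁻ y in Ioi x, H y
      = ∫⁻ x in Ioi 0, ∫⁻ y in Ioi 0, K x y := by
        refine setLIntegral_congr_fun measurableSet_Ioi fun x hx => ?_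
        have hsub : Ioi x ⊆ Ioi 0 := Ioi_subset_Ioi (le_of_lt hx)
        simp_rw [hKx]
        rw [setLIntegral_indicator measurableSet_Ioi, inter_eq_left.2 hsub,
          lintegral_const_mul'' _ (hH.mono_set hsub)]
    _ = ∫⁻ y in Ioi 0, ∫⁻ x in Ioi 0, K x y := lintegral_lintegral_swap hK
    _ = _ := by
        refine setLIntegral_congr_fun measurableSet_Ioi fun y _ => ?_
        simp_rw [hKy]
        rw [setLIntegral_indicator measurableSet_Iio, inter_comm, Ioi_inter_Iio,
          lintegral_mul_const _ hp]

theorem gammaLIntegral_eq_add {G H : ℝ → ENNReal} {l : ENNReal}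
    (hH : AEMeasurable H (volume.restrict (Ioi 0)))
    (hG : ∀ x, 0 < x → G x = l + ∫⁻ y in Ioi x, H y) (n : ℕ) :
    gammaLIntegral n G = gammaLIntegral (n + 1) G + gammaLIntegral (n + 1) H := by
  have hw (m : ℕ) : Measurable fun x => ENNReal.ofReal (gammaWeight m x) :=
    (continuous_gammaWeight m).measurable.ennreal_ofReal
  have hswap (m : ℕ) : gammaLIntegral m G =
      l + ∫⁻ y in Ioi 0, (∫⁻ x in Ioo 0 y, ENNReal.ofReal (gammaWeight m x)) * H y := by
    calc gammaLIntegral m G = ∫⁻ x in Ioi 0, (ENNReal.ofReal (gammaWeight m x) * l +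
          ENNReal.ofReal (gammaWeight m x) * ∫⁻ y in Ioi x, H y) :=
          setLIntegral_congr_fun measurableSet_Ioi fun x hx => by rw [hG x hx, mul_add]
      _ = _ := by
          rw [lintegral_add_left ((hw m).mul_const l), lintegral_mul_const _ (hw m),
            lintegral_gammaWeight, one_mul, lintegral_mul_lintegral_Ioi (hw m) hH]
  rw [hswap n, hswap (n + 1), add_assoc, gammaLIntegral,
    ← lintegral_add_right' (g := fun y => ENNReal.ofReal (gammaWeight (n + 1) y) * H y) _
      ((hw _).aemeasurable.mul hH)]
  congr 1
  refine setLIntegral_congr_fun measurableSet_Ioi fun y hy => ?_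
  rw [setLIntegral_gammaWeight_eq_add n hy, add_mul]

theorem isCompletelyMonotoneArray_toReal {D : ℕ → ℕ → ENNReal} (h0 : D 0 0 ≠ ⊤)
    (hadd : ∀ j n, D j n = D j (n + 1) + D (j + 1) n) :
    IsCompletelyMonotoneArray fun j n => (D j n).toReal := by
  have hfin (j n : ℕ) : D j n ≠ ⊤ := by
    induction j with
    | zero =>
      induction n with
      | zero => exact h0
      | succ n ih => exact ne_top_of_le_ne_top ih (hadd 0 n ▸ le_self_add)
    | succ j ih => exact ne_top_of_le_ne_top ih (hadd j n ▸ le_add_self)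
  exact ⟨fun _ _ => ENNReal.toReal_nonneg, fun j n => by
    rw [hadd, ENNReal.toReal_add (hfin _ _) (hfin _ _)]⟩

theorem antitoneOn_of_hasDerivAt_neg {g h : ℝ → ℝ} (hd : ∀ x, 0 < x → HasDerivAt g (-h x) x)
    (hh : ∀ x, 0 < x → 0 ≤ h x) : AntitoneOn g (Ioi 0) := by
  refine antitoneOn_of_deriv_nonpos (convex_Ioi 0)
    (fun x hx => (hd x hx).continuousAt.continuousWithinAt)
    (fun x hx => (hd x (interior_subset hx)).differentiableAt.differentiableWithinAt) fun x hx => ?_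
  rw [(hd x (interior_subset hx)).deriv]
  exact neg_nonpos.2 (hh x (interior_subset hx))

theorem exists_tendsto_atTop_of_antitoneOn {g : ℝ → ℝ} (hanti : AntitoneOn g (Ioi 0))
    (hg : ∀ x, 0 < x → 0 ≤ g x) : ∃ l, 0 ≤ l ∧ Tendsto g atTop (𝓝 l) := by
  have hpos (x : ℝ) : 0 < max x 1 := lt_max_of_lt_right one_pos
  have hmax : Antitone fun x => g (max x 1) := fun x y hxy =>
    hanti (hpos x) (hpos y) (max_le_max_right 1 hxy)
  have hlim := tendsto_atTop_ciInf hmax ⟨0, by rintro _ ⟨x, rfl⟩; exact hg _ (hpos x)⟩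
  refine ⟨_, le_ciInf fun x => hg _ (hpos x), hlim.congr' ?_⟩
  filter_upwards [eventually_ge_atTop 1] with x hx
  rw [max_eq_left hx]

theorem exists_ofReal_eq_add_lintegral_Ioi {g h : ℝ → ℝ} (hd : ∀ x, 0 < x → HasDerivAt g (-h x) x)
    (hg : ∀ x, 0 < x → 0 ≤ g x) (hh : ∀ x, 0 < x → 0 ≤ h x) :
    ∃ l : ENNReal, ∀ x, 0 < x →
      ENNReal.ofReal (g x) = l + ∫⁻ y in Ioi x, ENNReal.ofReal (h y) := by
  obtain ⟨l, hl0, hl⟩ := exists_tendsto_atTop_of_antitoneOn (antitoneOn_of_hasDerivAt_neg hd hh) hg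
  refine ⟨ENNReal.ofReal l, fun x hx => ?_⟩
  have hd' (y : ℝ) (hy : y ∈ Ici x) : HasDerivAt g (-h y) y := hd y (hx.trans_le hy)
  have hneg (y : ℝ) (hy : y ∈ Ioi x) : -h y ≤ 0 := neg_nonpos.2 (hh y (hx.trans hy))
  have hint : IntegrableOn h (Ioi x) := by
    simpa using (integrableOn_Ioi_deriv_of_nonpos' hd' hneg hl).neg
  have hFTC := integral_Ioi_of_hasDerivAt_of_nonpos' hd' hneg hl
  have hnonneg : 0 ≤ᵐ[volume.restrict (Ioi x)] h :=
    (ae_restrict_mem measurableSet_Ioi).mono fun y hy => hh y (hx.trans hy)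
  rw [← ofReal_integral_eq_lintegral_ofReal hint hnonneg,
    ← ENNReal.ofReal_add hl0 (integral_nonneg_of_ae hnonneg)]
  rw [integral_neg] at hFTC
  congr 1
  linarith

namespace CompletelyMonotone

variable {f : ℝ → ℝ}

theorem nonneg (hf : CompletelyMonotone f) {x : ℝ} (hx : 0 < x) : 0 ≤ f x := by
  obtain ⟨g, rfl, hg⟩ := hf
  exact (hg 0 x hx).1

theorem continuousOn (hf : CompletelyMonotone f) : ContinuousOn f (Ioi 0) := by
  obtain ⟨g, rfl, hg⟩ := hf
  exact fun x hx => (hg 0 x hx).2.continuousAt.continuousWithinAt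

theorem antitoneOn (hf : CompletelyMonotone f) : AntitoneOn f (Ioi 0) := by
  obtain ⟨g, rfl, hg⟩ := hf
  exact antitoneOn_of_hasDerivAt_neg (fun x hx => (hg 0 x hx).2) fun x hx => (hg 1 x hx).1

theorem of_hasDerivAt_neg (hf : CompletelyMonotone f) {F : ℝ → ℝ} (hF : ∀ x, 0 < x → 0 ≤ F x)
    (hd : ∀ x, 0 < x → HasDerivAt F (-f x) x) : CompletelyMonotone F := by
  obtain ⟨g, rfl, hg⟩ := hf
  exact ⟨Nat.rec F fun n _ => g n, rfl, Nat.rec (fun x hx => ⟨hF x hx, hd x hx⟩) fun n _ => hg n⟩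

theorem exists_isCompletelyMonotoneArray (hf : CompletelyMonotone f)
    (hint : IntegrableOn (fun x => Real.exp (-x) * f x) (Ioi 0)) :
    ∃ D, IsCompletelyMonotoneArray D ∧ ∀ n, D 0 n = ∫ x in Ioi 0, gammaWeight n x * f x := by
  have hmeas := hf.continuousOn.aestronglyMeasurable (μ := volume) measurableSet_Ioi
  have hnonneg (n : ℕ) : 0 ≤ᵐ[volume.restrict (Ioi 0)] fun x => gammaWeight n x * f x :=
    (ae_restrict_mem measurableSet_Ioi).mono fun x hx =>
      mul_nonneg (gammaWeight_nonneg n (le_of_lt hx)) (hf.nonneg hx)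
  have hlint (n : ℕ) : gammaLIntegral n (fun x => ENNReal.ofReal (f x)) =
      ∫⁻ x in Ioi 0, ENNReal.ofReal (gammaWeight n x * f x) :=
    setLIntegral_congr_fun measurableSet_Ioi fun x hx =>
      (ENNReal.ofReal_mul (gammaWeight_nonneg n (le_of_lt hx))).symm
  have hfin : gammaLIntegral 0 (fun x => ENNReal.ofReal (f x)) ≠ ⊤ := by
    rw [hlint, ← ofReal_integral_eq_lintegral_ofReal _ (hnonneg 0)]
    · exact ENNReal.ofReal_ne_top
    · simpa only [gammaWeight_zero, IntegrableOn] using hint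
  have hmoment (n : ℕ) : (gammaLIntegral n fun x => ENNReal.ofReal (f x)).toReal =
      ∫ x in Ioi 0, gammaWeight n x * f x := by
    rw [hlint, integral_eq_lintegral_of_nonneg_ae (hnonneg n)
      ((continuous_gammaWeight n).aestronglyMeasurable.mul hmeas)]
  obtain ⟨g, rfl, hg⟩ := hf
  refine ⟨_, isCompletelyMonotoneArray_toReal
    (D := fun j n => gammaLIntegral (n + j) fun x => ENNReal.ofReal (g j x)) hfin fun j n => ?_,
    hmoment⟩
  obtain ⟨l, hl⟩ := exists_ofReal_eq_add_lintegral_Ioi (fun x hx => (hg j x hx).2)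
    (fun x hx => (hg j x hx).1) fun x hx => (hg (j + 1) x hx).1
  have hcont : ContinuousOn (g (j + 1)) (Ioi 0) := fun x hx =>
    (hg (j + 1) x hx).2.continuousAt.continuousWithinAt
  rw [gammaLIntegral_eq_add (hcont.aemeasurable measurableSet_Ioi).ennreal_ofReal hl,
    add_right_comm n 1 j, ← add_assoc n j 1]

end CompletelyMonotone

theorem integrableOn_exp_neg_mul_of_antitoneOn {f : ℝ → ℝ} (hanti : AntitoneOn f (Ioi 0))
    (hf : ∀ x, 0 < x → 0 ≤ f x) (hint : IntegrableOn (fun x => Real.exp (-x) * f x) (Ioi 0))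
    {r : ℝ} (hr : 0 < r) : IntegrableOn (fun x => Real.exp (-r * x) * f x) (Ioi 0) := by
  have htail : IntegrableOn (fun x => f 1 * Real.exp (-r * x)) (Ioi 0) :=
    (integrableOn_exp_mul_Ioi (neg_lt_zero.2 hr) 0).const_mul _
  have hmeas : AEMeasurable f (volume.restrict (Ioi 0)) :=
    aemeasurable_restrict_of_antitoneOn measurableSet_Ioi hanti
  refine ((hint.const_mul (Real.exp 1)).add htail).mono'
    ((by fun_prop : AEMeasurable _ _).mul hmeas).aestronglyMeasurable ?_
  filter_upwards [ae_restrict_mem measurableSet_Ioi] with x (hx : 0 < x)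
  have hfx := hf x hx
  have hf1 := hf 1 one_pos
  rw [Real.norm_of_nonneg (by positivity), Pi.add_apply]
  rcases le_total x 1 with hx1 | hx1
  · have hexp : Real.exp (-r * x) ≤ Real.exp 1 * Real.exp (-x) := by
      rw [← Real.exp_add, Real.exp_le_exp]
      linarith [mul_pos hr hx]
    calc _ ≤ Real.exp 1 * Real.exp (-x) * f x := by gcongr
      _ ≤ _ := by rw [mul_assoc]; exact le_add_of_nonneg_right (by positivity)
  · calc _ ≤ f 1 * Real.exp (-r * x) := by
          rw [mul_comm]; gcongr; exact hanti (mem_Ioi.2 one_pos) hx hx1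
      _ ≤ _ := le_add_of_nonneg_left (by positivity)

namespace CompletelyMonotone

variable {f : ℝ → ℝ} (hf : CompletelyMonotone f)
  (hint : IntegrableOn (fun x => Real.exp (-x) * f x) (Ioi 0))

include hf hint

theorem exists_laplaceTransform_one_sub_eq_stieltjesTransform :
    ∃ μ : Measure unitInterval, IsFiniteMeasure μ ∧
      ∀ z : ℂ, z.re < 1 → laplaceTransform f (1 - z) = stieltjesTransform μ 0 z := by
  obtain ⟨D, hD, hDf⟩ := hf.exists_isCompletelyMonotoneArray hint
  obtain ⟨μ, hμ, hμD⟩ := hD.exists_integral_pow_eq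
  have hint' (r : ℝ) (hr : 0 < r) : IntegrableOn (fun x => Real.exp (-r * x) * f x) (Ioi 0) :=
    integrableOn_exp_neg_mul_of_antitoneOn hf.antitoneOn (fun _ => hf.nonneg) hint hr
  have hdiff : DifferentiableOn ℂ (fun z => laplaceTransform f (1 - z)) {z | z.re < 1} :=
    (differentiableOn_laplaceTransform (fun _ => hf.nonneg) hint').comp (by fun_prop)
      fun z hz => by simpa using hz
  refine ⟨μ, hμ, (hdiff.analyticOnNhd isOpen_re_lt_one).eqOn_of_preconnected_of_eventuallyEq
    ((differentiableOn_stieltjesTransform 0).analyticOnNhd isOpen_re_lt_one)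
    (convex_halfSpace_re_lt 1).isPreconnected (z₀ := 0) (by simp) ?_⟩
  filter_upwards [Metric.ball_mem_nhds (0 : ℂ) one_pos] with z hz
  have hz : ‖z‖ < 1 := mem_ball_zero_iff.1 hz
  refine (hasSum_laplaceTransform_one_sub (fun _ => hf.nonneg) hint' hz).unique ?_
  simpa only [← hDf, ← hμD] using hasSum_stieltjesTransform hz

theorem laplaceTransform_one_ne_zero (hne : ∃ x, 0 < x ∧ f x ≠ 0) :
    laplaceTransform f 1 ≠ 0 := by
  obtain ⟨x, hx, hfx⟩ := hne
  intro hzero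
  have hreal : laplaceTransform f 1 = ((∫ x in Ioi 0, Real.exp (-x) * f x : ℝ) : ℂ) := by
    rw [laplaceTransform, ← integral_complex_ofReal]
    simp
  have hnonneg : 0 ≤ᵐ[volume.restrict (Ioi 0)] fun x => Real.exp (-x) * f x :=
    (ae_restrict_mem measurableSet_Ioi).mono fun x hx =>
      mul_nonneg (Real.exp_pos _).le (hf.nonneg hx)
  have hae := (integral_eq_zero_iff_of_nonneg_ae hnonneg hint).1
    (Complex.ofReal_eq_zero.1 (hreal ▸ hzero))
  have heq := Measure.eqOn_open_of_ae_eq hae isOpen_Ioi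
    ((by fun_prop : Continuous fun x : ℝ => Real.exp (-x)).continuousOn.mul hf.continuousOn)
    continuousOn_const hx
  exact (mul_ne_zero (Real.exp_ne_zero _) hfx) heq

end CompletelyMonotone

/-! ### The kernel whose Laplace transform is `2 / (1 - (1 - ξ) s)³` -/

theorem integrableOn_pow_mul_cexp_neg_mul {a : ℂ} (ha : 0 < a.re) (n : ℕ) :
    IntegrableOn (fun y : ℝ => (y : ℂ) ^ n * Complex.exp (-a * y)) (Ioi 0) := by
  have hreal := integrableOn_rpow_mul_exp_neg_mul_rpow (s := n) (p := 1) (b := a.re)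
    (by linarith [n.cast_nonneg (α := ℝ)]) one_pos ha
  refine Integrable.mono' hreal (by fun_prop) ?_
  filter_upwards [ae_restrict_mem measurableSet_Ioi] with y (hy : 0 < y)
  rw [norm_mul, norm_pow, Complex.norm_real, Real.norm_of_nonneg hy.le, Complex.norm_exp]
  simp

theorem tendsto_pow_mul_cexp_neg_mul {a : ℂ} (ha : 0 < a.re) (n : ℕ) :
    Tendsto (fun y : ℝ => (y : ℂ) ^ n * Complex.exp (-a * y)) atTop (𝓝 0) := by
  rw [tendsto_zero_iff_norm_tendsto_zero]
  refine (tendsto_rpow_mul_exp_neg_mul_atTop_nhds_zero n a.re ha).congr' ?_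
  filter_upwards [eventually_ge_atTop 0] with y hy
  rw [norm_mul, norm_pow, Complex.norm_real, Real.norm_of_nonneg hy, Complex.norm_exp,
    Real.rpow_natCast]
  simp

theorem integral_pow_mul_cexp_neg_mul {a : ℂ} (ha : 0 < a.re) (n : ℕ) :
    ∫ y : ℝ in Ioi 0, (y : ℂ) ^ n * Complex.exp (-a * y) = n.factorial / a ^ (n + 1) := by
  have ha0 : a ≠ 0 := by rintro rfl; simp at ha
  induction n with
  | zero =>
    simp only [pow_zero, one_mul, integral_exp_mul_complex_Ioi (a := -a) (by simpa using ha)]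
    simp
  | succ n ih =>
    have hderiv (y : ℝ) : HasDerivAt (fun y : ℝ => (y : ℂ) ^ (n + 1) * Complex.exp (-a * y))
        ((n + 1) * ((y : ℂ) ^ n * Complex.exp (-a * y)) -
          a * ((y : ℂ) ^ (n + 1) * Complex.exp (-a * y))) y := by
      have hid : HasDerivAt (fun y : ℝ => (y : ℂ)) 1 y := Complex.ofRealCLM.hasDerivAt
      refine ((hid.fun_pow (n + 1)).mul (hid.const_mul (-a)).cexp).congr_deriv ?_
      push_cast
      ring
    have hint (m : ℕ) (c : ℂ) := (integrableOn_pow_mul_cexp_neg_mul ha m).const_mul c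
    have hparts := integral_Ioi_of_hasDerivAt_of_tendsto
      (hderiv 0).continuousAt.continuousWithinAt (fun y _ => hderiv y)
      ((hint n (n + 1)).sub (hint (n + 1) a)) (tendsto_pow_mul_cexp_neg_mul ha (n + 1))
    rw [integral_sub (hint n (n + 1)) (hint (n + 1) a), integral_const_mul, integral_const_mul, ih,
      Complex.ofReal_zero, zero_pow n.succ_ne_zero, zero_mul, sub_zero, sub_eq_zero] at hparts
    rw [eq_div_iff (pow_ne_zero _ ha0), pow_succ' a, mul_comm, mul_assoc, mul_left_comm, ← hparts,
      Nat.factorial_succ]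
    push_cast
    field_simp

theorem integrableOn_of_integrableOn_cexp_mul {f : ℝ → ℝ} {ξ : ℂ} {s K : Set ℝ}
    (hs : MeasurableSet s) (hK : IsCompact K) (hsK : s ⊆ K)
    (hf : IntegrableOn (fun y : ℝ => Complex.exp (-ξ * y) * (f y : ℂ)) s) : IntegrableOn f s := by
  have hexp : ContinuousOn (fun y : ℝ => Complex.exp (ξ * y)) K := by fun_prop
  have h := (hf.continuousOn_mul_of_subset hexp hK hs hsK).re
  simpa [IntegrableOn, ← mul_assoc, ← Complex.exp_add] using h

/-- The kernel `s⁻³ e^{-y (1/s - 1)}`. By the convention `0⁻¹ = 0` it vanishes at `s = 0`. -/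
def renewalKernel (y : ℝ) (s : unitInterval) : ℝ :=
  ((s : ℝ)⁻¹) ^ 3 * Real.exp (-(y * ((s : ℝ)⁻¹ - 1)))

theorem renewalKernel_nonneg (y : ℝ) (s : unitInterval) : 0 ≤ renewalKernel y s :=
  mul_nonneg (pow_nonneg (inv_nonneg.2 s.2.1) 3) (Real.exp_pos _).le

theorem renewalKernel_zero (y : ℝ) : renewalKernel y 0 = 0 := by
  simp [renewalKernel]

theorem measurable_renewalKernel :
    Measurable fun p : ℝ × unitInterval => renewalKernel p.1 p.2 := by
  unfold renewalKernel
  fun_prop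

theorem one_le_inv_of_ne_zero {s : unitInterval} (hs : s ≠ 0) : 1 ≤ (s : ℝ)⁻¹ :=
  (one_le_inv₀ (unitInterval.pos_iff_ne_zero.2 hs)).2 s.2.2

theorem renewalKernel_le {δ y : ℝ} (hδ : 0 < δ) (hy : δ ≤ y) (s : unitInterval) :
    renewalKernel y s ≤ 6 * Real.exp δ / δ ^ 3 := by
  rcases eq_or_ne s 0 with rfl | hs
  · rw [renewalKernel_zero]
    positivity
  have hu := one_le_inv_of_ne_zero hs
  unfold renewalKernel
  generalize (s : ℝ)⁻¹ = u at hu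
  have hcube : (δ * u) ^ 3 / 6 ≤ Real.exp (δ * u) := by
    simpa [Nat.factorial] using Real.pow_div_factorial_le_exp (δ * u) (by positivity) 3
  rw [le_div_iff₀ (by positivity)]
  calc u ^ 3 * Real.exp (-(y * (u - 1))) * δ ^ 3
      = 6 * ((δ * u) ^ 3 / 6 * Real.exp (-(y * (u - 1)))) := by ring
    _ ≤ 6 * (Real.exp (δ * u) * Real.exp (-(δ * (u - 1)))) := by gcongr
    _ = 6 * Real.exp δ := by rw [← Real.exp_add]; ring_nf

theorem cexp_mul_sq_mul_renewalKernel (ξ : ℂ) (y : ℝ) (s : unitInterval) :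
    Complex.exp (-ξ * y) * ((y ^ 2 * renewalKernel y s : ℝ) : ℂ) =
      ((s : ℝ) : ℂ)⁻¹ ^ 3 *
        ((y : ℂ) ^ 2 * Complex.exp (-(ξ + (((s : ℝ) : ℂ)⁻¹ - 1)) * y)) := by
  rw [renewalKernel, show -(ξ + (((s : ℝ) : ℂ)⁻¹ - 1)) * y =
    -ξ * y + -(y * (((s : ℝ) : ℂ)⁻¹ - 1)) by ring, Complex.exp_add]
  push_cast
  ring

section Laplace

variable {ξ : ℂ} (hξ : 0 < ξ.re)

include hξ

theorem re_add_inv_sub_one_pos {s : unitInterval} (hs : s ≠ 0) :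
    0 < (ξ + (((s : ℝ) : ℂ)⁻¹ - 1)).re := by
  rw [← Complex.ofReal_inv]
  simp only [Complex.add_re, Complex.sub_re, Complex.one_re, Complex.ofReal_re]
  linarith [one_le_inv_of_ne_zero hs]

theorem integrableOn_cexp_mul_sq_mul_renewalKernel (s : unitInterval) :
    IntegrableOn (fun y : ℝ => Complex.exp (-ξ * y) * ((y ^ 2 * renewalKernel y s : ℝ) : ℂ))
      (Ioi 0) := by
  rcases eq_or_ne s 0 with rfl | hs
  · simp [renewalKernel_zero]
  · simp only [cexp_mul_sq_mul_renewalKernel]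
    exact (integrableOn_pow_mul_cexp_neg_mul (re_add_inv_sub_one_pos hξ hs) 2).const_mul _

theorem laplaceTransform_sq_mul_renewalKernel {s : unitInterval} (hs : s ≠ 0) :
    laplaceTransform (fun y => y ^ 2 * renewalKernel y s) ξ =
      2 / (1 - (1 - ξ) * ((s : ℝ) : ℂ)) ^ 3 := by
  have hs0 : ((s : ℝ) : ℂ) ≠ 0 := by simpa using hs
  have : 1 - (1 - ξ) * ((s : ℝ) : ℂ) ≠ 0 := one_sub_mul_ne_zero (by simpa using hξ) s
  have hfactor : ξ + (((s : ℝ) : ℂ)⁻¹ - 1) =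
      (1 - (1 - ξ) * ((s : ℝ) : ℂ)) * ((s : ℝ) : ℂ)⁻¹ := by
    field_simp
    ring
  simp only [laplaceTransform, cexp_mul_sq_mul_renewalKernel]
  rw [integral_const_mul, integral_pow_mul_cexp_neg_mul (re_add_inv_sub_one_pos hξ hs), hfactor]
  simp only [Nat.factorial]
  push_cast
  field_simp

theorem integral_norm_cexp_mul_sq_mul_renewalKernel_le (s : unitInterval) :
    ∫ y : ℝ in Ioi 0, ‖Complex.exp (-ξ * y) * ((y ^ 2 * renewalKernel y s : ℝ) : ℂ)‖ ≤
      2 / min 1 ξ.re ^ 3 := by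
  have : 0 < min 1 ξ.re := lt_min one_pos hξ
  rcases eq_or_ne s 0 with rfl | hs
  · simp only [renewalKernel_zero, mul_zero, Complex.ofReal_zero, norm_zero, integral_zero]
    positivity
  have hnorm (y : ℝ) : (‖Complex.exp (-ξ * y) * ((y ^ 2 * renewalKernel y s : ℝ) : ℂ)‖ : ℂ) =
      Complex.exp (-(ξ.re : ℂ) * y) * ((y ^ 2 * renewalKernel y s : ℝ) : ℂ) := by
    rw [norm_mul (Complex.exp _), Complex.norm_exp, Complex.norm_real,
      Real.norm_of_nonneg (mul_nonneg (sq_nonneg y) (renewalKernel_nonneg y s))]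
    simp
  have hlower : min 1 ξ.re ≤ ‖1 - (1 - (ξ.re : ℂ)) * ((s : ℝ) : ℂ)‖ := by
    simpa using (min_one_le_re_one_sub_mul (1 - (ξ.re : ℂ)) s).trans (Complex.re_le_norm _)
  calc _ = ‖laplaceTransform (fun y => y ^ 2 * renewalKernel y s) ξ.re‖ := by
        simp only [laplaceTransform, ← hnorm, integral_complex_ofReal]
        rw [Complex.norm_real, Real.norm_of_nonneg (integral_nonneg fun y => norm_nonneg _)]
    _ = 2 / ‖1 - (1 - (ξ.re : ℂ)) * ((s : ℝ) : ℂ)‖ ^ 3 := by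
        rw [laplaceTransform_sq_mul_renewalKernel (by simpa using hξ) hs]
        simp
    _ ≤ _ := by gcongr

end Laplace

section Mixture

variable (τ : Measure unitInterval)

theorem integral_renewalKernel_nonneg (y : ℝ) : 0 ≤ ∫ s, renewalKernel y s ∂τ :=
  integral_nonneg fun s => renewalKernel_nonneg y s

theorem integral_cexp_mul_sq_mul_renewalKernel (ξ : ℂ) (y : ℝ) :
    ∫ s, Complex.exp (-ξ * y) * ((y ^ 2 * renewalKernel y s : ℝ) : ℂ) ∂τ =
      Complex.exp (-ξ * y) * ((y ^ 2 * ∫ s, renewalKernel y s ∂τ : ℝ) : ℂ) := by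
  rw [integral_const_mul, integral_complex_ofReal, integral_const_mul]

variable [IsFiniteMeasure τ]

theorem integral_renewalKernel_le {δ y : ℝ} (hδ : 0 < δ) (hy : δ ≤ y) :
    ∫ s, renewalKernel y s ∂τ ≤ 6 * Real.exp δ / δ ^ 3 * τ.real univ := by
  refine (Real.le_norm_self _).trans (norm_integral_le_of_norm_le_const (.of_forall fun s => ?_))
  rw [Real.norm_of_nonneg (renewalKernel_nonneg y s)]
  exact renewalKernel_le hδ hy s

theorem continuousOn_integral_renewalKernel :
    ContinuousOn (fun y => ∫ s, renewalKernel y s ∂τ) (Ioi 0) := by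
  have hmeas (x : ℝ) : Measurable (renewalKernel x) :=
    measurable_renewalKernel.comp (measurable_const.prodMk measurable_id)
  have hcont (s : unitInterval) : Continuous fun y => renewalKernel y s := by
    unfold renewalKernel
    fun_prop
  refine fun y (hy : 0 < y) => (continuousAt_of_dominated
    (.of_forall fun x => (hmeas x).aestronglyMeasurable) ?_
    (integrable_const (6 * Real.exp (y / 2) / (y / 2) ^ 3))
    (.of_forall fun s => (hcont s).continuousAt)).continuousWithinAt
  filter_upwards [lt_mem_nhds (half_lt_self hy)] with x hx
  refine .of_forall fun s => ?_
  rw [Real.norm_of_nonneg (renewalKernel_nonneg x s)]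
  exact renewalKernel_le (half_pos hy) hx.le s

theorem tendsto_exp_mul_sq_mul_integral_renewalKernel {ε : ℝ} (hε : 0 < ε) :
    Tendsto (fun y : ℝ => Real.exp (-ε * y) * (y ^ 2 * ∫ s, renewalKernel y s ∂τ)) atTop (𝓝 0) := by
  have hlim := (tendsto_rpow_mul_exp_neg_mul_atTop_nhds_zero 2 ε hε).mul_const
    (6 * Real.exp 1 / 1 ^ 3 * τ.real univ)
  rw [zero_mul] at hlim
  refine squeeze_zero' (.of_forall fun y => ?_) ?_ hlim
  · have := integral_renewalKernel_nonneg τ y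
    positivity
  · filter_upwards [eventually_ge_atTop 1] with y hy
    rw [Real.rpow_ofNat, ← mul_assoc, mul_comm (Real.exp _)]
    gcongr
    exact integral_renewalKernel_le τ one_pos hy

variable {ξ : ℂ} (hξ : 0 < ξ.re)

include hξ

theorem integrable_prod_cexp_mul_sq_mul_renewalKernel :
    Integrable (Function.uncurry fun (y : ℝ) (s : unitInterval) =>
      Complex.exp (-ξ * y) * ((y ^ 2 * renewalKernel y s : ℝ) : ℂ))
      ((volume.restrict (Ioi 0)).prod τ) := by
  have hmeas : Measurable (Function.uncurry fun (y : ℝ) (s : unitInterval) =>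
      Complex.exp (-ξ * y) * ((y ^ 2 * renewalKernel y s : ℝ) : ℂ)) := by
    have := measurable_renewalKernel
    unfold Function.uncurry
    fun_prop
  refine (integrable_prod_iff' hmeas.aestronglyMeasurable).2
    ⟨.of_forall fun s => integrableOn_cexp_mul_sq_mul_renewalKernel hξ s, ?_⟩
  refine Integrable.mono' (integrable_const (2 / min 1 ξ.re ^ 3))
    hmeas.norm.stronglyMeasurable.integral_prod_left.aestronglyMeasurable (.of_forall fun s => ?_)
  rw [Real.norm_of_nonneg (integral_nonneg fun y => norm_nonneg _)]
  exact integral_norm_cexp_mul_sq_mul_renewalKernel_le hξ s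

theorem integrableOn_cexp_mul_sq_mul_integral_renewalKernel :
    IntegrableOn (fun y : ℝ => Complex.exp (-ξ * y) *
      ((y ^ 2 * ∫ s, renewalKernel y s ∂τ : ℝ) : ℂ)) (Ioi 0) := by
  simp only [← integral_cexp_mul_sq_mul_renewalKernel]
  exact (integrable_prod_cexp_mul_sq_mul_renewalKernel τ hξ).integral_prod_left

theorem laplaceTransform_sq_mul_integral_renewalKernel (hτ : τ {0} = 0) :
    laplaceTransform (fun y => y ^ 2 * ∫ s, renewalKernel y s ∂τ) ξ =
      ∫ s : unitInterval, 2 / (1 - (1 - ξ) * ((s : ℝ) : ℂ)) ^ 3 ∂τ := by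
  simp only [laplaceTransform, ← integral_cexp_mul_sq_mul_renewalKernel]
  rw [integral_integral_swap (integrable_prod_cexp_mul_sq_mul_renewalKernel τ hξ)]
  refine integral_congr_ae ?_
  filter_upwards [measure_eq_zero_iff_ae_notMem.1 hτ] with s hs
  exact laplaceTransform_sq_mul_renewalKernel hξ hs

end Mixture

/-! ### The reciprocal of the Laplace transform of a completely monotone function -/

namespace CompletelyMonotone

variable {f : ℝ → ℝ} (hf : CompletelyMonotone f)
  (hint : IntegrableOn (fun x => Real.exp (-x) * f x) (Ioi 0)) (hne : ∃ x, 0 < x ∧ f x ≠ 0)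

include hf hint hne

theorem exists_inv_laplaceTransform_one_sub_eq :
    ∃ (α β : ℝ) (τ : Measure unitInterval), IsFiniteMeasure τ ∧ τ {0} = 0 ∧ ∀ z : ℂ, z.re < 1 →
      (laplaceTransform f (1 - z))⁻¹ = α - β * z - z ^ 2 * stieltjesTransform τ 0 z := by
  obtain ⟨μ, _, hμ⟩ := hf.exists_laplaceTransform_one_sub_eq_stieltjesTransform hint
  have : NeZero μ := ⟨by
    rintro rfl
    refine hf.laplaceTransform_one_ne_zero hint hne ?_
    simpa [stieltjesTransform] using hμ 0 (by simp)⟩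
  obtain ⟨α, β, τ, hτ, hτ0, hmul⟩ := exists_stieltjesTransform_mul_eq_one μ
  exact ⟨α, β, τ, hτ, hτ0, fun z hz => by rw [hμ z hz, inv_eq_of_mul_eq_one_right (hmul z hz)]⟩

theorem exists_iteratedDeriv_two_inv_laplaceTransform_eq :
    ∃ τ : Measure unitInterval, IsFiniteMeasure τ ∧ τ {0} = 0 ∧ ∀ ξ : ℂ, 0 < ξ.re →
      iteratedDeriv 2 (fun w => (laplaceTransform f w)⁻¹) ξ =
        -∫ s : unitInterval, 2 / (1 - (1 - ξ) * (s : ℝ)) ^ 3 ∂τ := by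
  obtain ⟨α, β, τ, hτ, hτ0, hinv⟩ := hf.exists_inv_laplaceTransform_one_sub_eq hint hne
  refine ⟨τ, hτ, hτ0, fun ξ hξ => ?_⟩
  have hz : (1 - ξ).re < 1 := by simpa using hξ
  have hlocal : (fun z => (laplaceTransform f (1 - z))⁻¹) =ᶠ[𝓝 (1 - ξ)]
      fun z => (α - β * z) - z ^ 2 * stieltjesTransform τ 0 z := by
    filter_upwards [isOpen_re_lt_one.mem_nhds hz] with z hz using hinv z hz
  have hlinear : iteratedDeriv 2 (fun z : ℂ => (α : ℂ) - β * z) (1 - ξ) = 0 := by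
    simp [iteratedDeriv_succ]
  have hanalytic : ContDiffAt ℂ 2 (fun z => z ^ 2 * stieltjesTransform τ 0 z) (1 - ξ) :=
    (contDiffAt_id.pow 2).mul (((differentiableOn_stieltjesTransform 0).contDiffOn
      isOpen_re_lt_one).contDiffAt (isOpen_re_lt_one.mem_nhds hz))
  calc iteratedDeriv 2 (fun w => (laplaceTransform f w)⁻¹) ξ
      = iteratedDeriv 2 (fun z => (laplaceTransform f (1 - z))⁻¹) (1 - ξ) := by
        rw [iteratedDeriv_comp_const_sub (f := fun w => (laplaceTransform f w)⁻¹)]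
        simp
    _ = _ := by
        rw [hlocal.iteratedDeriv_eq, iteratedDeriv_fun_sub (by fun_prop) hanalytic, hlinear,
          iteratedDeriv_two_sq_mul_stieltjesTransform hz, zero_sub]

theorem exists_laplaceTransform_eq_iteratedDeriv_two_inv :
    ∃ κ : ℝ → ℝ, ContinuousOn κ (Ioi 0) ∧ IntegrableOn (fun y => y ^ 2 * κ y) (Ioo 0 1) ∧
      (∀ ε : ℝ, 0 < ε →
        Tendsto (fun y => Real.exp (-ε * y) * (y ^ 2 * κ y)) atTop (𝓝 0)) ∧
      ∀ ξ : ℂ, 0 < ξ.re →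
        IntegrableOn (fun y : ℝ => Complex.exp (-ξ * y) * ((y ^ 2 * κ y : ℝ) : ℂ)) (Ioi 0) ∧
        laplaceTransform (fun y => y ^ 2 * κ y) ξ =
          iteratedDeriv 2 (fun w => (laplaceTransform f w)⁻¹) ξ := by
  obtain ⟨τ, _, hτ0, hτ⟩ := hf.exists_iteratedDeriv_two_inv_laplaceTransform_eq hint hne
  have hint_exp {ξ : ℂ} (hξ : 0 < ξ.re) := integrableOn_cexp_mul_sq_mul_integral_renewalKernel τ hξ
  refine ⟨fun y => -∫ s, renewalKernel y s ∂τ, (continuousOn_integral_renewalKernel τ).neg, ?_,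
    fun ε hε => ?_, fun ξ hξ => ⟨?_, ?_⟩⟩
  · simp only [mul_neg]
    exact (integrableOn_of_integrableOn_cexp_mul measurableSet_Ioo
      isCompact_Icc Ioo_subset_Icc_self ((hint_exp (ξ := 1) (by simp)).mono_set
        Ioo_subset_Ioi_self)).neg
  · simpa only [mul_neg, neg_zero] using
      (tendsto_exp_mul_sq_mul_integral_renewalKernel τ hε).neg
  · simp only [mul_neg, Complex.ofReal_neg]
    exact (hint_exp hξ).neg
  · rw [hτ ξ hξ, ← laplaceTransform_sq_mul_integral_renewalKernel τ hξ hτ0]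
    simp only [laplaceTransform, mul_neg, Complex.ofReal_neg, integral_neg]

end CompletelyMonotone

/-! ### The integrated tail of a Lévy measure -/

theorem hasDerivAt_integral_Ioi {E : Type*} [NormedAddCommGroup E] [NormedSpace ℝ E]
    [CompleteSpace E] {f : ℝ → E} {a x : ℝ} (hf : IntegrableOn f (Ioi a)) (hx : a < x)
    (hmeas : StronglyMeasurableAtFilter f (𝓝 x)) (hcont : ContinuousAt f x) :
    HasDerivAt (fun x => ∫ y in Ioi x, f y) (-f x) x := by
  have hax : IntervalIntegrable f volume a x :=
    (intervalIntegrable_iff_integrableOn_Ioc_of_le hx.le).2 (hf.mono_set Ioc_subset_Ioi_self)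
  refine ((intervalIntegral.integral_hasDerivAt_right hax hmeas hcont).const_sub
    (∫ y in Ioi a, f y)).congr_of_eventuallyEq ?_
  filter_upwards [lt_mem_nhds hx] with u hu
  rw [← intervalIntegral.integral_interval_add_Ioi hf (hf.mono_set (Ioi_subset_Ioi hu.le)),
    add_sub_cancel_left]

theorem one_sub_exp_neg_nonneg {t : ℝ} (ht : 0 ≤ t) : 0 ≤ 1 - Real.exp (-t) :=
  sub_nonneg.2 (Real.exp_le_one_iff.2 (neg_nonpos.2 ht))

theorem integral_exp_neg (y : ℝ) : ∫ x in (0 : ℝ)..y, Real.exp (-x) = 1 - Real.exp (-y) := by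
  simp

theorem setIntegral_Ioi_indicator_exp_neg {y : ℝ} (hy : 0 < y) :
    ∫ x in Ioi 0, (Iio y).indicator (fun x => Real.exp (-x)) x = 1 - Real.exp (-y) := by
  rw [setIntegral_indicator measurableSet_Iio, Ioi_inter_Iio, ← integral_Ioc_eq_integral_Ioo,
    ← intervalIntegral.integral_of_le hy.le, integral_exp_neg]

theorem integrableOn_exp_neg_mul_integral_Ioi {f : ℝ → ℝ}
    (hint : IntegrableOn (fun y => (1 - Real.exp (-y)) * f y) (Ioi 0)) :
    IntegrableOn (fun x => Real.exp (-x) * ∫ y in Ioi x, f y) (Ioi 0) := by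
  have hf : AEStronglyMeasurable f (volume.restrict (Ioi 0)) := by
    have hmeas : Measurable fun y => (1 - Real.exp (-y))⁻¹ := by fun_prop
    refine (hmeas.aestronglyMeasurable.mul hint.aestronglyMeasurable).congr ?_
    filter_upwards [ae_restrict_mem measurableSet_Ioi] with y (hy : 0 < y)
    exact inv_mul_cancel_left₀ (sub_pos.2 (Real.exp_lt_one_iff.2 (neg_neg_of_pos hy))).ne' _
  let F (p : ℝ × ℝ) : ℝ := (Iio p.2).indicator (fun x => Real.exp (-x)) p.1 * f p.2
  have hFmeas : AEStronglyMeasurable F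
      ((volume.restrict (Ioi 0)).prod (volume.restrict (Ioi 0))) :=
    (Measurable.indicator (f := fun p : ℝ × ℝ => Real.exp (-p.1)) (by fun_prop)
      (measurableSet_lt measurable_fst measurable_snd)).aestronglyMeasurable.mul hf.comp_snd
  have hF : Integrable F ((volume.restrict (Ioi 0)).prod (volume.restrict (Ioi 0))) := by
    refine (integrable_prod_iff' hFmeas).2
      ⟨.of_forall fun y => ?_, hint.norm.congr ?_⟩
    · exact (((integrableOn_exp_neg_Ioi 0).indicator measurableSet_Iio)).mul_const (f y)
    · filter_upwards [ae_restrict_mem measurableSet_Ioi] with y (hy : 0 < y)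
      have hnonneg (x : ℝ) : 0 ≤ (Iio y).indicator (fun x => Real.exp (-x)) x :=
        indicator_nonneg (fun x _ => (Real.exp_pos _).le) x
      simp only [F, norm_mul, Real.norm_of_nonneg (hnonneg _), integral_mul_const,
        setIntegral_Ioi_indicator_exp_neg hy, Real.norm_of_nonneg (one_sub_exp_neg_nonneg hy.le)]
  refine hF.integral_prod_left.congr ?_
  filter_upwards [ae_restrict_mem measurableSet_Ioi] with x (hx : 0 < x)
  have hindicator (y : ℝ) : F (x, y) = Real.exp (-x) * (Ioi x).indicator f y := by
    by_cases hxy : x < y <;> simp [F, hxy]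
  simp only [hindicator, integral_const_mul, setIntegral_indicator measurableSet_Ioi,
    inter_eq_right.2 (Ioi_subset_Ioi hx.le)]

theorem integral_one_sub_exp_neg (z : ℝ) :
    ∫ t in (0 : ℝ)..z, (1 - Real.exp (-t)) = z - 1 + Real.exp (-z) := by
  rw [intervalIntegral.integral_sub (by simp) (Continuous.intervalIntegrable (by fun_prop) _ _),
    integral_exp_neg]
  simp
  ring

theorem sub_one_add_exp_neg_le_min {z : ℝ} (hz : 0 ≤ z) :
    z - 1 + Real.exp (-z) ≤ min (z ^ 2) z := by
  have hexp : Real.exp (-z) ≤ (1 + z)⁻¹ := by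
    rw [Real.exp_neg]
    exact inv_anti₀ (by linarith) (by linarith [Real.add_one_le_exp z])
  have hinv : (1 + z)⁻¹ ≤ 1 - z + z ^ 2 := by
    rw [inv_le_iff_one_le_mul₀ (by linarith)]
    nlinarith [pow_nonneg hz 3]
  exact le_min (by linarith) (by linarith [Real.exp_le_one_iff.2 (neg_nonpos.2 hz)])

theorem lintegral_measure_Ioi_mul (φ : Measure ℝ) :
    ∫⁻ t in Ioi 0, φ (Ioi t) * ENNReal.ofReal (1 - Real.exp (-t)) =
      ∫⁻ z in Ioi 0, ENNReal.ofReal (z - 1 + Real.exp (-z)) ∂φ := by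
  have hnonneg : 0 ≤ᵐ[φ.restrict (Ioi 0)] (id : ℝ → ℝ) :=
    (ae_restrict_mem measurableSet_Ioi).mono fun z hz => le_of_lt hz
  have hcake := lintegral_comp_eq_lintegral_meas_lt_mul (φ.restrict (Ioi 0)) hnonneg aemeasurable_id
    (g := fun t => 1 - Real.exp (-t))
    (fun t _ => Continuous.intervalIntegrable (by fun_prop) _ _)
    ((ae_restrict_mem measurableSet_Ioi).mono fun t ht => one_sub_exp_neg_nonneg (le_of_lt ht))
  simp only [integral_one_sub_exp_neg, id] at hcake
  rw [hcake]
  refine setLIntegral_congr_fun measurableSet_Ioi fun t ht => ?_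
  change _ = φ.restrict (Ioi 0) (Ioi t) * _
  rw [Measure.restrict_apply measurableSet_Ioi, inter_eq_left.2 (Ioi_subset_Ioi (le_of_lt ht))]

section

variable {φ : Measure ℝ} (hφ : ∫⁻ z in Ioi 0, ENNReal.ofReal (min (z ^ 2) z) ∂φ < ⊤)

include hφ

theorem measure_Ioi_lt_top {t : ℝ} (ht : 0 < t) : φ (Ioi t) < ⊤ := by
  have hmin : 0 < min (t ^ 2) t := lt_min (by positivity) ht
  have hsub : Ioi t ⊆ {z | ENNReal.ofReal (min (t ^ 2) t) ≤ ENNReal.ofReal (min (z ^ 2) z)} :=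
    fun z (hz : t < z) => ENNReal.ofReal_le_ofReal (by gcongr)
  calc φ (Ioi t) = φ.restrict (Ioi 0) (Ioi t) := by
        rw [Measure.restrict_apply measurableSet_Ioi, inter_eq_left.2 (Ioi_subset_Ioi ht.le)]
    _ ≤ (∫⁻ z in Ioi 0, ENNReal.ofReal (min (z ^ 2) z) ∂φ) / ENNReal.ofReal (min (t ^ 2) t) :=
        (measure_mono hsub).trans (meas_ge_le_lintegral_div (by fun_prop)
          (ENNReal.ofReal_pos.2 hmin).ne' ENNReal.ofReal_ne_top)
    _ < ⊤ := ENNReal.div_lt_top hφ.ne (ENNReal.ofReal_pos.2 hmin).ne'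

theorem integrableOn_one_sub_exp_neg_mul_levyTail :
    IntegrableOn (fun t => (1 - Real.exp (-t)) * levyTail φ t) (Ioi 0) := by
  have hmeas := measurable_levyTail φ
  refine ⟨by fun_prop, (hasFiniteIntegral_iff_ofReal ?_).2 ?_⟩
  · exact (ae_restrict_mem measurableSet_Ioi).mono fun t ht =>
      mul_nonneg (one_sub_exp_neg_nonneg (le_of_lt ht)) (levyTail_nonneg φ t)
  calc _ = ∫⁻ t in Ioi 0, φ (Ioi t) * ENNReal.ofReal (1 - Real.exp (-t)) :=
        setLIntegral_congr_fun measurableSet_Ioi fun t ht => by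
          rw [mul_comm, ENNReal.ofReal_mul (levyTail_nonneg φ t), levyTail,
            ENNReal.ofReal_toReal (measure_Ioi_lt_top hφ ht).ne]
    _ = ∫⁻ z in Ioi 0, ENNReal.ofReal (z - 1 + Real.exp (-z)) ∂φ := lintegral_measure_Ioi_mul φ
    _ ≤ ∫⁻ z in Ioi 0, ENNReal.ofReal (min (z ^ 2) z) ∂φ :=
        setLIntegral_mono' measurableSet_Ioi fun z hz =>
          ENNReal.ofReal_le_ofReal (sub_one_add_exp_neg_le_min (le_of_lt hz))
    _ < ⊤ := hφ

theorem integrableOn_levyTail {x : ℝ} (hx : 0 < x) : IntegrableOn (levyTail φ) (Ioi x) := by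
  have hexp : 0 < 1 - Real.exp (-x) := sub_pos.2 (Real.exp_lt_one_iff.2 (neg_neg_of_pos hx))
  refine (((integrableOn_one_sub_exp_neg_mul_levyTail hφ).mono_set
    (Ioi_subset_Ioi hx.le)).const_mul (1 - Real.exp (-x))⁻¹).mono'
    (measurable_levyTail φ).aestronglyMeasurable ?_
  filter_upwards [ae_restrict_mem measurableSet_Ioi] with y (hy : x < y)
  have hnonneg := levyTail_nonneg φ y
  rw [Real.norm_of_nonneg hnonneg, ← mul_assoc, inv_mul_eq_div]
  refine le_mul_of_one_le_left hnonneg ((one_le_div hexp).2 ?_)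
  gcongr

theorem integrableOn_exp_neg_mul_PhiFn :
    IntegrableOn (fun x => Real.exp (-x) * PhiFn φ x) (Ioi 0) :=
  (integrableOn_exp_neg_mul_integral_Ioi
    (integrableOn_one_sub_exp_neg_mul_levyTail hφ)).congr_fun
      (fun x (hx : 0 < x) => by simp only [PhiFn, if_pos hx]) measurableSet_Ioi

variable (hcont : ContinuousOn (levyTail φ) (Ioi 0))

include hcont

theorem hasDerivAt_PhiFn {x : ℝ} (hx : 0 < x) : HasDerivAt (PhiFn φ) (-levyTail φ x) x := by
  refine (hasDerivAt_integral_Ioi (integrableOn_levyTail hφ (half_pos hx)) (half_lt_self hx)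
    (measurable_levyTail φ).stronglyMeasurable.stronglyMeasurableAtFilter
    (hcont.continuousAt (Ioi_mem_nhds hx))).congr_of_eventuallyEq ?_
  filter_upwards [Ioi_mem_nhds hx] with y (hy : 0 < y)
  rw [PhiFn, if_pos hy]

theorem exists_PhiFn_ne_zero (hpos : φ (Ioi 0) ≠ 0) : ∃ x, 0 < x ∧ PhiFn φ x ≠ 0 := by
  by_contra! hzero
  refine hpos ?_
  have htail (x : ℝ) (hx : 0 < x) : φ (Ioi x) = 0 := by
    have hconst : PhiFn φ =ᶠ[𝓝 x] fun _ => 0 := (eventually_gt_nhds hx).mono hzero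
    have hderiv := (hasDerivAt_PhiFn hφ hcont hx).unique
      ((hasDerivAt_const x 0).congr_of_eventuallyEq hconst)
    exact ((ENNReal.toReal_eq_zero_iff _).1 (neg_eq_zero.1 hderiv)).resolve_right
      (measure_Ioi_lt_top hφ hx).ne
  have hunion : Ioi (0 : ℝ) ⊆ ⋃ n : ℕ, Ioi (1 / ((n : ℝ) + 1)) := fun x (hx : 0 < x) =>
    mem_iUnion.2 (by simpa using exists_nat_one_div_lt hx)
  exact measure_mono_null hunion (measure_iUnion_null fun n => htail _ (by positivity))

end

theorem completelyMonotone_PhiFn {φ : Measure ℝ}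
    (hφ : ∫⁻ z in Ioi 0, ENNReal.ofReal (min (z ^ 2) z) ∂φ < ⊤)
    (hCM : CompletelyMonotone (levyTail φ)) : CompletelyMonotone (PhiFn φ) :=
  hCM.of_hasDerivAt_neg (fun x _ => PhiFn_nonneg φ x) fun _ hx =>
    hasDerivAt_PhiFn hφ hCM.continuousOn hx

theorem sq_div_psiFn (φ : Measure ℝ) {z : ℂ} (hz : z ≠ 0) :
    z ^ 2 / psiFn φ z = (laplaceTransform (PhiFn φ) z)⁻¹ :=
  div_mul_cancel_left₀ (pow_ne_zero 2 hz) _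

theorem iteratedDeriv_sq_div_psiFn (φ : Measure ℝ) (n : ℕ) {ξ : ℂ} (hξ : ξ ≠ 0) :
    iteratedDeriv n (fun z => z ^ 2 / psiFn φ z) ξ =
      iteratedDeriv n (fun z => (laplaceTransform (PhiFn φ) z)⁻¹) ξ :=
  Filter.EventuallyEq.iteratedDeriv_eq n <|
    (isOpen_ne.eventually_mem hξ).mono fun _ hz => sq_div_psiFn φ hz

theorem measure_Ioi_ne_zero_of_H0 {φ : Measure ℝ} (hH0 : H0 φ) : φ (Ioi 0) ≠ 0 := fun hzero => by
  have hrestrict : φ.restrict (Ioo 0 1) = 0 :=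
    Measure.restrict_eq_zero.2 (measure_mono_null Ioo_subset_Ioi_self hzero)
  simpa [hrestrict] using hH0.2.2

theorem k_minus_two_exists_general (φ : Measure ℝ)
    (hφ : ∫⁻ z in Ioi 0, ENNReal.ofReal (min (z ^ 2) z) ∂φ < ⊤) (hpos : φ (Ioi 0) ≠ 0)
    (hCMsmooth : ContDiffOn ℝ (⊤ : ℕ∞) (levyTail φ) (Ioi 0))
    (hCMsign : ∀ n : ℕ, ∀ x : ℝ, 0 < x →
      0 ≤ (-1 : ℝ) ^ n * iteratedDerivWithin n (levyTail φ) (Ioi 0) x) :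
    ∃ k : ℝ → ℝ,
      ContinuousOn k (Ioi (-1)) ∧
      IntegrableOn (fun y : ℝ => y ^ 2 * k (y - 1)) (Ioo 0 1) ∧
      (∀ ε : ℝ, 0 < ε →
        Tendsto (fun y : ℝ => Real.exp (-ε * y) * (y ^ 2 * k (y - 1))) atTop (nhds 0)) ∧
      ∀ ξ : ℂ, 0 < ξ.re →
        IntegrableOn
          (fun y : ℝ => Complex.exp (-ξ * (y : ℂ)) * ((y ^ 2 * k (y - 1) : ℝ) : ℂ)) (Ioi 0) ∧
        (∫ y in Ioi (0 : ℝ), Complex.exp (-ξ * (y : ℂ)) * ((y ^ 2 * k (y - 1) : ℝ) : ℂ)) =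
          iteratedDeriv 2 (fun z : ℂ => z ^ 2 / psiFn φ z) ξ := by
  have hCM : CompletelyMonotone (levyTail φ) := completelyMonotone_of_contDiffOn hCMsmooth hCMsign
  obtain ⟨κ, hcont, hint, htendsto, hlaplace⟩ :=
    (completelyMonotone_PhiFn hφ hCM).exists_laplaceTransform_eq_iteratedDeriv_two_inv
      (integrableOn_exp_neg_mul_PhiFn hφ) (exists_PhiFn_ne_zero hφ hCM.continuousOn hpos)
  have hshift : MapsTo (fun x : ℝ => x + 1) (Ioi (-1)) (Ioi 0) :=
    fun x (hx : -1 < x) => neg_lt_iff_pos_add.1 hx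
  refine ⟨fun x => κ (x + 1), hcont.comp (by fun_prop) hshift, ?_⟩
  simp only [sub_add_cancel]
  refine ⟨hint, htendsto, fun ξ hξ => ?_⟩
  have hξ0 : ξ ≠ 0 := by
    rintro rfl
    exact lt_irrefl _ hξ
  rw [iteratedDeriv_sq_div_psiFn φ 2 hξ0]
  exact hlaplace ξ hξ

/-- existence of `k₋₂` when the tail of `φ` is completely monotone. -/
theorem k_minus_two_exists (φ : Measure ℝ) (hH0 : H0 φ)
    (hCMsmooth : ContDiffOn ℝ (⊤ : ℕ∞) (levyTail φ) (Ioi 0))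
    (hCMsign : ∀ n : ℕ, ∀ x : ℝ, 0 < x →
      0 ≤ (-1 : ℝ) ^ n * iteratedDerivWithin n (levyTail φ) (Ioi 0) x) :
    ∃ k : ℝ → ℝ,
      ContinuousOn k (Ioi (-1)) ∧
      IntegrableOn (fun y : ℝ => y ^ 2 * k (y - 1)) (Ioo 0 1) ∧
      (∀ ε : ℝ, 0 < ε →
        Tendsto (fun y : ℝ => Real.exp (-ε * y) * (y ^ 2 * k (y - 1))) atTop (nhds 0)) ∧
      ∀ ξ : ℂ, 0 < ξ.re →
        IntegrableOn
          (fun y : ℝ => Complex.exp (-ξ * (y : ℂ)) * ((y ^ 2 * k (y - 1) : ℝ) : ℂ)) (Ioi 0) ∧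
        (∫ y in Ioi (0 : ℝ), Complex.exp (-ξ * (y : ℂ)) * ((y ^ 2 * k (y - 1) : ℝ) : ℂ)) =
          iteratedDeriv 2 (fun z : ℂ => z ^ 2 / psiFn φ z) ξ :=
  k_minus_two_exists_general φ hH0.2.1 (measure_Ioi_ne_zero_of_H0 hH0) hCMsmooth hCMsign
end
end
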